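/- arXiv:2407.16003 — 2 statements merged into one kernel-verified Lean document; each statement's English description precedes it below -/
import Mathlib

section
/- Let ρ : Fin r → Equiv.Perm (Fin n) be an sggi which is independent, such that G_{r−1} (the subgroup generated by all ρ l with l ≠ r−1) is intransitive, and such that G_j is transitive for some index j with j ∉ {0, r−1}. Let j be the largest such index, i.e. G_j is transitive and G_l is intransitive for every l with j < l ≤ r−2. Suppose every orbit of the subgroup G_{<j} generated by {ρ_0, …, ρ_{j−1}} on Fin n has exactly k elements, and set m = n / k. Then every element of G_j maps each G_{<j}-orbit onto a G_{<j}-orbit, and r − 1 ≤ (k − 1) + (m − 1). -/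
/-- A string group generated by involutions (sggi): each generator has order 2 and
nonconsecutive generators commute. -/
def IsSggi {n r : ℕ} (ρ : Fin r → Equiv.Perm (Fin n)) : Prop :=
  (∀ i, orderOf (ρ i) = 2) ∧
  ∀ i j : Fin r, 1 < |((i : ℕ) : ℤ) - ((j : ℕ) : ℤ)| → (ρ i * ρ j) ^ 2 = 1

/-- The generating family is independent: no generator lies in the subgroup generated
by the others. -/
def IsIndependent {n r : ℕ} (ρ : Fin r → Equiv.Perm (Fin n)) : Prop :=
  ∀ i, ρ i ∉ Subgroup.closure (ρ '' {j | j ≠ i})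

section StringRank

open Equiv MulAction Subgroup

variable {G α : Type*} [Group G] [MulAction G α]

/-- The orbit relation on `α` of the subgroup generated by the `ρ i` with `i ∈ S`. -/
def genRel (α : Type*) [MulAction G α] (ρ : ℕ → G) (S : Set ℕ) : Setoid α :=
  orbitRel (closure (ρ '' S)) α

/-- The elements `ρ i`, `s ≤ i < t`, are involutions, nonconsecutive ones commute, and none lies
in the subgroup generated by the others. -/
structure StringIndep (ρ : ℕ → G) (s t : ℕ) : Prop where
  inv : ∀ i, s ≤ i → i < t → ρ i * ρ i = 1
  comm : ∀ i j, s ≤ i → i + 1 < j → j < t → ρ i * ρ j = ρ j * ρ i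
  indep : ∀ i, s ≤ i → i < t → ρ i ∉ closure (ρ '' (Set.Ico s t \ {i}))

lemma StringIndep.mono {ρ : ℕ → G} {s t s' t' : ℕ} (h : StringIndep ρ s t) (hs : s ≤ s')
    (ht : t' ≤ t) : StringIndep ρ s' t' where
  inv i h1 h2 := h.inv i (hs.trans h1) (h2.trans_le ht)
  comm i j h1 h2 h3 := h.comm i j (hs.trans h1) h2 (h3.trans_le ht)
  indep i h1 h2 hm := h.indep i (hs.trans h1) (h2.trans_le ht) <|
    Subgroup.closure_mono
      (Set.image_mono (Set.sdiff_subset_sdiff_left (Set.Ico_subset_Ico hs ht))) hm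

lemma StringIndep.notMem_closure {ρ : ℕ → G} {s t i : ℕ} (h : StringIndep ρ s t) {S : Set ℕ}
    (hS : S ⊆ Set.Ico s t) (hi : i ∈ Set.Ico s t) (hiS : i ∉ S) : ρ i ∉ closure (ρ '' S) :=
  fun hm => h.indep i hi.1 hi.2 <| Subgroup.closure_mono
    (Set.image_mono (Set.subset_sdiff_singleton hS hiS)) hm

lemma mem_closure_of_index {ρ : ℕ → G} {S : Set ℕ} {i : ℕ} (hi : i ∈ S) :
    ρ i ∈ closure (ρ '' S) :=
  Subgroup.subset_closure (Set.mem_image_of_mem _ hi)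

lemma genRel_iff {ρ : ℕ → G} {S : Set ℕ} {x y : α} :
    genRel α ρ S x y ↔ ∃ g ∈ closure (ρ '' S), g • y = x := by
  unfold genRel
  rw [orbitRel_apply, mem_orbit_iff]
  exact ⟨fun ⟨g, hg⟩ => ⟨g, g.2, hg⟩, fun ⟨g, hg, h⟩ => ⟨⟨g, hg⟩, h⟩⟩

lemma genRel_eq_top_iff {ρ : ℕ → G} {S : Set ℕ} :
    genRel α ρ S = ⊤ ↔ ∀ x y : α, ∃ g ∈ closure (ρ '' S), g • x = y := by
  rw [Setoid.eq_top_iff]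
  exact ⟨fun h x y => genRel_iff.1 (h y x), fun h x y => genRel_iff.2 (h y x)⟩

lemma genRel_le_iff {ρ : ℕ → G} {S : Set ℕ} {e : Setoid α} :
    genRel α ρ S ≤ e ↔ ∀ i ∈ S, ∀ x, e (ρ i • x) x := by
  constructor
  · intro h i hi x
    exact h (genRel_iff.2 ⟨ρ i, mem_closure_of_index hi, rfl⟩)
  · rintro h x y hxy
    obtain ⟨g, hg, rfl⟩ := genRel_iff.1 hxy
    clear hxy
    revert y
    induction hg using closure_induction with
    | mem g hg => obtain ⟨i, hi, rfl⟩ := hg; exact h i hi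
    | one => intro y; rw [one_smul]
    | mul a b _ _ iha ihb => intro y; rw [mul_smul]; exact Setoid.trans' e (@iha (b • y)) (@ihb y)
    | inv a _ ih => intro y; exact e.symm (by simpa using @ih (a⁻¹ • y))

lemma genRel_mono {ρ : ℕ → G} {S T : Set ℕ} (h : S ⊆ T) : genRel α ρ S ≤ genRel α ρ T :=
  genRel_le_iff.2 fun i hi x => genRel_le_iff.1 le_rfl i (h hi) x

section Counting

variable [Finite α]

lemma card_quotient_le_of_le {s t : Setoid α} (h : s ≤ t) :
    Nat.card (Quotient t) ≤ Nat.card (Quotient s) :=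
  Nat.card_le_card_of_surjective (Quotient.map id h)
    (Quotient.map_surjective h Function.surjective_id)

lemma eq_of_le_of_card_quotient_le {s t : Setoid α} (h : s ≤ t)
    (hc : Nat.card (Quotient s) ≤ Nat.card (Quotient t)) : s = t := by
  have hs : Function.Surjective (Quotient.map id h : Quotient s → Quotient t) :=
    Quotient.map_surjective h Function.surjective_id
  have hi := (hs.bijective_of_nat_card_le hc).1
  refine le_antisymm h fun x y hxy => ?_
  exact Quotient.exact (hi (a₁ := ⟦x⟧) (a₂ := ⟦y⟧) (Quotient.sound hxy))

lemma card_quotient_le_card (s : Setoid α) : Nat.card (Quotient s) ≤ Nat.card α :=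
  Nat.card_le_card_of_surjective _ Quotient.mk_surjective

/-- Generators none of which can be removed without changing the orbits of the group merge at least
one pair of orbits each. -/
lemma card_add_card_quotient_le {ρ : ℕ → G} {S : Set ℕ} {F : Finset ℕ}
    (h : ∀ i ∈ F, genRel α ρ (S ∪ (F \ {i})) ≠ genRel α ρ (S ∪ F)) :
    F.card + Nat.card (Quotient (genRel α ρ (S ∪ F))) ≤ Nat.card (Quotient (genRel α ρ S)) := by
  suffices ∀ F' ⊆ F, F'.card + Nat.card (Quotient (genRel α ρ (S ∪ F')))
      ≤ Nat.card (Quotient (genRel α ρ S)) from this F subset_rfl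
  intro F' hF'
  induction F' using Finset.induction_on with
  | empty => simp
  | insert i F' hi ih =>
    have ih := ih ((Finset.subset_insert _ _).trans hF')
    have hiF : i ∈ F := hF' (Finset.mem_insert_self _ _)
    have hle : genRel α ρ (S ∪ F') ≤ genRel α ρ (S ∪ ↑(insert i F')) :=
      genRel_mono (by rw [Finset.coe_insert]; gcongr; exact Set.subset_insert _ _)
    have hlt : Nat.card (Quotient (genRel α ρ (S ∪ ↑(insert i F'))))
        < Nat.card (Quotient (genRel α ρ (S ∪ F'))) := by
      by_contra hcon
      have heq := eq_of_le_of_card_quotient_le hle (not_lt.1 hcon)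
      have hsub : S ∪ F' ⊆ S ∪ (F \ {i}) := by
        gcongr
        intro l hl
        refine ⟨hF' (Finset.mem_insert_of_mem hl), ?_⟩
        rintro rfl
        exact hi hl
      refine h i hiF (le_antisymm (genRel_mono (by gcongr; exact Set.sdiff_subset)) ?_)
      rw [genRel_le_iff]
      intro l hl x
      by_cases hli : l = i
      · subst hli
        apply genRel_mono hsub
        rw [heq]
        exact genRel_iff.2 ⟨ρ l, mem_closure_of_index (Or.inr (by simp)), rfl⟩
      · exact genRel_iff.2 ⟨ρ l, mem_closure_of_index (hl.imp id fun h => ⟨h, hli⟩), rfl⟩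
    rw [Finset.card_insert_of_notMem hi]
    omega

lemma card_orbit_mul_card_quotient {ρ : ℕ → G} {S : Set ℕ} {k : ℕ}
    (h : ∀ x : α, (orbit (closure (ρ '' S)) x).ncard = k) :
    k * Nat.card (Quotient (genRel α ρ S)) = Nat.card α := by
  have := Fintype.ofFinite (Quotient (genRel α ρ S))
  have e : α ≃ (ω : Quotient (genRel α ρ S)) × ↑(orbit (closure (ρ '' S)) (Quotient.out ω)) :=
    selfEquivSigmaOrbits (closure (ρ '' S)) α
  rw [Nat.card_congr e, Nat.card_sigma, Finset.sum_congr rfl fun ω _ => h ω.out]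
  simp [mul_comm]

end Counting

lemma commute_closure {ρ : ℕ → G} {S T : Set ℕ}
    (h : ∀ i ∈ S, ∀ j ∈ T, ρ i * ρ j = ρ j * ρ i) {g k : G} (hg : g ∈ closure (ρ '' S))
    (hk : k ∈ closure (ρ '' T)) : g * k = k * g := by
  have h1 : closure (ρ '' S) ≤ centralizer (ρ '' T) := by
    rw [closure_le]
    rintro _ ⟨i, hi, rfl⟩
    rw [SetLike.mem_coe, mem_centralizer_iff]
    rintro _ ⟨j, hj, rfl⟩
    exact (h i hi j hj).symm
  have h2 : closure (ρ '' T) ≤ centralizer {g} := by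
    rw [closure_le]
    intro k hk
    rw [SetLike.mem_coe, mem_centralizer_singleton_iff]
    exact mem_centralizer_iff.1 (h1 hg) k hk
  exact (mem_centralizer_singleton_iff.1 (h2 hk)).symm

lemma exists_mul_of_mem_closure_union {ρ : ℕ → G} {S T : Set ℕ}
    (h : ∀ i ∈ S, ∀ j ∈ T, ρ i * ρ j = ρ j * ρ i) {g : G} (hg : g ∈ closure (ρ '' (S ∪ T))) :
    ∃ a ∈ closure (ρ '' S), ∃ b ∈ closure (ρ '' T), a * b = g := by
  induction hg using closure_induction with
  | mem g hg =>
    obtain ⟨i, hi | hi, rfl⟩ := hg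
    · exact ⟨ρ i, mem_closure_of_index hi, 1, one_mem _, mul_one _⟩
    · exact ⟨1, one_mem _, ρ i, mem_closure_of_index hi, one_mul _⟩
  | one => exact ⟨1, one_mem _, 1, one_mem _, mul_one _⟩
  | mul x y _ _ ihx ihy =>
    obtain ⟨a, ha, b, hb, rfl⟩ := ihx
    obtain ⟨c, hc, d, hd, rfl⟩ := ihy
    refine ⟨a * c, mul_mem ha hc, b * d, mul_mem hb hd, ?_⟩
    rw [mul_assoc a c, ← mul_assoc c, commute_closure h hc hb]
    group
  | inv x _ ih =>
    obtain ⟨a, ha, b, hb, rfl⟩ := ih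
    exact ⟨a⁻¹, inv_mem ha, b⁻¹, inv_mem hb, by
      rw [← mul_inv_rev, commute_closure h ha hb]⟩

/-- Elements agreeing at one point are equal if they commute with a transitive group. -/
lemma eq_of_smul_eq_of_commute [FaithfulSMul G α] {ρ : ℕ → G} {V : Set ℕ}
    (hV : genRel α ρ V = ⊤) {g h : G} (hg : ∀ v ∈ closure (ρ '' V), g * v = v * g)
    (hh : ∀ v ∈ closure (ρ '' V), h * v = v * h) {x : α} (hx : g • x = h • x) : g = h := by
  refine FaithfulSMul.eq_of_smul_eq_smul (α := α) fun y => ?_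
  obtain ⟨v, hv, rfl⟩ := genRel_eq_top_iff.1 hV x y
  rw [← mul_smul, ← mul_smul, hg v hv, hh v hv, mul_smul, mul_smul, hx]

lemma card_closure_mul_card_quotient [Finite α] [FaithfulSMul G α] {ρ : ℕ → G} {V W : Set ℕ}
    (hV : genRel α ρ V = ⊤) (h : ∀ i ∈ W, ∀ j ∈ V, ρ i * ρ j = ρ j * ρ i) :
    Nat.card (closure (ρ '' W)) * Nat.card (Quotient (genRel α ρ W)) = Nat.card α := by
  refine card_orbit_mul_card_quotient fun x => ?_
  rw [← Nat.card_coe_set_eq]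
  refine (Nat.card_congr (Equiv.ofBijective
    (fun g : closure (ρ '' W) => (⟨g • x, mem_orbit x g⟩ : orbit (closure (ρ '' W)) x))
    ⟨?_, ?_⟩)).symm
  · intro g k hgk
    exact Subtype.ext (eq_of_smul_eq_of_commute hV (fun v hv => commute_closure h g.2 hv)
      (fun v hv => commute_closure h k.2 hv) (Subtype.ext_iff.1 hgk))
  · rintro ⟨_, g, rfl⟩
    exact ⟨g, rfl⟩

/-- A generator commuting with a transitive group lies in every transitive group with the same
property. -/
lemma mem_closure_of_commute_transitive [Nonempty α] [FaithfulSMul G α] {ρ : ℕ → G} {V W : Set ℕ}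
    {i : ℕ} (hV : genRel α ρ V = ⊤) (hW : genRel α ρ W = ⊤)
    (h : ∀ l ∈ insert i W, ∀ j ∈ V, ρ l * ρ j = ρ j * ρ l) : ρ i ∈ closure (ρ '' W) := by
  obtain ⟨x⟩ := ‹Nonempty α›
  obtain ⟨g, hg, hgx⟩ := genRel_eq_top_iff.1 hW x (ρ i • x)
  have hc := fun {k} (hk : k ∈ closure (ρ '' insert i W)) v (hv : v ∈ closure (ρ '' V)) =>
    commute_closure h hk hv
  have := eq_of_smul_eq_of_commute hV
    (hc (Subgroup.closure_mono (Set.image_mono (Set.subset_insert i W)) hg))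
    (hc (mem_closure_of_index (Set.mem_insert i W))) hgx
  rwa [← this]

lemma two_pow_le_card_closure [Finite G] {ρ : ℕ → G} {s t : ℕ} (h : StringIndep ρ s t) :
    2 ^ (t - s) ≤ Nat.card (closure (ρ '' Set.Ico s t)) := by
  induction t with
  | zero => simp
  | succ t ih =>
    rcases Nat.lt_or_ge t s with hts | hts
    · rw [Nat.sub_eq_zero_of_le hts, pow_zero]; exact Nat.card_pos
    have ih := ih (h.mono le_rfl t.le_succ)
    have hle : closure (ρ '' Set.Ico s t) ≤ closure (ρ '' Set.Ico s (t + 1)) :=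
      Subgroup.closure_mono (Set.image_mono (Set.Ico_subset_Ico_right t.le_succ))
    obtain ⟨c, hc⟩ := Subgroup.card_dvd_of_le hle
    have hpos : 0 < Nat.card (closure (ρ '' Set.Ico s (t + 1))) := Nat.card_pos
    have hc2 : 2 ≤ c := by
      by_contra! hlt
      have : c = 0 ∨ c = 1 := by omega
      rcases this with rfl | rfl
      · omega
      · have := Subgroup.eq_of_le_of_card_ge hle (by omega)
        refine h.notMem_closure (S := Set.Ico s t) (i := t)
          (Set.Ico_subset_Ico_right t.le_succ) ⟨hts, t.lt_succ_self⟩ (by simp) ?_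
        rw [this]
        exact mem_closure_of_index ⟨hts, t.lt_succ_self⟩
    rw [hc, Nat.succ_sub hts, pow_succ]
    exact Nat.mul_le_mul ih hc2

lemma ne_of_stringIndep {ρ : ℕ → G} {s t i j : ℕ} (h : StringIndep ρ s t) (hi : i ∈ Set.Ico s t)
    (hj : j ∈ Set.Ico s t) (hij : i ≠ j) : ρ i ≠ ρ j := fun e =>
  h.notMem_closure (S := {j}) (by simpa using hj) hi (by simpa using hij)
    (e ▸ mem_closure_of_index rfl)

lemma StringIndep.ne_one {ρ : ℕ → G} {s t i : ℕ} (h : StringIndep ρ s t) (hi : i ∈ Set.Ico s t) :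
    ρ i ≠ 1 := fun e =>
  h.notMem_closure (S := ∅) (by simp) hi (by simp) (e ▸ one_mem _)

lemma smul_eq_or_of_genRel_singleton {ρ : ℕ → G} {i : ℕ} (hi : ρ i * ρ i = 1) {x y : α}
    (h : genRel α ρ {i} x y) : x = y ∨ x = ρ i • y := by
  obtain ⟨g, hg, rfl⟩ := genRel_iff.1 h
  rw [Set.image_singleton, mem_closure_singleton] at hg
  obtain ⟨m, rfl⟩ := hg
  rcases Int.even_or_odd' m with ⟨c, rfl | rfl⟩
  · left; rw [zpow_mul, zpow_ofNat, pow_two, hi, one_zpow, one_smul]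
  · right; rw [zpow_add, zpow_mul, zpow_ofNat, pow_two, hi, one_zpow, one_mul, zpow_one]

lemma genRel_singleton_ne [FaithfulSMul G α] {ρ : ℕ → G} {s t i j : ℕ} (h : StringIndep ρ s t)
    (hi : i ∈ Set.Ico s t) (hj : j ∈ Set.Ico s t) (hij : i ≠ j) :
    genRel α ρ {i} ≠ genRel α ρ {j} := by
  intro e
  refine ne_of_stringIndep h hi hj hij (FaithfulSMul.eq_of_smul_eq_smul (α := α) fun x => ?_)
  have h1 : genRel α ρ {j} (ρ i • x) x := e ▸ genRel_iff.2 ⟨ρ i, mem_closure_of_index rfl, rfl⟩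
  have h2 : genRel α ρ {i} (ρ j • x) x := e ▸ genRel_iff.2 ⟨ρ j, mem_closure_of_index rfl, rfl⟩
  rcases smul_eq_or_of_genRel_singleton (h.inv j hj.1 hj.2) h1 with h1 | h1
  · rcases smul_eq_or_of_genRel_singleton (h.inv i hi.1 hi.2) h2 with h2 | h2
    · rw [h1, h2]
    · exact h2.symm
  · exact h1

lemma card_quotient_singleton_lt [Finite α] [FaithfulSMul G α] {ρ : ℕ → G} {s t i : ℕ}
    (h : StringIndep ρ s t) (hi : i ∈ Set.Ico s t) :
    Nat.card (Quotient (genRel α ρ {i})) < Nat.card α := by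
  by_contra! hc
  refine h.ne_one hi (FaithfulSMul.eq_of_smul_eq_smul (α := α) fun x => ?_)
  have hinj := (Quotient.mk_surjective (s := genRel α ρ {i})).bijective_of_nat_card_le hc |>.1
  rw [one_smul]
  exact hinj (Quotient.sound (genRel_iff.2 ⟨ρ i, mem_closure_of_index rfl, rfl⟩))

/-- Two generators with equally many orbits have fewer orbits together. -/
lemma card_quotient_lt_of_two [Finite α] [FaithfulSMul G α] {ρ : ℕ → G} {s t i j : ℕ} {S : Set ℕ}
    (h : StringIndep ρ s t) (hi : i ∈ Set.Ico s t) (hj : j ∈ Set.Ico s t) (hij : i ≠ j)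
    (hiS : i ∈ S) (hjS : j ∈ S)
    (he : Nat.card (Quotient (genRel α ρ {i})) = Nat.card (Quotient (genRel α ρ {j}))) :
    Nat.card (Quotient (genRel α ρ S)) < Nat.card (Quotient (genRel α ρ {i})) := by
  by_contra! hc
  refine genRel_singleton_ne (α := α) h hi hj hij ?_
  rw [eq_of_le_of_card_quotient_le (genRel_mono (by simpa using hiS)) hc,
    eq_of_le_of_card_quotient_le (s := genRel α ρ {j}) (genRel_mono (by simpa using hjS))
      (he ▸ hc)]

set_option synthInstance.maxSize 2000 in
set_option synthInstance.maxHeartbeats 200000 in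
lemma fixedPointFree_of_commuting_involutions :
    ∀ a : Perm (Fin 4), a * a = 1 ∧ a ≠ 1 →
    ∀ d : Perm (Fin 4), d * d = 1 ∧ d ≠ 1 ∧ a * d = d * a ∧ a ≠ d →
    ∀ c : Perm (Fin 4), c * c = 1 ∧ c ≠ 1 ∧ a * c = c * a ∧ a ≠ c ∧ d ≠ c ∧ a ≠ c * d →
    ∀ x, a x ≠ x := by
  decide +kernel

set_option synthInstance.maxSize 2000 in
set_option synthInstance.maxHeartbeats 200000 in
lemma eq_sq_mul_of_fixedPointFree :
    ∀ a : Perm (Fin 4), a * a = 1 ∧ (∀ x, a x ≠ x) →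
    ∀ d : Perm (Fin 4), d * d = 1 ∧ (∀ x, d x ≠ x) ∧ a * d = d * a ∧ a ≠ d →
    ∀ c : Perm (Fin 4), c * c = 1 ∧ c ≠ 1 ∧ a * c = c * a ∧ a ≠ c ∧ d ≠ c ∧ c ≠ a * d →
    a = c * d * (c * d) := by
  decide +kernel

lemma finite_of_faithful (G α : Type*) [Group G] [MulAction G α] [FaithfulSMul G α] [Finite α] :
    Finite G :=
  Finite.of_injective _ (MulAction.toPerm_injective (α := G) (β := α))

lemma StringIndep.lt_of_card_eq_four [FaithfulSMul G α] [Finite α] {ρ : ℕ → G} {r : ℕ}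
    (h : StringIndep ρ 0 r) (hα : Nat.card α = 4) : r < 4 := by
  by_contra! hr
  replace h := h.mono le_rfl hr
  let φ : G →* Perm (Fin 4) :=
    (Finite.equivFinOfCardEq hα).permCongrHom.toMonoidHom.comp (toPermHom G α)
  have hφ : Function.Injective φ :=
    (Finite.equivFinOfCardEq hα).permCongrHom.injective.comp MulAction.toPerm_injective
  have inv (i : ℕ) (hi : i < 4 := by simp) : φ (ρ i) * φ (ρ i) = 1 := by
    rw [← map_mul, h.inv i i.zero_le hi, map_one]
  have comm (i j : ℕ) (hij : i + 1 < j := by simp) (hj : j < 4 := by simp) :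
      φ (ρ i) * φ (ρ j) = φ (ρ j) * φ (ρ i) := by
    rw [← map_mul, h.comm i j i.zero_le hij hj, map_mul]
  have ne_one (i : ℕ) (hi : i < 4 := by simp) : φ (ρ i) ≠ 1 := by
    rw [← map_one φ]
    exact hφ.ne (h.ne_one ⟨i.zero_le, hi⟩)
  have ne (i j : ℕ) (hi : i < 4 := by simp) (hj : j < 4 := by simp) (hij : i ≠ j := by simp) :
      φ (ρ i) ≠ φ (ρ j) :=
    hφ.ne (ne_of_stringIndep h ⟨i.zero_le, hi⟩ ⟨j.zero_le, hj⟩ hij)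
  have ne_word (i j l : ℕ) (w : G) (hw : w ∈ closure (ρ '' {j, l})) (hi : i < 4 := by simp)
      (hj : j < 4 := by simp) (hl : l < 4 := by simp) (hij : i ≠ j := by simp)
      (hil : i ≠ l := by simp) : φ (ρ i) ≠ φ w := by
    refine hφ.ne fun e => h.notMem_closure (S := {j, l}) (i := i) ?_ ⟨i.zero_le, hi⟩ ?_ (e ▸ hw)
    · rintro m (rfl | rfl) <;> simpa
    · simp [hij, hil]
  have mem (j l : ℕ) : ρ j * ρ l ∈ closure (ρ '' {j, l}) :=
    mul_mem (mem_closure_of_index (by simp)) (mem_closure_of_index (by simp))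
  have ne_mul (i j l : ℕ) (hi : i < 4 := by simp) (hj : j < 4 := by simp)
      (hl : l < 4 := by simp) (hij : i ≠ j := by simp) (hil : i ≠ l := by simp) :
      φ (ρ i) ≠ φ (ρ j) * φ (ρ l) := by
    rw [← map_mul]
    exact ne_word i j l _ (mem j l) hi hj hl hij hil
  have fix0 := fixedPointFree_of_commuting_involutions (φ (ρ 0)) ⟨inv 0, ne_one 0⟩
    (φ (ρ 3)) ⟨inv 3, ne_one 3, comm 0 3, ne 0 3⟩
    (φ (ρ 2)) ⟨inv 2, ne_one 2, comm 0 2, ne 0 2, ne 3 2, ne_mul 0 2 3⟩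
  have fix3 := fixedPointFree_of_commuting_involutions (φ (ρ 3)) ⟨inv 3, ne_one 3⟩
    (φ (ρ 0)) ⟨inv 0, ne_one 0, (comm 0 3).symm, ne 3 0⟩
    (φ (ρ 1)) ⟨inv 1, ne_one 1, (comm 1 3).symm, ne 3 1, ne 0 1, ne_mul 3 1 0⟩
  have key := eq_sq_mul_of_fixedPointFree (φ (ρ 0)) ⟨inv 0, fix0⟩
    (φ (ρ 3)) ⟨inv 3, fix3, comm 0 3, ne 0 3⟩
    (φ (ρ 2)) ⟨inv 2, ne_one 2, comm 0 2, ne 0 2, ne 3 2, ne_mul 2 0 3⟩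
  exact absurd (by simpa using key) (ne_word 0 2 3 _ (mul_mem (mem 2 3) (mem 2 3)))

/-- Transitive independent strings of involutions on `N` points have fewer than `N` elements. -/
def RankBound.{u, v} (N : ℕ) : Prop :=
  ∀ (G : Type u) (α : Type v) [Group G] [MulAction G α] [FaithfulSMul G α] [Finite α] [Nonempty α]
    (ρ : ℕ → G) (r : ℕ), StringIndep ρ 0 r → genRel α ρ (Set.Ico 0 r) = ⊤ → Nat.card α = N → r < N

lemma RankBound.sub_lt_ncard_orbit.{u, v} {G : Type u} {α : Type v} [Group G] [MulAction G α]
    [Finite α] {ρ : ℕ → G} {s t : ℕ} (h : StringIndep ρ s t) (x : α)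
    (hfaith : ∀ g ∈ closure (ρ '' Set.Ico s t),
      (∀ k ∈ closure (ρ '' Set.Ico s t), g • k • x = k • x) → g = 1)
    (hb : RankBound.{u, v} (orbit (closure (ρ '' Set.Ico s t)) x).ncard) :
    t - s < (orbit (closure (ρ '' Set.Ico s t)) x).ncard := by
  classical
  set H := closure (ρ '' Set.Ico s t) with hH
  let σ : ℕ → H := fun i => if hi : ρ (s + i) ∈ H then ⟨ρ (s + i), hi⟩ else 1
  have hσ (i : ℕ) (hi : i < t - s) : (σ i : G) = ρ (s + i) := by
    have : ρ (s + i) ∈ H := mem_closure_of_index ⟨by omega, by omega⟩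
    simp only [σ, dif_pos this]
  have hfs : FaithfulSMul H (orbit H x) := by
    constructor
    intro g k hgk
    have h1 : (k : G)⁻¹ * g = 1 := by
      refine hfaith _ (mul_mem (inv_mem k.2) g.2) fun l hl => ?_
      have := congrArg Subtype.val (hgk ⟨l • x, ⟨⟨l, hl⟩, rfl⟩⟩)
      simp only [orbit.coe_smul] at this
      rw [mul_smul, inv_smul_eq_iff]
      exact this
    exact Subtype.ext (inv_mul_eq_one.1 h1).symm
  have hne : Nonempty (orbit H x) := ⟨⟨x, mem_orbit_self x⟩⟩
  refine hb H (orbit H x) σ (t - s) ⟨?_, ?_, ?_⟩ ?_ (Nat.card_coe_set_eq _)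
  · intro i _ hi
    ext1
    rw [Subgroup.coe_mul, hσ i hi]
    exact h.inv _ (by omega) (by omega)
  · intro i j _ hij hj
    ext1
    rw [Subgroup.coe_mul, Subgroup.coe_mul, hσ i (by omega), hσ j hj]
    exact h.comm _ _ (by omega) (by omega) (by omega)
  · intro i _ hi hm
    refine h.indep (s + i) (by omega) (by omega) ?_
    have := Subgroup.mem_map_of_mem H.subtype hm
    rw [MonoidHom.map_closure] at this
    rw [Subgroup.coe_subtype, hσ i hi] at this
    refine Subgroup.closure_mono ?_ this
    rintro _ ⟨_, ⟨j, ⟨⟨_, hj⟩, hji⟩, rfl⟩, rfl⟩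
    refine ⟨s + j, ⟨⟨by omega, by omega⟩, ?_⟩, (hσ j hj).symm⟩
    simpa using hji
  · have htop : closure (σ '' Set.Ico 0 (t - s)) = ⊤ := by
      rw [← top_le_iff]
      refine (Subgroup.closure_closure_coe_preimage (k := ρ '' Set.Ico s t)).ge.trans
        (Subgroup.closure_mono ?_)
      rintro ⟨_, hg⟩ ⟨j, ⟨hj1, hj2⟩, rfl⟩
      refine ⟨j - s, ⟨by omega, by omega⟩, ?_⟩
      ext1
      rw [hσ _ (by omega), Nat.add_sub_cancel' hj1]
    rw [genRel_eq_top_iff, htop]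
    intro y z
    obtain ⟨g, hg⟩ := MulAction.exists_smul_eq H y z
    exact ⟨g, mem_top g, hg⟩

section Product

variable {ρ : ℕ → G} {V W : Set ℕ}

lemma eq_one_of_fixes_orbit [FaithfulSMul G α] (h : ∀ i ∈ V, ∀ j ∈ W, ρ i * ρ j = ρ j * ρ i)
    (hVW : genRel α ρ (V ∪ W) = ⊤) {x : α} {g : G} (hg : g ∈ closure (ρ '' V))
    (hgx : ∀ k ∈ closure (ρ '' V), g • k • x = k • x) : g = 1 := by
  refine FaithfulSMul.eq_of_smul_eq_smul (α := α) fun y => ?_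
  obtain ⟨l, hl, rfl⟩ := genRel_eq_top_iff.1 hVW x y
  obtain ⟨a, ha, b, hb, rfl⟩ := exists_mul_of_mem_closure_union h hl
  rw [commute_closure h ha hb, mul_smul, ← mul_smul g b, commute_closure h hg hb, mul_smul,
    hgx a ha, one_smul]

lemma two_mul_ncard_orbit_le [Finite α] (h : ∀ i ∈ V, ∀ j ∈ W, ρ i * ρ j = ρ j * ρ i)
    (hVW : genRel α ρ (V ∪ W) = ⊤) (hV : genRel α ρ V ≠ ⊤) (x : α) :
    2 * (orbit (closure (ρ '' V)) x).ncard ≤ Nat.card α := by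
  set O := orbit (closure (ρ '' V)) x with hO
  obtain ⟨y, hy⟩ : ∃ y, y ∉ O := by
    by_contra! hall
    refine hV (genRel_eq_top_iff.2 fun y z => ?_)
    obtain ⟨a, rfl⟩ := hall y
    obtain ⟨b, rfl⟩ := hall z
    refine ⟨b * a⁻¹, mul_mem b.2 (inv_mem a.2), ?_⟩
    change ((b : G) * (a : G)⁻¹) • (a : G) • x = (b : G) • x
    rw [mul_smul, inv_smul_smul]
  obtain ⟨l, hl, rfl⟩ := genRel_eq_top_iff.1 hVW x y
  obtain ⟨a, ha, b, hb, rfl⟩ := exists_mul_of_mem_closure_union h hl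
  have hdisj : Disjoint O ((b • ·) '' O) := by
    rw [Set.disjoint_left]
    rintro _ ⟨c, rfl⟩ ⟨_, ⟨d, rfl⟩, hcd⟩
    refine hy ⟨⟨a, ha⟩ * d⁻¹ * c, ?_⟩
    change (a * (d : G)⁻¹ * (c : G)) • x = (a * b) • x
    change b • (d : G) • x = (c : G) • x at hcd
    rw [mul_smul, ← hcd, ← mul_smul b, ← commute_closure h d.2 hb]
    simp [mul_smul]
  have hcard := Set.ncard_union_eq hdisj
  rw [Set.ncard_image_of_injective _ (MulAction.injective b)] at hcard
  have := Set.ncard_le_card (O ∪ (b • ·) '' O)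
  omega

end Product

section Arithmetic

lemma two_mul_add_two_le_two_pow {L : ℕ} (hL : 3 ≤ L) : 2 * L + 2 ≤ 2 ^ L := by
  induction L, hL using Nat.le_induction with
  | base => norm_num
  | succ L _ ih => rw [pow_succ]; omega

lemma add_lt_of_two_pow_le {n u v : ℕ} (hn : 5 ≤ n) (h2 : 2 ∣ n) (hu : 2 ^ u ≤ n)
    (hv : 2 ^ v ≤ n) : u + v + 1 < n := by
  have hu := Nat.le_log_of_pow_le one_lt_two hu
  have hv := Nat.le_log_of_pow_le one_lt_two hv
  have hL : 2 ^ Nat.log 2 n ≤ n := Nat.pow_log_le_self 2 (by omega)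
  rcases Nat.lt_or_ge (Nat.log 2 n) 3 with h | h
  · omega
  · have := two_mul_add_two_le_two_pow h
    omega

lemma add_le_of_two_pow_le {n p x u v : ℕ} (hn : 5 ≤ n) (h2 : 2 ∣ p) (hpx : p * x = n)
    (hx : 2 ≤ x) (hu : 2 ^ u ≤ p) (hv : 2 ^ v ≤ p) (h6 : p = 2 → 4 ≤ x) :
    u + v + 2 + x ≤ n := by
  have hp : p ≠ 0 := by rintro rfl; omega
  have hu := Nat.le_log_of_pow_le one_lt_two hu
  have hv := Nat.le_log_of_pow_le one_lt_two hv
  have hL : 2 ^ Nat.log 2 p ≤ p := Nat.pow_log_le_self 2 hp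
  obtain ⟨x', rfl⟩ := Nat.exists_eq_add_of_le hx
  obtain ⟨p', rfl⟩ := Nat.exists_eq_add_of_le (show 1 ≤ p by omega)
  have hpx' : p' * x' + 2 * p' + x' + 2 = n := by rw [← hpx]; ring
  generalize Nat.log 2 (1 + p') = L at *
  rcases Nat.lt_or_ge p' 2 with h | h
  · obtain rfl : p' = 1 := by omega
    have : L < 2 := by
      by_contra! h
      have := Nat.pow_le_pow_right two_pos h
      omega
    have := h6 rfl
    omega
  · rcases Nat.lt_or_ge L 3 with h3 | h3
    · interval_cases L <;> omega
    · have := two_mul_add_two_le_two_pow h3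
      omega

lemma add_le_of_two_pow_le_of_ne {n p q x y z u v : ℕ} (hn : 5 ≤ n) (hp : 2 ∣ p) (hq : 2 ∣ q)
    (hpx : p * x = n) (hqy : q * y = n) (hzx : z ≤ x) (hu : 2 ^ u ≤ p) (hv : 2 ^ v ≤ q)
    (hqp : q ≤ p) (hne : ¬ (p = n ∧ q = n)) (h6 : p = 2 → q = 2 → x = 3 → z ≤ 2) :
    u + v + 2 + z ≤ n := by
  have hx0 : x ≠ 0 := by rintro rfl; omega
  have hy0 : y ≠ 0 := by rintro rfl; omega
  have hp0 : p ≠ 0 := by rintro rfl; omega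
  have hq0 : q ≠ 0 := by rintro rfl; omega
  rcases Nat.lt_or_ge x 2 with hx | hx
  · obtain rfl : x = 1 := by omega
    obtain rfl : p = n := by omega
    have hy : y ≠ 1 := by rintro rfl; exact hne ⟨rfl, by omega⟩
    have : q * 2 ≤ p := hqy ▸ Nat.mul_le_mul_left q (by omega)
    have := add_lt_of_two_pow_le hn hp hu (v := v + 1) (by rw [pow_succ]; omega)
    omega
  · by_cases hs : p = 2 ∧ x < 4
    · obtain ⟨rfl, hx4⟩ := hs
      have hu1 : u < 2 := by
        by_contra! h
        have := Nat.pow_le_pow_right two_pos h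
        omega
      have hv1 : v < 2 := by
        by_contra! h
        have := Nat.pow_le_pow_right two_pos h
        omega
      have := h6 rfl (by omega) (by omega)
      omega
    · have := add_le_of_two_pow_le hn hp hpx hx hu (hv.trans hqp) (by omega)
      omega

lemma add_two_le_of_two_pow_le {n p x z u : ℕ} (hn : 5 ≤ n) (hp : 2 ∣ p) (hpx : p * x = n)
    (hzx : z ≤ x) (hu : 2 ^ u ≤ p) (hu1 : 1 ≤ u) : u + 2 + z ≤ n := by
  have hx0 : x ≠ 0 := by rintro rfl; omega
  rcases Nat.lt_or_ge x 2 with hx | hx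
  · obtain rfl : x = 1 := by omega
    obtain rfl : p = n := by omega
    have := add_lt_of_two_pow_le hn hp hu hu
    omega
  · by_cases hs : p = 2 ∧ x < 4
    · obtain ⟨rfl, hx4⟩ := hs
      have hu1 : u < 2 := by
        by_contra! h
        have := Nat.pow_le_pow_right two_pos h
        omega
      omega
    · have := add_le_of_two_pow_le hn hp hpx hx hu hu (by omega)
      omega

end Arithmetic

lemma genRel_ne_top_of_empty [Finite α] (hα : 2 ≤ Nat.card α) {ρ : ℕ → G} {S : Set ℕ}
    (hS : S = ∅) : genRel α ρ S ≠ ⊤ := by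
  subst hS
  intro h
  have : Nontrivial α := Finite.one_lt_card_iff_nontrivial.1 hα
  obtain ⟨x, y, hxy⟩ := exists_pair_ne α
  obtain ⟨g, hg, rfl⟩ := genRel_eq_top_iff.1 h x y
  simp at hg
  simp [hg] at hxy

lemma genRel_eq_top_of_card_closure_eq [Finite α] [Nonempty α] {ρ : ℕ → G} {S : Set ℕ}
    (h : Nat.card (closure (ρ '' S)) * Nat.card (Quotient (genRel α ρ S)) = Nat.card α)
    (hc : Nat.card (closure (ρ '' S)) = Nat.card α) : genRel α ρ S = ⊤ := by
  have hpos : 0 < Nat.card α := Nat.card_pos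
  have h1 : Nat.card (Quotient (genRel α ρ S)) = 1 := by
    rw [hc] at h
    exact Nat.eq_of_mul_eq_mul_left hpos (by omega)
  refine eq_of_le_of_card_quotient_le le_top ?_
  rw [h1]
  have : Nonempty (Quotient (⊤ : Setoid α)) := ⟨⟦Classical.arbitrary α⟧⟩
  exact Nat.card_pos

lemma StringIndep.two_dvd_card_closure [Finite G] {ρ : ℕ → G} {s t i : ℕ} {S : Set ℕ}
    (h : StringIndep ρ s t) (hi : i ∈ Set.Ico s t) (hS : i ∈ S) :
    2 ∣ Nat.card (closure (ρ '' S)) := by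
  have := Subgroup.orderOf_dvd_natCard _ (mem_closure_of_index (ρ := ρ) hS)
  rwa [orderOf_eq_prime (p := 2) (by rw [pow_two, h.inv i hi.1 hi.2]) (h.ne_one hi)] at this

/-- A transitive independent string of involutions on `N` points has rank less than `N`. -/
theorem rankBound.{u, v} (N : ℕ) : RankBound.{u, v} N := by
  induction N using Nat.strong_induction_on with | h N ih =>
  intro G α _ _ _ _ _ ρ r h htop hα
  by_contra! hr
  have hfin : Finite G := finite_of_faithful G α
  have hpos : 0 < Nat.card α := Nat.card_pos
  have hN : 5 ≤ N := by
    by_contra! hN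
    have hfact : 2 ^ r ≤ N.factorial := calc
      2 ^ r ≤ Nat.card (closure (ρ '' Set.Ico 0 r)) := two_pow_le_card_closure h
      _ ≤ Nat.card G := Subgroup.card_le_card_group _
      _ ≤ Nat.card (Perm α) :=
        Nat.card_le_card_of_injective _ (MulAction.toPerm_injective (α := G) (β := α))
      _ = N.factorial := by rw [Nat.card_perm, hα]
    have hpow := (Nat.pow_le_pow_right two_pos hr).trans hfact
    interval_cases N
    · omega
    · simp at hpow
    · simp [Nat.factorial] at hpow
    · simp [Nat.factorial] at hpow
    · exact absurd (h.lt_of_card_eq_four hα) (by omega)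
  have hcomm (i j : ℕ) (hi : i < r) (hj : j < r) (hij : i + 1 < j ∨ j + 1 < i) :
      ρ i * ρ j = ρ j * ρ i := by
    rcases hij with hij | hij
    · exact h.comm i j i.zero_le hij hj
    · exact (h.comm j i j.zero_le hij hi).symm
  classical
  -- The shortest transitive initial segment is `[0, e)`, the shortest final one `[a, r)`.
  obtain ⟨e, her, he, hemin⟩ : ∃ e ≤ r, genRel α ρ (Set.Ico 0 e) = ⊤ ∧
      ∀ i < e, genRel α ρ (Set.Ico 0 i) ≠ ⊤ :=
    have hex : ∃ e, genRel α ρ (Set.Ico 0 e) = ⊤ := ⟨r, htop⟩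
    ⟨Nat.find hex, Nat.find_min' hex htop, Nat.find_spec hex, fun i hi => Nat.find_min hex hi⟩
  obtain ⟨a, har, ha, hamax⟩ : ∃ a ≤ r, genRel α ρ (Set.Ico a r) = ⊤ ∧
      ∀ i, a < i → i ≤ r → genRel α ρ (Set.Ico i r) ≠ ⊤ :=
    ⟨Nat.findGreatest (fun i => genRel α ρ (Set.Ico i r) = ⊤) r, Nat.findGreatest_le r,
      Nat.findGreatest_spec (P := fun i => genRel α ρ (Set.Ico i r) = ⊤) r.zero_le htop,
      fun i hi hir => Nat.findGreatest_is_greatest hi hir⟩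
  have he0 : e ≠ 0 := fun h0 => genRel_ne_top_of_empty (by omega) (by simp [h0]) he
  have har' : a ≠ r := fun h0 => genRel_ne_top_of_empty (by omega) (by simp [h0]) ha
  have hirr (i : ℕ) (hai : a ≤ i) (hie : i < e) : genRel α ρ (Set.Ico 0 r \ {i}) ≠ ⊤ := by
    intro hi
    have hunion : Set.Ico 0 r \ {i} = Set.Ico 0 i ∪ Set.Ico (i + 1) r := by
      ext l; simp; omega
    rw [hunion] at hi
    have hc : ∀ l ∈ Set.Ico 0 i, ∀ j ∈ Set.Ico (i + 1) r, ρ l * ρ j = ρ j * ρ l := by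
      rintro l ⟨_, hl⟩ j ⟨hj, hj'⟩
      exact hcomm l j (by omega) hj' (by omega)
    have hc' : ∀ l ∈ Set.Ico (i + 1) r, ∀ j ∈ Set.Ico 0 i, ρ l * ρ j = ρ j * ρ l :=
      fun l hl j hj => (hc j hj l hl).symm
    have hi' : genRel α ρ (Set.Ico (i + 1) r ∪ Set.Ico 0 i) = ⊤ := by rwa [Set.union_comm]
    let x : α := Classical.arbitrary α
    have hk := two_mul_ncard_orbit_le hc hi (hemin i hie) x
    have hk' := two_mul_ncard_orbit_le hc' hi' (hamax (i + 1) (by omega) (by omega)) x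
    have h1 := RankBound.sub_lt_ncard_orbit (h.mono le_rfl (by omega)) x
      (fun g hg => eq_one_of_fixes_orbit hc hi hg) (ih _ (by omega))
    have h2 := RankBound.sub_lt_ncard_orbit (h.mono (Nat.zero_le (i + 1)) le_rfl) x
      (fun g hg => eq_one_of_fixes_orbit hc' hi' hg) (ih _ (by omega))
    omega
  have hae : a ≤ e + 1 := by
    by_contra! hae
    refine h.notMem_closure (S := Set.Ico 0 e) (i := e) (Set.Ico_subset_Ico_right her)
      ⟨e.zero_le, by omega⟩ (by simp) (mem_closure_of_commute_transitive ha he ?_)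
    rintro l hl j ⟨hj, hj'⟩
    have : l ≤ e := by
      rcases hl with rfl | ⟨_, hl⟩ <;> omega
    exact hcomm l j (by omega) hj' (by omega)
  set P := Set.Ico 0 (a - 1) with hP
  set Q := Set.Ico (e + 1) r with hQ
  have hPcard : Nat.card (closure (ρ '' P)) * Nat.card (Quotient (genRel α ρ P)) = N :=
    hα ▸ card_closure_mul_card_quotient ha fun i hi j hj =>
      hcomm i j (by have := hi.2; omega) hj.2 (by have := hi.2; have := hj.1; omega)
  have hQcard : Nat.card (closure (ρ '' Q)) * Nat.card (Quotient (genRel α ρ Q)) = N :=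
    hα ▸ card_closure_mul_card_quotient he fun i hi j hj =>
      hcomm i j hi.2 (by have := hj.2; omega) (by have := hi.1; have := hj.2; omega)
  have hPpow : 2 ^ (a - 1) ≤ Nat.card (closure (ρ '' P)) :=
    two_pow_le_card_closure (s := 0) (t := a - 1) (h.mono le_rfl (by omega))
  have hQpow : 2 ^ (r - (e + 1)) ≤ Nat.card (closure (ρ '' Q)) :=
    two_pow_le_card_closure (s := e + 1) (t := r) (h.mono (Nat.zero_le _) le_rfl)
  have hPdvd (h2 : 2 ≤ a) : 2 ∣ Nat.card (closure (ρ '' P)) :=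
    h.two_dvd_card_closure (i := 0) ⟨le_rfl, by omega⟩ ⟨le_rfl, by omega⟩
  have hQdvd (h2 : e + 2 ≤ r) : 2 ∣ Nat.card (closure (ρ '' Q)) :=
    h.two_dvd_card_closure (i := r - 1) ⟨by omega, by omega⟩ ⟨by omega, by omega⟩
  rcases hae.eq_or_lt with rfl | hae
  · have h1 := Nat.le_of_dvd (by omega) (Dvd.intro _ hPcard)
    have h2 := Nat.le_of_dvd (by omega) (Dvd.intro _ hQcard)
    have := add_lt_of_two_pow_le hN ((hPdvd (by omega)).trans (Dvd.intro _ hPcard))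
      (hPpow.trans h1) (hQpow.trans h2)
    omega
  set R := Set.Ico 0 a ∪ Set.Ico e r with hR
  have hchain : e - a + 1 ≤ Nat.card (Quotient (genRel α ρ R)) := by
    have hunion : R ∪ ↑(Finset.Ico a e) = Set.Ico 0 r := by
      ext l; simp [hR]; omega
    have := card_add_card_quotient_le (α := α) (ρ := ρ) (S := R) (F := Finset.Ico a e) ?_
    · rw [hunion, htop, Nat.card_Ico] at this
      have hne : Nonempty (Quotient (⊤ : Setoid α)) := ⟨⟦Classical.arbitrary α⟧⟩
      have : 0 < Nat.card (Quotient (⊤ : Setoid α)) := Nat.card_pos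
      omega
    · intro i hi
      rw [Finset.mem_Ico] at hi
      rw [hunion, htop]
      convert hirr i hi.1 hi.2 using 2
      ext l; simp [hR]; omega
  have hRP : Nat.card (Quotient (genRel α ρ R)) ≤ Nat.card (Quotient (genRel α ρ P)) :=
    card_quotient_le_of_le (genRel_mono fun l hl => Or.inl ⟨hl.1, by have := hl.2; omega⟩)
  have hRQ : Nat.card (Quotient (genRel α ρ R)) ≤ Nat.card (Quotient (genRel α ρ Q)) :=
    card_quotient_le_of_le (genRel_mono fun l hl => Or.inr ⟨by have := hl.1; omega, hl.2⟩)
  have hsingle (i : ℕ) (hi : i ∈ R) (hir : i < r) :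
      Nat.card (Quotient (genRel α ρ R)) < N := by
    rw [← hα]
    exact (card_quotient_le_of_le (genRel_mono (by simpa using hi))).trans_lt
      (card_quotient_singleton_lt h ⟨i.zero_le, hir⟩)
  have hRle : Nat.card (Quotient (genRel α ρ R)) ≤ N := hα ▸ card_quotient_le_card _
  suffices a + (r - e) + Nat.card (Quotient (genRel α ρ R)) ≤ N by omega
  have h0mem (ha1 : 1 ≤ a) : 0 ∈ R := Or.inl ⟨le_rfl, ha1⟩
  have hlmem (he1 : e < r) : r - 1 ∈ R := Or.inr ⟨by omega, by omega⟩
  rcases Nat.lt_or_ge a 2 with ha2 | ha2 <;> rcases Nat.lt_or_ge r (e + 2) with he2 | he2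
  · by_cases ha1 : a = 0
    · by_cases he1 : e = r
      · omega
      · have := hsingle (r - 1) (hlmem (by omega)) (by omega)
        omega
    · have h0 := hsingle 0 (h0mem (by omega)) (by omega)
      by_cases he1 : e = r
      · omega
      have hb0 := card_quotient_singleton_lt (α := α) h (i := 0) ⟨le_rfl, by omega⟩
      have hbl := card_quotient_singleton_lt (α := α) h (i := r - 1) ⟨by omega, by omega⟩
      have hm0 : Nat.card (Quotient (genRel α ρ R)) ≤ Nat.card (Quotient (genRel α ρ {0})) :=
        card_quotient_le_of_le (genRel_mono (by simpa using h0mem (by omega)))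
      have hml : Nat.card (Quotient (genRel α ρ R)) ≤ Nat.card (Quotient (genRel α ρ {r - 1})) :=
        card_quotient_le_of_le (genRel_mono (by simpa using hlmem (by omega)))
      have := card_quotient_lt_of_two (α := α) h (i := 0) (j := r - 1) ⟨le_rfl, by omega⟩
        ⟨by omega, by omega⟩ (by omega) (h0mem (by omega)) (hlmem (by omega))
      omega
  · have := add_two_le_of_two_pow_le hN (hQdvd he2) hQcard hRQ hQpow (by omega)
    omega
  · have := add_two_le_of_two_pow_le hN (hPdvd ha2) hPcard hRP hPpow (by omega)
    omega
  · have hne : ¬ (Nat.card (closure (ρ '' P)) = N ∧ Nat.card (closure (ρ '' Q)) = N) := by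
      rintro ⟨hp, hq⟩
      have hPtop : genRel α ρ P = ⊤ :=
        genRel_eq_top_of_card_closure_eq (hPcard.trans hα.symm) (hp.trans hα.symm)
      have hQtop : genRel α ρ Q = ⊤ :=
        genRel_eq_top_of_card_closure_eq (hQcard.trans hα.symm) (hq.trans hα.symm)
      refine h.notMem_closure (S := Q) (i := e) (Set.Ico_subset_Ico_left (Nat.zero_le _))
        ⟨e.zero_le, by omega⟩ (by simp [hQ]) (mem_closure_of_commute_transitive hPtop hQtop ?_)
      rintro l hl j ⟨_, hj⟩
      have : e ≤ l ∧ l < r := by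
        rcases hl with rfl | ⟨hl, hl'⟩ <;> omega
      exact hcomm l j this.2 (by omega) (by omega)
    have hsix (hp : Nat.card (closure (ρ '' P)) = 2) (hq : Nat.card (closure (ρ '' Q)) = 2)
        (hx : N = 6) : Nat.card (Quotient (genRel α ρ R)) ≤ 2 := by
      have ha' : a = 2 := by
        by_contra hne
        have := Nat.pow_le_pow_right two_pos (show 2 ≤ a - 1 by omega)
        omega
      have he' : r = e + 2 := by
        by_contra hne
        have := Nat.pow_le_pow_right two_pos (show 2 ≤ r - (e + 1) by omega)
        omega
      have hP0 : P = {0} := by ext l; simp [hP, ha']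
      have hQl : Q = {r - 1} := by ext l; simp [hQ]; omega
      rw [hp, hP0] at hPcard
      rw [hq, hQl] at hQcard
      have := card_quotient_lt_of_two (α := α) h (i := 0) (j := r - 1) ⟨le_rfl, by omega⟩
        ⟨by omega, by omega⟩ (by omega) (h0mem (by omega)) (hlmem (by omega)) (by omega)
      omega
    rcases le_total (Nat.card (closure (ρ '' Q))) (Nat.card (closure (ρ '' P))) with hle | hle
    · have := add_le_of_two_pow_le_of_ne hN (hPdvd ha2) (hQdvd he2) hPcard hQcard hRP hPpow hQpow
        hle hne (fun hp hq hx => hsix hp hq (by rw [hp, hx] at hPcard; omega))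
      omega
    · have := add_le_of_two_pow_le_of_ne hN (hQdvd he2) (hPdvd ha2) hQcard hPcard hRQ hQpow hPpow
        hle (fun hc => hne hc.symm) (fun hq hp hx => hsix hp hq (by rw [hq, hx] at hQcard; omega))
      omega

lemma genRel_eq_top_iff_isPretransitive {ρ : ℕ → G} {S : Set ℕ} :
    genRel α ρ S = ⊤ ↔ IsPretransitive (closure (ρ '' S)) α := by
  rw [genRel_eq_top_iff]
  exact ⟨fun h => ⟨fun x y => let ⟨g, hg, hxy⟩ := h x y; ⟨⟨g, hg⟩, hxy⟩⟩,
    fun h x y => let ⟨g, hxy⟩ := h.exists_smul_eq x y; ⟨g, g.2, hxy⟩⟩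

lemma image_smul_orbit_eq_of_commute {ρ : ℕ → G} {V W : Set ℕ}
    (h : ∀ i ∈ V, ∀ j ∈ W, ρ i * ρ j = ρ j * ρ i) {g : G} (hg : g ∈ closure (ρ '' (V ∪ W)))
    (x : α) : (g • ·) '' orbit (closure (ρ '' V)) x = orbit (closure (ρ '' V)) (g • x) := by
  obtain ⟨a, ha, b, hb, rfl⟩ := exists_mul_of_mem_closure_union h hg
  ext y
  constructor
  · rintro ⟨_, ⟨c, rfl⟩, rfl⟩
    refine ⟨⟨a, ha⟩ * c * ⟨a, ha⟩⁻¹, ?_⟩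
    change (a * (c : G) * a⁻¹) • (a * b) • x = (a * b) • (c : G) • x
    simp only [← mul_smul]
    rw [mul_assoc a b, ← commute_closure h c.2 hb]
    group
  · rintro ⟨c, rfl⟩
    refine ⟨_, ⟨⟨a, ha⟩⁻¹ * c * ⟨a, ha⟩, rfl⟩, ?_⟩
    change (a * b) • (a⁻¹ * (c : G) * a) • x = (c : G) • (a * b) • x
    simp only [← mul_smul]
    rw [mul_assoc a b, ← commute_closure h (mul_mem (mul_mem (inv_mem ha) c.2) ha) hb]
    group

/-- The extension of a finite sequence by `1`. -/
def extendOne {r : ℕ} (ρ : Fin r → G) (i : ℕ) : G :=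
  if h : i < r then ρ ⟨i, h⟩ else 1

lemma image_extendOne {r : ℕ} (ρ : Fin r → G) {S : Set ℕ} (hS : S ⊆ Set.Ico 0 r)
    {T : Set (Fin r)} (hT : ∀ l, l ∈ T ↔ (l : ℕ) ∈ S) : ρ '' T = extendOne ρ '' S := by
  ext g
  constructor
  · rintro ⟨l, hl, rfl⟩
    exact ⟨l, (hT l).1 hl, by simp [extendOne]⟩
  · rintro ⟨l, hl, rfl⟩
    have hlr := (hS hl).2
    exact ⟨⟨l, hlr⟩, (hT _).2 hl, by simp [extendOne, hlr]⟩

lemma stringIndep_extendOne {n r : ℕ} {ρ : Fin r → Perm (Fin n)} (hsggi : IsSggi ρ)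
    (hind : IsIndependent ρ) : StringIndep (extendOne ρ) 0 r where
  inv i _ hi := by
    rw [← pow_two, ← hsggi.1 ⟨i, hi⟩]
    simp [extendOne, hi, pow_orderOf_eq_one]
  comm i j _ hij hj := by
    have hi : i < r := by omega
    have h2 (l : Fin r) : (ρ l)⁻¹ = ρ l := by
      rw [inv_eq_iff_mul_eq_one, ← pow_two, ← hsggi.1 l, pow_orderOf_eq_one]
    have := hsggi.2 ⟨i, hi⟩ ⟨j, hj⟩ (by
      change 1 < |(i : ℤ) - (j : ℤ)|
      rw [lt_abs]
      omega)
    rw [pow_two, mul_eq_one_iff_eq_inv, mul_inv_rev, h2, h2] at this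
    simpa [extendOne, hi, hj] using this
  indep i _ hi := by
    rw [← image_extendOne ρ Set.sdiff_subset (T := {l | l ≠ ⟨i, hi⟩})
      (fun l => by simp [Fin.ext_iff])]
    simpa [extendOne, hi] using hind ⟨i, hi⟩

end StringRank

theorem stmt1 {n r k m : ℕ} (ρ : Fin r → Equiv.Perm (Fin n))
    (hsggi : IsSggi ρ) (hind : IsIndependent ρ)
    -- G_{r-1} is intransitive
    (hlast : ¬ MulAction.IsPretransitive
      ↥(Subgroup.closure (ρ '' {l | (l : ℕ) ≠ r - 1})) (Fin n))
    -- j ∉ {0, r-1} and G_j is transitive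
    (j : Fin r) (hj0 : (j : ℕ) ≠ 0) (hjlast : (j : ℕ) ≠ r - 1)
    (hjtrans : MulAction.IsPretransitive
      ↥(Subgroup.closure (ρ '' {l | l ≠ j})) (Fin n))
    -- j is the largest such index
    (hjmax : ∀ l : Fin r, (j : ℕ) < (l : ℕ) → (l : ℕ) ≤ r - 2 →
      ¬ MulAction.IsPretransitive
        ↥(Subgroup.closure (ρ '' {l' | l' ≠ l})) (Fin n))
    -- every orbit of G_{<j} has exactly k elements
    (horb : ∀ x : Fin n,
      (MulAction.orbit ↥(Subgroup.closure (ρ '' {l | (l : ℕ) < (j : ℕ)})) x).ncard = k)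
    (hm : m = n / k) :
    (∀ g ∈ Subgroup.closure (ρ '' {l | l ≠ j}), ∀ x : Fin n,
      ∃ y : Fin n,
        (⇑g) '' (MulAction.orbit ↥(Subgroup.closure (ρ '' {l | (l : ℕ) < (j : ℕ)})) x) =
          MulAction.orbit ↥(Subgroup.closure (ρ '' {l | (l : ℕ) < (j : ℕ)})) y) ∧
    r - 1 ≤ (k - 1) + (m - 1) := by
  set σ := extendOne ρ
  have hσ : StringIndep σ 0 r := stringIndep_extendOne hsggi hind
  have hjr := j.2
  set V : Set ℕ := Set.Ico 0 j with hV
  set W : Set ℕ := Set.Ico (j + 1) r with hW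
  have hVr : V ⊆ Set.Ico 0 r := Set.Ico_subset_Ico_right hjr.le
  have hVW : V ∪ W = Set.Ico 0 r \ {(j : ℕ)} := by
    ext l; simp [hV, hW]; omega
  have himV : ρ '' {l | (l : ℕ) < (j : ℕ)} = σ '' V := image_extendOne ρ hVr (by simp [hV])
  have himne (l : Fin r) : ρ '' {l' | l' ≠ l} = σ '' (Set.Ico 0 r \ {(l : ℕ)}) :=
    image_extendOne ρ Set.sdiff_subset (by simp [Fin.ext_iff])
  have hcomm : ∀ i ∈ V, ∀ l ∈ W, σ i * σ l = σ l * σ i := fun i hi l hl =>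
    hσ.comm i l i.zero_le (by have := hi.2; have := hl.1; omega) hl.2
  have htop : genRel (Fin n) σ (V ∪ W) = ⊤ := by
    rwa [genRel_eq_top_iff_isPretransitive, hVW, ← himne]
  have hne (l : ℕ) (hjl : j < l) (hlr : l < r) : genRel (Fin n) σ (Set.Ico 0 r \ {l}) ≠ ⊤ := by
    rw [Ne, genRel_eq_top_iff_isPretransitive, ← himne ⟨l, hlr⟩]
    rcases Nat.lt_or_ge (r - 2) l with h | h
    · obtain rfl : l = r - 1 := by omega
      have hset : {l' : Fin r | l' ≠ ⟨r - 1, hlr⟩} = {l' : Fin r | (l' : ℕ) ≠ r - 1} := by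
        ext l'; simp [Fin.ext_iff]
      rwa [hset]
    · exact hjmax ⟨l, hlr⟩ hjl h
  rw [himV] at horb ⊢
  rw [himne, ← hVW]
  refine ⟨fun g hg x => ⟨g x, image_smul_orbit_eq_of_commute hcomm hg x⟩, ?_⟩
  have : Nonempty (Fin n) := by
    by_contra hempty
    rw [not_nonempty_iff] at hempty
    exact hlast ⟨fun x => hempty.elim x⟩
  have x : Fin n := Classical.arbitrary _
  have hjk := RankBound.sub_lt_ncard_orbit (hσ.mono (t' := j) le_rfl hjr.le) x
    (fun g hg => eq_one_of_fixes_orbit hcomm htop hg) (rankBound _)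
  rw [horb x] at hjk
  have hcard := card_orbit_mul_card_quotient horb
  rw [Nat.card_fin] at hcard
  rw [← hcard, Nat.mul_div_cancel_left _ (by omega)] at hm
  have hchain := card_add_card_quotient_le (α := Fin n) (ρ := σ) (S := V)
    (F := Finset.Ico (j + 1) r) ?_
  · have hq : Nonempty (Quotient (genRel (Fin n) σ (V ∪ ↑(Finset.Ico ((j : ℕ) + 1) r)))) :=
      ⟨⟦x⟧⟩
    have : 0 < Nat.card (Quotient (genRel (Fin n) σ (V ∪ ↑(Finset.Ico ((j : ℕ) + 1) r)))) :=
      Nat.card_pos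
    rw [← hm, Nat.card_Ico] at hchain
    omega
  · intro l hl
    rw [Finset.mem_Ico] at hl
    rw [Finset.coe_Ico, htop]
    intro hl'
    refine hne l (by omega) hl.2 (top_le_iff.1 (hl'.ge.trans (genRel_mono ?_)))
    rintro i (⟨_, hi⟩ | ⟨⟨hi, hi'⟩, hil⟩)
    · exact ⟨⟨i.zero_le, by omega⟩, by simp; omega⟩
    · exact ⟨⟨i.zero_le, hi'⟩, hil⟩
end

section
/- Let n ≥ 7 and let ρ : Fin (n−1) → Equiv.Perm (Fin n) be an sggi of rank n−1 and degree n which is independent. Then the generated subgroup G is all of Equiv.Perm (Fin n) and the generators form the Coxeter generators of the (n−1)-simplex: there exists a bijection c : Fin n ≃ Fin n such that for every i : Fin (n−1), ρ i = Equiv.swap (c i.castSucc) (c i.succ). -/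
open Equiv (Perm)

/-- A family of involutions, labelled by a finite set of naturals, in which labels at distance at
least two commute and no member lies in the subgroup generated by the others. -/
structure IsString {G : Type*} [Group G] (S : Finset ℕ) (f : ℕ → G) : Prop where
  mul_self : ∀ i ∈ S, f i * f i = 1
  commute : ∀ i ∈ S, ∀ j ∈ S, i + 1 < j → Commute (f i) (f j)
  notMem : ∀ i ∈ S, f i ∉ Subgroup.closure (f '' ↑(S.erase i))

namespace IsString

variable {G H : Type*} [Group G] [Group H] {S S' : Finset ℕ} {f : ℕ → G}

theorem mono (h : IsString S f) (hS : S' ⊆ S) : IsString S' f where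
  mul_self i hi := h.mul_self i (hS hi)
  commute i hi j hj := h.commute i (hS hi) j (hS hj)
  notMem i hi hmem := h.notMem i (hS hi) <|
    Subgroup.closure_mono (Set.image_mono (by exact_mod_cast Finset.erase_subset_erase i hS)) hmem

theorem ne_one (h : IsString S f) {i : ℕ} (hi : i ∈ S) : f i ≠ 1 :=
  fun h1 => h.notMem i hi (h1 ▸ one_mem _)

theorem notMem_of_subset (h : IsString S f) {i : ℕ} (hi : i ∈ S) {T : Set ℕ}
    (hT : ∀ j ∈ T, j ∈ S ∧ j ≠ i) : f i ∉ Subgroup.closure (f '' T) := fun hmem =>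
  h.notMem i hi <| Subgroup.closure_mono (Set.image_mono fun j hj => by
    have := hT j hj
    simp [this.1, this.2]) hmem

theorem ne (h : IsString S f) {i j : ℕ} (hi : i ∈ S) (hj : j ∈ S) (hij : i ≠ j) : f i ≠ f j :=
  fun he => h.notMem_of_subset hi (T := {j}) (by rintro _ rfl; exact ⟨hj, hij.symm⟩)
    (he ▸ Subgroup.subset_closure (by simp))

/-- Passing to a homomorphic image and to a minimal generating subfamily. -/
theorem exists_image (h : IsString S f) (φ : G →* H) :
    ∃ J ⊆ S, IsString J (fun i => φ (f i)) ∧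
      Subgroup.closure ((fun i => φ (f i)) '' (J : Set ℕ)) =
        Subgroup.closure ((fun i => φ (f i)) '' (S : Set ℕ)) := by
  classical
  let F := S.powerset.filter fun J : Finset ℕ =>
      Subgroup.closure ((fun i => φ (f i)) '' (J : Set ℕ)) =
        Subgroup.closure ((fun i => φ (f i)) '' (S : Set ℕ))
  obtain ⟨J, hJF, hmin⟩ := F.exists_min_image Finset.card ⟨S, by simp [F]⟩
  simp only [F, Finset.mem_filter, Finset.mem_powerset] at hJF hmin
  refine ⟨J, hJF.1, ⟨fun i hi => ?_, fun i hi j hj hij => ?_, fun i hi hmem => ?_⟩, hJF.2⟩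
  · rw [← map_mul, h.mul_self i (hJF.1 hi), map_one]
  · exact (h.commute i (hJF.1 hi) j (hJF.1 hj) hij).map φ
  · have := hmin (J.erase i) ⟨(Finset.erase_subset _ _).trans hJF.1, ?_⟩
    · exact absurd this (by simpa using Finset.card_erase_lt_of_mem hi)
    · rw [← hJF.2]
      apply le_antisymm
      · exact Subgroup.closure_mono (Set.image_mono (by exact_mod_cast Finset.erase_subset i J))
      · rw [Subgroup.closure_le]
        rintro _ ⟨j, hj, rfl⟩
        by_cases hji : j = i
        · subst hji; exact hmem
        · exact Subgroup.subset_closure ⟨j, by simpa [hji] using hj, rfl⟩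

theorem of_map (φ : G →* H) (hφ : Function.Injective φ)
    (h : IsString S (fun i => φ (f i))) : IsString S f where
  mul_self i hi := hφ (by simpa using h.mul_self i hi)
  commute i hi j hj hij := hφ (by simpa using (h.commute i hi j hj hij).eq)
  notMem i hi hmem := h.notMem i hi <| by
    have := Subgroup.mem_map_of_mem φ hmem
    rwa [MonoidHom.map_closure, Set.image_image] at this

theorem map (h : IsString S f) (φ : G →* H) (hφ : Function.Injective φ) :
    IsString S (fun i => φ (f i)) where
  mul_self i hi := by rw [← map_mul, h.mul_self i hi, map_one]
  commute i hi j hj hij := (h.commute i hi j hj hij).map φ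
  notMem i hi hmem := h.notMem i hi <| by
    rw [← Set.image_image, ← MonoidHom.map_closure] at hmem
    obtain ⟨g, hg, he⟩ := hmem
    exact hφ he ▸ hg

theorem congr {f' : ℕ → G} (h : IsString S f) (he : ∀ i ∈ S, f' i = f i) : IsString S f' where
  mul_self i hi := by rw [he i hi, h.mul_self i hi]
  commute i hi j hj hij := by rw [he i hi, he j hj]; exact h.commute i hi j hj hij
  notMem i hi := by
    rw [he i hi, Set.image_congr (g := f) fun j hj => he j (Finset.mem_of_mem_erase hj)]
    exact h.notMem i hi

/-- A string whose members lie in a subgroup is a string of that subgroup. -/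
theorem exists_lift (h : IsString S f) (A : Subgroup G) (hA : ∀ i ∈ S, f i ∈ A) :
    ∃ F : ℕ → A, (∀ i ∈ S, (F i : G) = f i) ∧ IsString S F := by
  classical
  refine ⟨fun i => if hi : i ∈ S then ⟨f i, hA i hi⟩ else 1, fun i hi => by simp [hi], ?_⟩
  exact of_map A.subtype A.subtype_injective (h.congr fun i hi => by simp [hi])

end IsString

section Orbits

variable {α : Type*}

/-- The orbit equivalence relation of a permutation group. -/
def orbSetoid (H : Subgroup (Perm α)) : Setoid α where
  r x y := ∃ h ∈ H, h x = y
  iseqv :=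
    { refl := fun x => ⟨1, one_mem _, rfl⟩
      symm := by rintro x _ ⟨h, hh, rfl⟩; exact ⟨h⁻¹, inv_mem hh, by simp⟩
      trans := by
        rintro x _ _ ⟨h, hh, rfl⟩ ⟨k, hk, rfl⟩
        exact ⟨k * h, mul_mem hk hh, rfl⟩ }

/-- The number of orbits of a permutation group. -/
noncomputable def orbCount (H : Subgroup (Perm α)) : ℕ := Nat.card (Quotient (orbSetoid H))

variable [Finite α]

theorem orbCount_anti {H K : Subgroup (Perm α)} (h : H ≤ K) : orbCount K ≤ orbCount H :=
  Nat.card_le_card_of_surjective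
    (Quotient.map' (s₁ := orbSetoid H) (s₂ := orbSetoid K) id fun _ _ ⟨g, hg, e⟩ => ⟨g, h hg, e⟩)
    (by rintro ⟨x⟩; exact ⟨Quotient.mk _ x, rfl⟩)

theorem orb_eq_of_orbCount_le {H K : Subgroup (Perm α)} (h : H ≤ K)
    (hc : orbCount H ≤ orbCount K) {x y : α} (hxy : ∃ k ∈ K, k x = y) : ∃ k ∈ H, k x = y := by
  let q := Quotient.map' (s₁ := orbSetoid H) (s₂ := orbSetoid K) id
    fun _ _ ⟨g, hg, e⟩ => ⟨g, h hg, e⟩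
  have hs : Function.Surjective q := by rintro ⟨x⟩; exact ⟨Quotient.mk _ x, rfl⟩
  have hb := hs.bijective_of_nat_card_le hc
  have : q (Quotient.mk _ x) = q (Quotient.mk _ y) := Quotient.sound hxy
  exact Quotient.exact (hb.1 this)

theorem orbCount_pos [Nonempty α] (H : Subgroup (Perm α)) : 0 < orbCount H := by
  have : Nonempty (Quotient (orbSetoid H)) := ⟨Quotient.mk _ (Classical.arbitrary α)⟩
  exact Nat.card_pos

theorem exists_mem_of_orbCount_le_one {H : Subgroup (Perm α)} (h : orbCount H ≤ 1) (x y : α) :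
    ∃ g ∈ H, g x = y := by
  have hs : Subsingleton (Quotient (orbSetoid H)) := Finite.card_le_one_iff_subsingleton.mp h
  exact Quotient.exact (s := orbSetoid H) (Subsingleton.elim (Quotient.mk _ x) (Quotient.mk _ y))

end Orbits

section Linear

variable {V : Type*} [AddCommGroup V] [Module (ZMod 2) V]

/-- Vectors separated by submodules: each `v j` avoids `U j`, which contains all the others. -/
def Separated (D : Finset ℕ) (v : ℕ → V) (U : ℕ → Submodule (ZMod 2) V) : Prop :=
  ∀ j ∈ D, v j ∉ U j ∧ ∀ l ∈ D, l ≠ j → v l ∈ U j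

variable {D : Finset ℕ} {v : ℕ → V} {U : ℕ → Submodule (ZMod 2) V}

theorem Separated.linearIndependent (h : Separated D v U) :
    LinearIndependent (ZMod 2) (fun j : D => v j) := by
  rw [linearIndependent_iff_notMem_span]
  intro j hj
  refine (h j j.2).1 (Submodule.span_le.mpr ?_ hj)
  rintro _ ⟨l, hl, rfl⟩
  exact (h j j.2).2 l l.2 fun he => hl.2 (Subtype.ext he)

theorem Separated.finrank_span (h : Separated D v U) :
    Module.finrank (ZMod 2) (Submodule.span (ZMod 2) (v '' ↑D)) = D.card := by
  have := finrank_span_eq_card h.linearIndependent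
  have hr : Set.range (fun j : D => v j) = v '' ↑D := by ext; simp
  rw [hr] at this
  simpa using this

theorem zmod_two_eq_one {a : ZMod 2} (h : a ≠ 0) : a = 1 := by
  revert h; revert a; decide

theorem Separated.fixed (h : Separated D v U) (g : V →ₗ[ZMod 2] V) (hg : Function.Injective g)
    (hU : ∀ j ∈ D, ∀ x ∈ U j, g x ∈ U j) {j : ℕ} (hj : j ∈ D)
    (hs : g (v j) ∈ Submodule.span (ZMod 2) (v '' ↑D)) : g (v j) = v j := by
  rw [Submodule.mem_span_image_finset_iff_exists_fun] at hs
  obtain ⟨c, hc⟩ := hs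
  have hc0 : ∀ l : D, l ≠ ⟨j, hj⟩ → c l = 0 := by
    intro l hlj
    by_contra hcl
    have hlj' : (l : ℕ) ≠ j := fun e => hlj (Subtype.ext e)
    have h1 : g (v j) ∈ U l := hU l l.2 _ ((h l l.2).2 j hj hlj'.symm)
    rw [← hc, ← Finset.add_sum_erase _ _ (Finset.mem_univ l), zmod_two_eq_one hcl, one_smul] at h1
    refine (h l l.2).1 (((U l).add_mem_iff_left ?_).mp h1)
    refine Submodule.sum_mem _ fun i hi => Submodule.smul_mem _ _ ?_
    exact (h l l.2).2 i i.2 fun e => Finset.ne_of_mem_erase hi (Subtype.ext e)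
  rw [Finset.sum_eq_single_of_mem ⟨j, hj⟩ (Finset.mem_univ _)
    fun l _ hlj => by rw [hc0 l hlj, zero_smul]] at hc
  have : c ⟨j, hj⟩ ≠ 0 := by
    intro h0
    rw [h0, zero_smul] at hc
    have hv : v j = 0 := hg (by rw [← hc, map_zero])
    exact (h j hj).1 (hv ▸ zero_mem _)
  rw [← hc, zmod_two_eq_one this, one_smul]

theorem add_mem_of_finrank_le [FiniteDimensional (ZMod 2) V] (W : Submodule (ZMod 2) V)
    (hW : Module.finrank (ZMod 2) V ≤ Module.finrank (ZMod 2) W + 1) {x y : V}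
    (hx : x ∉ W) (hy : y ∉ W) : x + y ∈ W := by
  have hq := W.finrank_quotient_add_finrank
  have hx' : W.mkQ x ≠ 0 := by simpa using hx
  have hy' : W.mkQ y ≠ 0 := by simpa using hy
  have : Nontrivial (V ⧸ W) := ⟨⟨_, _, hx'⟩⟩
  have hpos : 0 < Module.finrank (ZMod 2) (V ⧸ W) := Module.finrank_pos
  have h1 : Module.finrank (ZMod 2) (V ⧸ W) = 1 := by omega
  obtain ⟨c, hc⟩ := exists_smul_eq_of_finrank_eq_one h1 hx' (W.mkQ y)
  have hc0 : c ≠ 0 := by rintro rfl; exact hy' (by rw [← hc, zero_smul])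
  rw [zmod_two_eq_one hc0, one_smul] at hc
  have : W.mkQ (x + y) = 0 := by
    rw [map_add, ← hc, ← two_smul (ZMod 2)]
    simp [show (2 : ZMod 2) = 0 from rfl]
  rwa [Submodule.mkQ_apply, Submodule.Quotient.mk_eq_zero] at this

end Linear

section PermModule

variable {β : Type*}

/-- The permutation module over the field with two elements. -/
def permLin (g : Perm β) : (β → ZMod 2) →ₗ[ZMod 2] (β → ZMod 2) :=
  LinearMap.funLeft (ZMod 2) (ZMod 2) ⇑g⁻¹

theorem permLin_apply (g : Perm β) (φ : β → ZMod 2) (b : β) : permLin g φ b = φ (g⁻¹ b) := rfl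

theorem permLin_injective (g : Perm β) : Function.Injective (permLin g) :=
  LinearMap.funLeft_injective_of_surjective _ _ _ g⁻¹.surjective

variable [DecidableEq β]

theorem permLin_single (g : Perm β) (b : β) :
    permLin g (Pi.single b 1) = Pi.single (g b) 1 := by
  ext c
  rw [permLin_apply]
  by_cases h : c = g b
  · simp [h]
  · have : g⁻¹ c ≠ b := fun e => h (by rw [← e]; simp)
    rw [Pi.single_eq_of_ne this, Pi.single_eq_of_ne h]

variable [Fintype β]

theorem eq_top_of_single_mem {W : Submodule (ZMod 2) (β → ZMod 2)}
    (h : ∀ b, Pi.single b 1 ∈ W) : W = ⊤ := by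
  rw [eq_top_iff]
  rintro x -
  rw [pi_eq_sum_univ' x]
  refine Submodule.sum_mem _ fun i _ => Submodule.smul_mem _ _ ?_
  convert h i using 1

theorem mem_iff_of_single_add_single_mem {W W' : Submodule (ZMod 2) (β → ZMod 2)} (a : β)
    (h : ∀ b, Pi.single b 1 + Pi.single a 1 ∈ W) (h' : ∀ b, Pi.single b 1 + Pi.single a 1 ∈ W')
    (ha : Pi.single a 1 ∉ W') {x : β → ZMod 2} (hx : x ∈ W') : x ∈ W := by
  have key : x = ∑ b, x b • (Pi.single b 1 + Pi.single a 1 : β → ZMod 2)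
      + (∑ b, x b) • Pi.single a 1 := by
    simp only [smul_add, Finset.sum_add_distrib, ← Finset.sum_smul]
    rw [add_assoc, ← add_smul, CharTwo.add_self_eq_zero, zero_smul, add_zero]
    ext c
    simp [Finset.sum_apply, Pi.single_apply]
  have hsum : ∀ W'' : Submodule (ZMod 2) (β → ZMod 2),
      (∀ b, Pi.single b 1 + Pi.single a 1 ∈ W'') →
      ∑ b, x b • (Pi.single b 1 + Pi.single a 1 : β → ZMod 2) ∈ W'' := fun W'' hW =>
    Submodule.sum_mem _ fun i _ => Submodule.smul_mem _ _ (hW i)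
  by_cases h0 : ∑ b, x b = 0
  · rw [h0, zero_smul, add_zero] at key
    rw [key]; exact hsum W h
  · rw [zmod_two_eq_one h0, one_smul] at key
    rw [key] at hx
    exact absurd (((W').add_mem_iff_right (hsum W' h')).mp hx) ha

/-- In the permutation module of a transitive group of degree `k ≥ 4`, a family separated by
invariant submodules has at most `k - 2` members. -/
theorem Separated.card_le_of_transitive {D : Finset ℕ} {v : ℕ → β → ZMod 2}
    {U : ℕ → Submodule (ZMod 2) (β → ZMod 2)} (h : Separated D v U) (T : Set (Perm β))
    (hT : ∀ a b, ∃ g ∈ T, g a = b) (hU : ∀ g ∈ T, ∀ j ∈ D, ∀ x ∈ U j, permLin g x ∈ U j)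
    (hk : 4 ≤ Fintype.card β) : D.card + 2 ≤ Fintype.card β := by
  by_contra hlt
  obtain ⟨D', hD', hcard⟩ := Finset.exists_subset_card_eq
    (show Fintype.card β - 1 ≤ D.card by omega)
  replace h : Separated D' v U := fun j hj =>
    ⟨(h j (hD' hj)).1, fun l hl => (h j (hD' hj)).2 l (hD' hl)⟩
  replace hU : ∀ g ∈ T, ∀ j ∈ D', ∀ x ∈ U j, permLin g x ∈ U j :=
    fun g hg j hj => hU g hg j (hD' hj)
  clear hlt hD'
  have hdim : Module.finrank (ZMod 2) (β → ZMod 2) = Fintype.card β :=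
    Module.finrank_fintype_fun_eq_card _
  have hspan := h.finrank_span
  set W := Submodule.span (ZMod 2) (v '' ↑D') with hWdef
  by_cases hinv : ∀ g ∈ T, ∀ j ∈ D', permLin g (v j) ∈ W
  · have hfix : ∀ g ∈ T, ∀ x ∈ W, permLin g x = x := by
      intro g hg x hx
      have : W ≤ LinearMap.eqLocus (permLin g) LinearMap.id := by
        rw [hWdef, Submodule.span_le]
        rintro _ ⟨j, hj, rfl⟩
        exact h.fixed _ (permLin_injective g) (hU g hg) hj (hinv g hg j hj)
      exact this hx
    have hnot : ∀ a, Pi.single a (1 : ZMod 2) ∉ W := by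
      intro a ha
      obtain ⟨b, hb⟩ := Fintype.exists_ne_of_one_lt_card (by omega) a
      obtain ⟨g, hg, rfl⟩ := hT a b
      have := hfix g hg _ ha
      rw [permLin_single] at this
      have := congrFun this a
      simp [hb.symm] at this
    obtain ⟨a⟩ : Nonempty β := Fintype.card_pos_iff.mp (by omega)
    obtain ⟨b, hb⟩ := Fintype.exists_ne_of_one_lt_card (by omega) a
    obtain ⟨c, hc⟩ : ∃ c, c ∉ ({a, b} : Finset β) := by
      by_contra hall
      push Not at hall
      have := Finset.card_le_card (fun x _ => hall x : Finset.univ ⊆ ({a, b} : Finset β))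
      have := Finset.card_le_two (a := a) (b := b)
      rw [Finset.card_univ] at *
      omega
    simp only [Finset.mem_insert, Finset.mem_singleton, not_or] at hc
    obtain ⟨g, hg, hgab⟩ := hT a b
    have hmem := add_mem_of_finrank_le W (by rw [hdim, hspan]; omega) (hnot a) (hnot c)
    have := hfix g hg _ hmem
    rw [map_add, permLin_single, permLin_single, hgab] at this
    have hgc : g c ≠ b := fun e => hc.1 (g.injective (e.trans hgab.symm))
    have := congrFun this b
    simp [hb, Ne.symm hc.2, Ne.symm hgc] at this
  · push Not at hinv
    obtain ⟨g, hg, j, hj, hgj⟩ := hinv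
    have key : ∀ l ∈ D', l ≠ j → (∀ a, Pi.single a (1 : ZMod 2) ∉ U l) ∧
        ∀ a b, Pi.single a (1 : ZMod 2) + Pi.single b 1 ∈ U l := by
      intro l hl hlj
      have hnot : ∀ a, Pi.single a (1 : ZMod 2) ∉ U l := by
        intro a ha
        have : U l = ⊤ := eq_top_of_single_mem fun b => by
          obtain ⟨g, hg, rfl⟩ := hT a b
          rw [← permLin_single]
          exact hU g hg l hl _ ha
        exact (h l hl).1 (this ▸ Submodule.mem_top)
      refine ⟨hnot, fun a b => add_mem_of_finrank_le _ ?_ (hnot a) (hnot b)⟩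
      let W' := Submodule.span (ZMod 2) (v '' ↑(D'.erase l))
      have hW' : Module.finrank (ZMod 2) W' = (D'.erase l).card :=
        Separated.finrank_span (U := U) fun i hi =>
          ⟨(h i (Finset.mem_of_mem_erase hi)).1, fun m hm =>
            (h i (Finset.mem_of_mem_erase hi)).2 m (Finset.mem_of_mem_erase hm)⟩
      rw [Finset.card_erase_of_mem hl] at hW'
      have hlt : W' < U l := by
        refine lt_of_le_of_ne (Submodule.span_le.mpr ?_) fun he => ?_
        · rintro _ ⟨i, hi, rfl⟩
          exact (h l hl).2 i (Finset.mem_of_mem_erase hi) (Finset.ne_of_mem_erase hi)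
        · have h1 : permLin g (v j) ∈ U l := hU g hg l hl _ ((h l hl).2 j hj hlj.symm)
          rw [← he] at h1
          exact hgj (Submodule.span_mono
            (Set.image_mono (by exact_mod_cast Finset.erase_subset l D')) h1)
      have := Submodule.finrank_lt_finrank_of_lt hlt
      omega
    obtain ⟨l, hl, l', hl', hll⟩ := Finset.one_lt_card.mp
      (show 1 < (D'.erase j).card by rw [Finset.card_erase_of_mem hj]; omega)
    have hlD := Finset.mem_of_mem_erase hl
    have hlD' := Finset.mem_of_mem_erase hl'
    obtain ⟨hn, hp⟩ := key l hlD (Finset.ne_of_mem_erase hl)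
    obtain ⟨hn', hp'⟩ := key l' hlD' (Finset.ne_of_mem_erase hl')
    obtain ⟨a⟩ : Nonempty β := Fintype.card_pos_iff.mp (by omega)
    exact (h l hlD).1 (mem_iff_of_single_add_single_mem a (fun b => hp b a) (fun b => hp' b a)
      (hn' a) ((h l' hlD').2 l hlD hll))

end PermModule

section Pairs

variable {α : Type*}

theorem apply_apply_of_mul_self (ζ : Perm α) (hζ : ζ * ζ = 1) (x : α) : ζ (ζ x) = x := by
  rw [← Equiv.Perm.mul_apply, hζ, Equiv.Perm.one_apply]

variable (ζ : Perm α) (hζ : ζ * ζ = 1)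

/-- The identification of points exchanged by an involution. -/
def pairSetoid : Setoid α where
  r x y := x = y ∨ ζ x = y
  iseqv :=
    { refl := fun x => Or.inl rfl
      symm := by
        rintro x y (rfl | rfl)
        · exact Or.inl rfl
        · exact Or.inr (apply_apply_of_mul_self ζ hζ x)
      trans := by
        rintro x y w (rfl | rfl) (rfl | rfl)
        · exact Or.inl rfl
        · exact Or.inr rfl
        · exact Or.inr rfl
        · exact Or.inl (apply_apply_of_mul_self ζ hζ x).symm }

/-- The set of orbits of an involution. -/
abbrev Pairs : Type _ := Quotient (pairSetoid ζ hζ)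

/-- The orbit of a point under an involution. -/
abbrev toPair (x : α) : Pairs ζ hζ := Quotient.mk (pairSetoid ζ hζ) x

variable {ζ hζ}

theorem toPair_eq_iff {x y : α} : toPair ζ hζ x = toPair ζ hζ y ↔ x = y ∨ ζ x = y :=
  Quotient.eq (r := pairSetoid ζ hζ)

theorem toPair_apply (x : α) : toPair ζ hζ (ζ x) = toPair ζ hζ x :=
  (toPair_eq_iff.mpr (Or.inr rfl)).symm

theorem toPair_out (b : Pairs ζ hζ) : toPair ζ hζ b.out = b := Quotient.out_eq b

theorem out_toPair (x : α) : x = (toPair ζ hζ x).out ∨ ζ x = (toPair ζ hζ x).out :=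
  toPair_eq_iff.mp (toPair_out (toPair ζ hζ x)).symm

theorem apply_comm {g : Perm α} (hg : Commute g ζ) (x : α) : g (ζ x) = ζ (g x) :=
  congrArg (fun h : Perm α => h x) hg.eq

/-- A permutation commuting with an involution permutes the orbits of the involution. -/
def pairPerm (ζ : Perm α) (hζ : ζ * ζ = 1) :
    Subgroup.centralizer ({ζ} : Set (Perm α)) →* Perm (Pairs ζ hζ) where
  toFun g := Quotient.congr g.1 fun x y => by
    have hg : Commute g.1 ζ := (Subgroup.mem_centralizer_singleton_iff.mp g.2)
    change (x = y ∨ ζ x = y) ↔ (g.1 x = g.1 y ∨ ζ (g.1 x) = g.1 y)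
    rw [← apply_comm hg, g.1.injective.eq_iff, g.1.injective.eq_iff]
  map_one' := by ext ⟨x⟩; rfl
  map_mul' g h := by ext ⟨x⟩; rfl

theorem pairPerm_toPair (g : Subgroup.centralizer ({ζ} : Set (Perm α))) (x : α) :
    pairPerm ζ hζ g (toPair ζ hζ x) = toPair ζ hζ (g.1 x) := rfl

variable (ζ hζ) in
/-- The permutation that agrees with the involution on the selected orbits and is trivial
elsewhere. -/
def pairFlip (φ : Pairs ζ hζ → ZMod 2) : Perm α where
  toFun x := if φ (toPair ζ hζ x) = 0 then x else ζ x
  invFun x := if φ (toPair ζ hζ x) = 0 then x else ζ x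
  left_inv x := by
    by_cases h : φ (toPair ζ hζ x) = 0
    · simp [h]
    · simp [h, toPair_apply, apply_apply_of_mul_self ζ hζ]
  right_inv x := by
    by_cases h : φ (toPair ζ hζ x) = 0
    · simp [h]
    · simp [h, toPair_apply, apply_apply_of_mul_self ζ hζ]

theorem pairFlip_apply (φ : Pairs ζ hζ → ZMod 2) (x : α) :
    pairFlip ζ hζ φ x = if φ (toPair ζ hζ x) = 0 then x else ζ x := rfl

theorem pairFlip_add (φ ψ : Pairs ζ hζ → ZMod 2) :
    pairFlip ζ hζ (φ + ψ) = pairFlip ζ hζ φ * pairFlip ζ hζ ψ := by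
  ext x
  rw [Equiv.Perm.mul_apply, pairFlip_apply, pairFlip_apply, pairFlip_apply, Pi.add_apply]
  by_cases h : φ (toPair ζ hζ x) = 0 <;> by_cases h' : ψ (toPair ζ hζ x) = 0
  · simp [h, h']
  · simp [h, h', toPair_apply]
  · simp [h, h']
  · rw [zmod_two_eq_one h, zmod_two_eq_one h']
    simp [toPair_apply, zmod_two_eq_one h, apply_apply_of_mul_self ζ hζ,
      show (1 + 1 : ZMod 2) = 0 from rfl]

theorem pairFlip_zero : pairFlip ζ hζ 0 = 1 := by
  ext x; simp [pairFlip_apply]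

theorem pairFlip_permLin (h : Subgroup.centralizer ({ζ} : Set (Perm α))) (φ : Pairs ζ hζ → ZMod 2) :
    pairFlip ζ hζ (permLin (pairPerm ζ hζ h) φ) = h.1 * pairFlip ζ hζ φ * h.1⁻¹ := by
  have hc : Commute h.1 ζ := Subgroup.mem_centralizer_singleton_iff.mp h.2
  rw [eq_mul_inv_iff_mul_eq]
  ext x
  have : (pairPerm ζ hζ h)⁻¹ (toPair ζ hζ (h.1 x)) = toPair ζ hζ x := by
    rw [← pairPerm_toPair]; simp
  rw [Equiv.Perm.mul_apply, Equiv.Perm.mul_apply, pairFlip_apply, pairFlip_apply, permLin_apply,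
    this,
    apply_ite h.1, apply_comm hc]

theorem exists_pairFlip_eq {g : Perm α} (hg : Commute g ζ)
    (hπ : ∀ x, toPair ζ hζ (g x) = toPair ζ hζ x) :
    ∃ φ, pairFlip ζ hζ φ = g ∧ ∀ b, φ b ≠ 0 → ζ b.out ≠ b.out := by
  classical
  have hg2 : ∀ x, g x = x ∨ g x = ζ x := fun x =>
    (toPair_eq_iff.mp (hπ x).symm).imp Eq.symm Eq.symm
  refine ⟨fun b => if g b.out = b.out then 0 else 1, ?_, fun b hb => ?_⟩
  · ext x
    have key : g (toPair ζ hζ x).out = (toPair ζ hζ x).out ↔ g x = x := by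
      rcases out_toPair (ζ := ζ) (hζ := hζ) x with h | h
      · rw [← h]
      · rw [← h, apply_comm hg, ζ.injective.eq_iff]
    rw [pairFlip_apply]
    by_cases hx : g x = x
    · simp [key, hx]
    · simpa [key, hx] using ((hg2 x).resolve_left hx).symm
  · have : g b.out ≠ b.out := by
      intro h; simp [h] at hb
    rw [← (hg2 _).resolve_left this]
    exact this

theorem card_pairs_add_card_le [Finite α] :
    Nat.card (Pairs ζ hζ) + Nat.card {b : Pairs ζ hζ // ζ b.out ≠ b.out} ≤ Nat.card α := by
  rw [← Nat.card_sum]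
  refine Nat.card_le_card_of_injective (Sum.elim (fun b => b.out) fun b => ζ b.1.out) ?_
  refine Function.Injective.sumElim Quotient.out_injective ?_ ?_
  · intro b c h
    exact Subtype.ext (Quotient.out_injective (ζ.injective h))
  · intro b c h
    have : b = c.1 := by rw [← toPair_out b, h, toPair_apply, toPair_out]
    exact c.2 (by rw [← h, this])

/-- Splitting a string with a central member `f z` according to the action on the orbits of
`f z`: a string of permutations of the orbits, and a separated family in a permutation module. -/
theorem IsString.exists_pairs {z : ℕ} {P : Finset ℕ} {f : ℕ → Perm α} (hz : z ∉ P)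
    (h : IsString (insert z P) f) (hc : ∀ j ∈ P, Commute (f j) (f z)) (hζ : f z * f z = 1) :
    ∃ J ⊆ P, ∃ g : ℕ → Perm (Pairs (f z) hζ),
      (∀ j ∈ P, ∀ x, g j (toPair _ hζ x) = toPair _ hζ (f j x)) ∧ IsString J g ∧
      Subgroup.closure (g '' (J : Set ℕ)) = Subgroup.closure (g '' (P : Set ℕ)) ∧
      ∃ (D : Finset ℕ) (v : ℕ → Pairs (f z) hζ → ZMod 2)
        (U : ℕ → Submodule (ZMod 2) (Pairs (f z) hζ → ZMod 2)),
        D.card + J.card = P.card + 1 ∧ Separated D v U ∧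
        (∀ k ∈ Subgroup.closure (g '' (P : Set ℕ)), ∀ j ∈ D, ∀ x ∈ U j, permLin k x ∈ U j) ∧
        ∀ j ∈ D, ∀ b, v j b ≠ 0 → f z b.out ≠ b.out := by
  classical
  have hcen : ∀ j ∈ insert z P, f j ∈ Subgroup.centralizer ({f z} : Set (Perm α)) := by
    intro j hj
    rw [Subgroup.mem_centralizer_singleton_iff]
    rcases Finset.mem_insert.mp hj with rfl | hj
    · rfl
    · exact hc j hj
  obtain ⟨F, hF, hFs⟩ := h.exists_lift _ hcen
  have hPS := Finset.subset_insert z P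
  obtain ⟨J, hJP, hJ, hJc⟩ := (hFs.mono hPS).exists_image (pairPerm (f z) hζ)
  set π := pairPerm (f z) hζ with hπ
  have hlift : ∀ k ∈ Subgroup.closure ((fun i => π (F i)) '' (P : Set ℕ)),
      ∃ w, π w = k ∧ w.1 ∈ Subgroup.closure (f '' (J : Set ℕ)) := by
    intro k hk
    rw [← hJc, ← Set.image_image, ← MonoidHom.map_closure] at hk
    obtain ⟨w, hw, rfl⟩ := hk
    refine ⟨w, rfl, ?_⟩
    have := Subgroup.mem_map_of_mem (Subgroup.subtype _) hw
    rw [MonoidHom.map_closure, Set.image_image] at this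
    simp only [Subgroup.subtype_apply] at this
    rwa [Set.image_congr fun j hj => hF j (hPS (hJP hj))] at this
  have hv : ∀ j ∈ insert z (P \ J), ∃ v, (∃ w ∈ Subgroup.closure (f '' (J : Set ℕ)),
      pairFlip (f z) hζ v = f j * w⁻¹) ∧ ∀ b, v b ≠ 0 → f z b.out ≠ b.out := by
    intro j hj
    rcases Finset.mem_insert.mp hj with rfl | hj
    · obtain ⟨v, hv, hv'⟩ := exists_pairFlip_eq (hζ := hζ) (Commute.refl (f j)) toPair_apply
      exact ⟨v, ⟨1, one_mem _, by simpa using hv⟩, hv'⟩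
    · have hjP := (Finset.mem_sdiff.mp hj).1
      obtain ⟨w, hw, hwJ⟩ := hlift (π (F j)) (Subgroup.subset_closure ⟨j, hjP, rfl⟩)
      have hFw : f j * w.1⁻¹ = (F j * w⁻¹).1 := by
        rw [← hF j (hPS hjP)]; rfl
      obtain ⟨v, hv, hv'⟩ := exists_pairFlip_eq (ζ := f z) (hζ := hζ) (g := f j * w.1⁻¹) (by
          rw [hFw]
          exact Subgroup.mem_centralizer_singleton_iff.mp (F j * w⁻¹).2) (by
          intro x
          rw [hFw, ← pairPerm_toPair, ← hπ, map_mul, map_inv, hw, mul_inv_cancel]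
          rfl)
      exact ⟨v, ⟨w.1, hwJ, hv⟩, hv'⟩
  have hJerase : ∀ j ∈ insert z (P \ J), Subgroup.closure (f '' (J : Set ℕ)) ≤
      Subgroup.closure (f '' ↑((insert z P).erase j)) := by
    intro j hj
    refine Subgroup.closure_mono (Set.image_mono fun i hi => ?_)
    have hi' : i ∈ J := hi
    have : i ≠ j := by
      rintro rfl
      rcases Finset.mem_insert.mp hj with rfl | hj
      · exact hz (hJP hi')
      · exact (Finset.mem_sdiff.mp hj).2 hi'
    simp [this, hJP hi']
  have hDS : insert z (P \ J) ⊆ insert z P :=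
    Finset.insert_subset_insert _ Finset.sdiff_subset
  choose! v hv hvs using hv
  let U : ℕ → Submodule (ZMod 2) (Pairs (f z) hζ → ZMod 2) := fun j =>
    AddSubgroup.toZModSubmodule 2
      { carrier := {φ | pairFlip (f z) hζ φ ∈ Subgroup.closure (f '' ↑((insert z P).erase j))}
        add_mem' := fun {a b} ha hb => by
          rw [Set.mem_ofPred_eq, pairFlip_add]; exact mul_mem ha hb
        zero_mem' := by
          rw [Set.mem_ofPred_eq, pairFlip_zero]; exact one_mem _
        neg_mem' := fun {a} ha => by
          have : -a = a := by ext b; exact ZMod.neg_eq_self_mod_two _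
          rw [this]; exact ha }
  have hU : ∀ j φ, φ ∈ U j ↔
      pairFlip (f z) hζ φ ∈ Subgroup.closure (f '' ↑((insert z P).erase j)) := fun _ _ => Iff.rfl
  refine ⟨J, hJP, fun i => π (F i), fun j hj x => ?_, hJ, hJc, insert z (P \ J), v, U,
    ?_, fun j hj => ⟨?_, fun l hl hlj => ?_⟩, fun k hk j hj φ hφ => ?_, hvs⟩
  · rw [hπ, pairPerm_toPair, hF j (hPS hj)]
  · rw [Finset.card_insert_of_notMem fun hmem => hz (Finset.mem_sdiff.mp hmem).1,
      Finset.card_sdiff_of_subset hJP]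
    have := Finset.card_le_card hJP
    omega
  · obtain ⟨w, hw, hvw⟩ := hv j hj
    rw [hU, hvw]
    intro hmem
    refine h.notMem j (hDS hj) ?_
    have := mul_mem hmem (hJerase j hj hw)
    rwa [inv_mul_cancel_right] at this
  · obtain ⟨w, hw, hvw⟩ := hv l hl
    rw [hU, hvw]
    refine mul_mem (Subgroup.subset_closure ⟨l, ?_, rfl⟩) (inv_mem (hJerase j hj hw))
    exact Finset.mem_coe.mpr (Finset.mem_erase.mpr ⟨hlj, hDS hl⟩)
  · obtain ⟨w, rfl, hw⟩ := hlift k hk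
    rw [hU] at hφ ⊢
    rw [hπ, pairFlip_permLin]
    exact mul_mem (mul_mem (hJerase j hj hw) hφ) (inv_mem (hJerase j hj hw))

section Descent

variable {P : Set ℕ} {f : ℕ → Perm α} {g : ℕ → Perm (Pairs ζ hζ)}

theorem exists_mem_closure_lift (hg : ∀ j ∈ P, ∀ x, g j (toPair _ hζ x) = toPair _ hζ (f j x))
    {k : Perm (Pairs ζ hζ)} (hk : k ∈ Subgroup.closure (g '' P)) :
    ∃ w ∈ Subgroup.closure (f '' P), ∀ x, k (toPair _ hζ x) = toPair _ hζ (w x) := by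
  induction hk using Subgroup.closure_induction with
  | mem k hk =>
    obtain ⟨j, hj, rfl⟩ := hk
    exact ⟨f j, Subgroup.subset_closure ⟨j, hj, rfl⟩, hg j hj⟩
  | one => exact ⟨1, one_mem _, fun _ => rfl⟩
  | mul k l _ _ hk hl =>
    obtain ⟨w, hw, hkw⟩ := hk
    obtain ⟨u, hu, hlu⟩ := hl
    exact ⟨w * u, mul_mem hw hu, fun x => by rw [Equiv.Perm.mul_apply, hlu, hkw]; rfl⟩
  | inv k _ hk =>
    obtain ⟨w, hw, hkw⟩ := hk
    refine ⟨w⁻¹, inv_mem hw, fun x => k.injective ?_⟩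
    rw [hkw]; simp

theorem exists_mem_closure_descend
    (hg : ∀ j ∈ P, ∀ x, g j (toPair _ hζ x) = toPair _ hζ (f j x))
    {w : Perm α} (hw : w ∈ Subgroup.closure (f '' P)) :
    ∃ k ∈ Subgroup.closure (g '' P), ∀ x, k (toPair _ hζ x) = toPair _ hζ (w x) := by
  induction hw using Subgroup.closure_induction with
  | mem k hk =>
    obtain ⟨j, hj, rfl⟩ := hk
    exact ⟨g j, Subgroup.subset_closure ⟨j, hj, rfl⟩, hg j hj⟩
  | one => exact ⟨1, one_mem _, fun _ => rfl⟩
  | mul w u _ _ hw hu =>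
    obtain ⟨k, hk, hkw⟩ := hw
    obtain ⟨l, hl, hlu⟩ := hu
    exact ⟨k * l, mul_mem hk hl, fun x => by rw [Equiv.Perm.mul_apply, hlu, hkw]; rfl⟩
  | inv w _ hw =>
    obtain ⟨k, hk, hkw⟩ := hw
    refine ⟨k⁻¹, inv_mem hk, fun x => k.injective ?_⟩
    rw [hkw]; simp

end Descent

theorem orbCount_insert_le [Finite α] {z : ℕ} {P : Finset ℕ} {f : ℕ → Perm α}
    {hζ : f z * f z = 1} {g : ℕ → Perm (Pairs (f z) hζ)}
    (hg : ∀ j ∈ P, ∀ x, g j (toPair _ hζ x) = toPair _ hζ (f j x)) :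
    orbCount (Subgroup.closure (f '' ↑(insert z P))) ≤
      orbCount (Subgroup.closure (g '' (P : Set ℕ))) := by
  refine Nat.card_le_card_of_injective
    (fun o => Quotient.mk (orbSetoid _) (toPair _ hζ o.out)) fun o o' ho => ?_
  obtain ⟨k, hk, hko⟩ := Quotient.exact ho
  obtain ⟨w, hw, hkw⟩ := exists_mem_closure_lift (P := P) hg hk
  have hw' : w ∈ Subgroup.closure (f '' ↑(insert z P)) :=
    Subgroup.closure_mono (Set.image_mono (by exact_mod_cast Finset.subset_insert z P)) hw
  rw [← Quotient.out_eq o, ← Quotient.out_eq o']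
  apply Quotient.sound
  rw [hkw, toPair_eq_iff] at hko
  rcases hko with hko | hko
  · exact ⟨w, hw', hko⟩
  · exact ⟨f z * w, mul_mem (Subgroup.subset_closure ⟨z, by simp, rfl⟩) hw', hko⟩

end Pairs

section Support

variable {β : Type*} {M : β → Prop}

theorem mem_range_extendByZero {φ : β → ZMod 2} (h : ∀ b, φ b ≠ 0 → M b) :
    φ ∈ LinearMap.range
      (Function.ExtendByZero.linearMap (ZMod 2) (Subtype.val : {b // M b} → β)) := by
  refine ⟨fun b => φ b.1, ?_⟩
  ext b
  rw [Function.ExtendByZero.linearMap_apply]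
  by_cases hb : M b
  · exact Subtype.val_injective.extend_apply _ _ (⟨b, hb⟩ : {b // M b})
  · rw [Function.extend_apply' _ _ _ (by rintro ⟨c, rfl⟩; exact hb c.2)]
    by_contra h0
    exact hb (h b (Ne.symm h0))

variable {D : Finset ℕ} {v : ℕ → β → ZMod 2} {U : ℕ → Submodule (ZMod 2) (β → ZMod 2)}

theorem span_le_range_extendByZero (hs : ∀ j ∈ D, ∀ b, v j b ≠ 0 → M b) :
    Submodule.span (ZMod 2) (v '' ↑D) ≤
      LinearMap.range
        (Function.ExtendByZero.linearMap (ZMod 2) (Subtype.val : {b // M b} → β)) := by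
  rw [Submodule.span_le]
  rintro _ ⟨j, hj, rfl⟩
  exact mem_range_extendByZero (hs j hj)

variable [Finite β]

theorem finrank_range_extendByZero_le :
    Module.finrank (ZMod 2)
      (LinearMap.range (Function.ExtendByZero.linearMap (ZMod 2) (Subtype.val : {b // M b} → β))) ≤
      Nat.card {b // M b} := by
  have := Fintype.ofFinite {b // M b}
  rw [Nat.card_eq_fintype_card, ← Module.finrank_fintype_fun_eq_card (ZMod 2)]
  exact LinearMap.finrank_range_le _

theorem Separated.card_le_card_support (h : Separated D v U)
    (hs : ∀ j ∈ D, ∀ b, v j b ≠ 0 → M b) : D.card ≤ Nat.card {b // M b} := by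
  rw [← h.finrank_span]
  exact (Submodule.finrank_mono (span_le_range_extendByZero hs)).trans
    finrank_range_extendByZero_le

theorem Separated.apply_eq_of_card_support_le (h : Separated D v U)
    (hs : ∀ j ∈ D, ∀ b, v j b ≠ 0 → M b) (hle : Nat.card {b // M b} ≤ D.card) (k : Perm β)
    (hM : ∀ b, M b → M (k b)) (hU : ∀ j ∈ D, ∀ x ∈ U j, permLin k x ∈ U j) {b : β} (hb : M b) :
    k b = b := by
  classical
  have heq := Submodule.eq_of_le_of_finrank_le (span_le_range_extendByZero hs)
    (by rw [h.finrank_span]; exact finrank_range_extendByZero_le.trans hle)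
  have hfix : Submodule.span (ZMod 2) (v '' ↑D) ≤
      LinearMap.eqLocus (permLin k) LinearMap.id := by
    rw [Submodule.span_le]
    rintro _ ⟨j, hj, rfl⟩
    refine h.fixed _ (permLin_injective k) hU hj ?_
    rw [heq]
    refine mem_range_extendByZero fun c hc => ?_
    simpa using hM _ (hs j hj _ hc)
  have hmem : Pi.single b (1 : ZMod 2) ∈ Submodule.span (ZMod 2) (v '' ↑D) := by
    rw [heq]
    refine mem_range_extendByZero fun c hc => ?_
    by_cases hcb : c = b
    · exact hcb ▸ hb
    · exact absurd (Pi.single_eq_of_ne hcb _) hc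
  have := hfix hmem
  rw [LinearMap.mem_eqLocus, permLin_single, LinearMap.id_apply] at this
  by_contra hkb
  have := congrFun this b
  simp [Ne.symm hkb] at this

end Support

section Bound

variable {α : Type*}

/-- A group whose generators preserve the pairs exchanged by `ζ` preserves those pairs. -/
theorem apply_eq_or_eq_of_mem_closure {ζ : Perm α} (hζ : ζ * ζ = 1) {T : Set (Perm α)}
    (hT : ∀ t ∈ T, ∀ x, ζ x ≠ x → t x = x ∨ t x = ζ x) {w : Perm α}
    (hw : w ∈ Subgroup.closure T) {x : α} (hx : ζ x ≠ x) : w x = x ∨ w x = ζ x := by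
  have hm : ∀ x, ζ x ≠ x → ζ (ζ x) ≠ ζ x := fun x hx => ζ.injective.ne hx
  have hz := apply_apply_of_mul_self ζ hζ
  induction hw using Subgroup.closure_induction generalizing x with
  | mem t ht => exact hT t ht x hx
  | one => exact Or.inl rfl
  | mul w u _ _ hw hu =>
    rw [Equiv.Perm.mul_apply]
    rcases hu hx with h | h <;> rw [h]
    · exact hw hx
    · have := hw (hm x hx)
      rw [hz] at this
      exact this.symm
  | inv w _ hw =>
    rw [Equiv.Perm.inv_eq_iff_eq, Equiv.Perm.inv_eq_iff_eq]
    rcases hw hx with h | h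
    · exact Or.inl h.symm
    · rcases hw (hm x hx) with h' | h'
      · exact absurd (w.injective (h'.trans h.symm)) hx
      · exact Or.inr (h'.trans (hz x)).symm

theorem commute_of_apply_eq_or_eq {ζ g : Perm α} (hζ : ζ * ζ = 1) (hg : g * g = 1)
    (h : ∀ x, ζ x ≠ x → g x = x ∨ g x = ζ x) : Commute g ζ := by
  have hz := apply_apply_of_mul_self ζ hζ
  have hgg := apply_apply_of_mul_self g hg
  refine Equiv.ext fun x => ?_
  rw [Equiv.Perm.mul_apply, Equiv.Perm.mul_apply]
  by_cases hx : ζ x = x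
  · rw [hx, eq_comm]
    by_contra hgx
    rcases h _ hgx with h' | h'
    · rw [hgg] at h'
      exact hgx (by rw [← h', hx])
    · rw [hgg] at h'
      have e : g x = x := by rw [← hz (g x), ← h', hx]
      exact hgx (by rw [e, hx])
  · have h' := h _ (ζ.injective.ne hx)
    rw [hz] at h'
    rcases h x hx with h1 | h1
    · rcases h' with h' | h'
      · rw [h', h1]
      · exact absurd (g.injective (h'.trans h1.symm)) hx
    · rcases h' with h' | h'
      · exact absurd (g.injective (h'.trans h1.symm)) hx
      · rw [h', h1, hz]

variable [Finite α] {z : ℕ} {P : Finset ℕ} {f : ℕ → Perm α}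

theorem IsString.card_insert_add_orbCount_le (hz : z ∉ P) (h : IsString (insert z P) f)
    (hc : ∀ j ∈ P, Commute (f j) (f z)) (hζ : f z * f z = 1)
    (hb : ∀ (J : Finset ℕ) (g : ℕ → Perm (Pairs (f z) hζ)), IsString J g →
      J.card + orbCount (Subgroup.closure (g '' (J : Set ℕ))) ≤ Nat.card (Pairs (f z) hζ)) :
    P.card + 1 + orbCount (Subgroup.closure (f '' ↑(insert z P))) ≤ Nat.card α ∧
      ((∃ j ∈ P, ∃ x, f z x ≠ x ∧ f j x ≠ x ∧ f j x ≠ f z x) →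
        P.card + 2 + orbCount (Subgroup.closure (f '' ↑(insert z P))) ≤ Nat.card α) := by
  obtain ⟨J, hJP, g, hg, hJ, hJc, D, v, U, hcard, hsep, hU, hs⟩ := h.exists_pairs hz hc hζ
  have h1 := hb J g hJ
  rw [hJc] at h1
  have h2 := orbCount_insert_le hg
  have h3 := hsep.card_le_card_support hs
  have h4 := card_pairs_add_card_le (ζ := f z) (hζ := hζ)
  refine ⟨by omega, ?_⟩
  rintro ⟨j, hj, x, hx, hjx, hjx'⟩
  have hM : ∀ y, f z (toPair (f z) hζ y).out ≠ (toPair (f z) hζ y).out ↔ f z y ≠ y := by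
    intro y
    rcases out_toPair (ζ := f z) (hζ := hζ) y with h | h
    · rw [← h]
    · rw [← h, (f z).injective.ne_iff]
  have : D.card < Nat.card {b : Pairs (f z) hζ // f z b.out ≠ b.out} := by
    by_contra hle
    have := hsep.apply_eq_of_card_support_le hs (not_lt.mp hle) (g j) (fun b hb => ?_)
      (hU _ (Subgroup.subset_closure ⟨j, hj, rfl⟩)) ((hM x).mpr hx)
    · rw [hg j hj, eq_comm, toPair_eq_iff] at this
      rcases this with h | h
      · exact hjx h.symm
      · exact hjx' h.symm
    · rw [← toPair_out b] at hb ⊢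
      rw [hg j hj, hM, ← apply_comm (hc j hj), (f j).injective.ne_iff]
      exact (hM _).mp hb
  omega

theorem orbCount_le_card (H : Subgroup (Perm α)) : orbCount H ≤ Nat.card α :=
  Nat.card_le_card_of_surjective (Quotient.mk (orbSetoid H)) Quotient.mk_surjective

theorem card_pairs_lt {ζ : Perm α} {hζ : ζ * ζ = 1} (h1 : ζ ≠ 1) :
    Nat.card (Pairs ζ hζ) < Nat.card α := by
  have h := card_pairs_add_card_le (ζ := ζ) (hζ := hζ)
  obtain ⟨x, hx⟩ : ∃ x, ζ x ≠ x := by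
    by_contra hall
    push Not at hall
    exact h1 (Equiv.ext hall)
  have : Nonempty {b : Pairs ζ hζ // ζ b.out ≠ b.out} := by
    refine ⟨⟨toPair ζ hζ x, ?_⟩⟩
    rcases out_toPair (ζ := ζ) (hζ := hζ) x with h | h
    · rwa [← h]
    · rwa [← h, ζ.injective.ne_iff]
  have := Nat.card_pos (α := {b : Pairs ζ hζ // ζ b.out ≠ b.out})
  omega

end Bound

universe u

/-- The rank of a string of permutations is at most the degree minus the number of orbits. -/
theorem IsString.card_add_orbCount_le {α : Type u} [Finite α] {S : Finset ℕ} {f : ℕ → Perm α}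
    (h : IsString S f) :
    S.card + orbCount (Subgroup.closure (f '' (S : Set ℕ))) ≤ Nat.card α := by
  induction hn : Nat.card α using Nat.strong_induction_on generalizing α S f with
  | _ n ih =>
  subst hn
  rcases S.eq_empty_or_nonempty with rfl | hne
  · simpa using orbCount_le_card _
  set z := S.max' hne with hzdef
  have hzS : z ∈ S := S.max'_mem hne
  have hζ := h.mul_self z hzS
  have hb : ∀ (J : Finset ℕ) (g : ℕ → Perm (Pairs (f z) hζ)), IsString J g →
      J.card + orbCount (Subgroup.closure (g '' (J : Set ℕ))) ≤ Nat.card (Pairs (f z) hζ) :=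
    fun J g hJ => ih _ (card_pairs_lt (h.ne_one hzS)) hJ rfl
  have hlt : ∀ j ∈ S, j ≠ z → j < z := fun j hj hjz => lt_of_le_of_ne (S.le_max' j hj) hjz
  by_cases hc : ∀ j ∈ S.erase z, Commute (f j) (f z)
  · have h' : IsString (insert z (S.erase z)) f := by rwa [Finset.insert_erase hzS]
    have := (h'.card_insert_add_orbCount_le (Finset.notMem_erase _ _) hc hζ hb).1
    rwa [Finset.insert_erase hzS, Finset.card_erase_add_one hzS] at this
  push Not at hc
  obtain ⟨y, hyz, hy⟩ := hc
  obtain ⟨hyz, hyS⟩ := Finset.mem_erase.mp hyz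
  have hyz' : z = y + 1 := by
    have := hlt y hyS hyz
    by_contra hne
    exact hy (h.commute y hyS z hzS (by omega))
  have hins : insert z ((S.erase y).erase z) = S.erase y :=
    Finset.insert_erase (Finset.mem_erase.mpr ⟨hyz.symm, hzS⟩)
  have hc : ∀ j ∈ (S.erase y).erase z, Commute (f j) (f z) := by
    intro j hj
    obtain ⟨hjz, hj⟩ := Finset.mem_erase.mp hj
    obtain ⟨hjy, hjS⟩ := Finset.mem_erase.mp hj
    have := hlt j hjS hjz
    exact h.commute j hjS z hzS (by omega)
  have hstr : IsString (insert z ((S.erase y).erase z)) f := by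
    rw [hins]; exact h.mono (Finset.erase_subset _ _)
  obtain ⟨h1, h2⟩ := hstr.card_insert_add_orbCount_le (Finset.notMem_erase _ _) hc hζ hb
  have hcard1 := Finset.card_erase_add_one (Finset.mem_erase.mpr ⟨hyz.symm, hzS⟩ : z ∈ S.erase y)
  have hcard2 := Finset.card_erase_add_one hyS
  have hle : Subgroup.closure (f '' ↑(S.erase y)) ≤ Subgroup.closure (f '' (S : Set ℕ)) :=
    Subgroup.closure_mono (Set.image_mono (by exact_mod_cast Finset.erase_subset y S))
  have hanti := orbCount_anti hle
  rw [hins] at h1 h2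
  by_contra hcon
  refine hy (commute_of_apply_eq_or_eq hζ (h.mul_self y hyS) fun x hx => ?_)
  obtain ⟨w, hw, hwx⟩ := orb_eq_of_orbCount_le hle (by omega) (x := x) (y := f y x)
    ⟨f y, Subgroup.subset_closure ⟨y, hyS, rfl⟩, rfl⟩
  rw [← hwx]
  refine apply_eq_or_eq_of_mem_closure hζ ?_ hw hx
  rintro _ ⟨j, hj, rfl⟩ x hx
  by_cases hjz : j = z
  · exact Or.inr (by rw [hjz])
  by_contra! hjx
  have := h2 ⟨j, Finset.mem_erase.mpr ⟨hjz, hj⟩, x, hx, hjx.1, hjx.2⟩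
  omega

theorem IsString.card_add_four_le {α : Type*} [Finite α] {z : ℕ} {P : Finset ℕ} {f : ℕ → Perm α}
    (hz : z ∉ P) (h : IsString (insert z P) f) (hc : ∀ j ∈ P, Commute (f j) (f z))
    (ht : ∀ x y, ∃ w ∈ Subgroup.closure (f '' (P : Set ℕ)), w x = y) (hn : 7 ≤ Nat.card α) :
    P.card + 4 ≤ Nat.card α := by
  classical
  have hzS := Finset.mem_insert_self z P
  have hζ := h.mul_self z hzS
  obtain ⟨J, hJP, g, hg, hJ, hJc, D, v, U, hcard, hsep, hU, hs⟩ := h.exists_pairs hz hc hζ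
  have hcw : ∀ w ∈ Subgroup.closure (f '' (P : Set ℕ)), Commute w (f z) := by
    intro w hw
    have : Subgroup.closure (f '' (P : Set ℕ)) ≤ Subgroup.centralizer {f z} := by
      rw [Subgroup.closure_le]
      rintro _ ⟨j, hj, rfl⟩
      exact Subgroup.mem_centralizer_singleton_iff.mpr (hc j hj)
    exact Subgroup.mem_centralizer_singleton_iff.mp (this hw)
  have hmove : ∀ x, f z x ≠ x := by
    intro x hx
    refine h.ne_one hzS (Equiv.ext fun y => ?_)
    obtain ⟨w, hw, rfl⟩ := ht x y
    rw [← apply_comm (hcw w hw), hx, Equiv.Perm.one_apply]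
  have : Fintype (Pairs (f z) hζ) := Fintype.ofFinite _
  have h1 := card_pairs_add_card_le (ζ := f z) (hζ := hζ)
  have h2 : Nat.card {b : Pairs (f z) hζ // f z b.out ≠ b.out} = Nat.card (Pairs (f z) hζ) :=
    Nat.card_congr (Equiv.subtypeUnivEquiv fun b => hmove _)
  have h3 : Nat.card α ≤ Nat.card (Pairs (f z) hζ) + Nat.card (Pairs (f z) hζ) := by
    rw [← Nat.card_sum]
    refine Nat.card_le_card_of_surjective
      (Sum.elim (fun b => b.out) fun b => f z b.out) fun x => ?_
    rcases out_toPair (ζ := f z) (hζ := hζ) x with h | h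
    · exact ⟨Sum.inl (toPair _ hζ x), h.symm⟩
    · exact ⟨Sum.inr (toPair _ hζ x), by
        rw [Sum.elim_inr, ← h, apply_apply_of_mul_self _ hζ]⟩
  have htβ : ∀ a b,
      ∃ k ∈ (Subgroup.closure (g '' (P : Set ℕ)) : Set (Perm (Pairs (f z) hζ))), k a = b := by
    intro a b
    obtain ⟨w, hw, hwa⟩ := ht a.out b.out
    obtain ⟨k, hk, hkw⟩ := exists_mem_closure_descend (P := P) hg hw
    exact ⟨k, hk, by rw [← toPair_out a, hkw, hwa, toPair_out]⟩
  have h4 := hsep.card_le_of_transitive _ htβ hU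
    (by rw [← Nat.card_eq_fintype_card]; omega)
  rw [← Nat.card_eq_fintype_card] at h4
  have h5 := hJ.card_add_orbCount_le
  have : Nonempty (Pairs (f z) hζ) := Finite.card_pos_iff.mp (by omega)
  have h6 := orbCount_pos (Subgroup.closure (g '' (J : Set ℕ)))
  omega

section Chain

variable {G : Type*} [Group G] [Finite G]

theorem two_mul_card_le_of_lt {H K : Subgroup G} (h : H < K) : 2 * Nat.card H ≤ Nat.card K := by
  obtain ⟨c, hc⟩ := Subgroup.card_dvd_of_le h.le
  have hpos : 0 < Nat.card K := Nat.card_pos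
  have hc0 : c ≠ 0 := by rintro rfl; omega
  have hc1 : c ≠ 1 := by
    rintro rfl
    exact h.ne (Subgroup.eq_of_le_of_card_ge h.le (by omega))
  have : 2 ≤ c := by omega
  rw [hc]
  nlinarith

theorem IsString.card_closure_mul_two_pow_le {f : ℕ → G} {T R : Finset ℕ}
    (hd : Disjoint T R) (h : IsString (T ∪ R) f) :
    Nat.card (Subgroup.closure (f '' (T : Set ℕ))) * 2 ^ R.card ≤
      Nat.card (Subgroup.closure (f '' ↑(T ∪ R))) := by
  classical
  induction R using Finset.induction_on with
  | empty => simp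
  | insert a R ha ih =>
    rw [Finset.disjoint_insert_right] at hd
    have hsub : T ∪ R ⊆ T ∪ insert a R :=
      Finset.union_subset_union_right (Finset.subset_insert _ _)
    have h1 := ih hd.2 (h.mono hsub)
    have haS : a ∈ T ∪ insert a R := by simp
    have h2 : Subgroup.closure (f '' ↑(T ∪ R)) < Subgroup.closure (f '' ↑(T ∪ insert a R)) := by
      refine lt_of_le_of_ne (Subgroup.closure_mono (Set.image_mono (by exact_mod_cast hsub)))
        fun he => ?_
      refine h.notMem_of_subset haS (T := ↑(T ∪ R)) (fun j hj => ⟨hsub hj, ?_⟩)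
        (he ▸ Subgroup.subset_closure ⟨a, haS, rfl⟩)
      rintro rfl
      rcases Finset.mem_union.mp hj with hj | hj
      · exact hd.1 hj
      · exact ha hj
    have h3 := two_mul_card_le_of_lt h2
    rw [Finset.card_insert_of_notMem ha, pow_succ]
    linarith

theorem IsString.two_pow_card_le {f : ℕ → G} {T : Finset ℕ} (h : IsString T f) :
    2 ^ T.card ≤ Nat.card (Subgroup.closure (f '' (T : Set ℕ))) := by
  have := IsString.card_closure_mul_two_pow_le (T := ∅) (R := T) (f := f) (by simp) (by simpa)
  simpa using this

theorem IsString.five_mul_two_pow_le {f : ℕ → G} {T : Finset ℕ} (h : IsString T f) {j k : ℕ}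
    (hj : j ∈ T) (hk : k ∈ T) (hjk : ¬ Commute (f j) (f k)) :
    5 * 2 ^ (T.card - 2) ≤ Nat.card (Subgroup.closure (f '' (T : Set ℕ))) := by
  have hne : j ≠ k := by rintro rfl; exact hjk (Commute.refl _)
  have hsub : ({j, k} : Finset ℕ) ⊆ T := by
    intro x hx
    rcases Finset.mem_insert.mp hx with rfl | hx
    · exact hj
    · exact Finset.mem_singleton.mp hx ▸ hk
  have hunion : ({j, k} : Finset ℕ) ∪ (T \ {j, k}) = T := Finset.union_sdiff_of_subset hsub
  have h1 := IsString.card_closure_mul_two_pow_le (T := {j, k}) (R := T \ {j, k}) (f := f)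
    Finset.disjoint_sdiff (by rwa [hunion])
  rw [hunion, Finset.card_sdiff_of_subset hsub, Finset.card_pair hne] at h1
  have h2 := (h.mono hsub).two_pow_card_le
  rw [Finset.card_pair hne] at h2
  have h3 : Nat.card (Subgroup.closure (f '' ↑({j, k} : Finset ℕ))) ≠ 2 ^ 2 := by
    intro h4
    apply hjk
    have := IsPGroup.isMulCommutative_of_card_eq_prime_sq (p := 2) h4
    exact congrArg Subtype.val (mul_comm'
      (⟨f j, Subgroup.subset_closure ⟨j, by simp, rfl⟩⟩ :
        Subgroup.closure (f '' ↑({j, k} : Finset ℕ)))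
      ⟨f k, Subgroup.subset_closure ⟨k, by simp, rfl⟩⟩)
  refine le_trans (Nat.mul_le_mul_right _ ?_) h1
  omega

end Chain

section CommutingPair

variable {α : Type*} {A B : Subgroup (Perm α)}

theorem mem_orbit_iff_exists {x y : α} : y ∈ MulAction.orbit A x ↔ ∃ a ∈ A, a x = y :=
  ⟨fun ⟨a, h⟩ => ⟨a.1, a.2, h⟩, fun ⟨a, ha, h⟩ => ⟨⟨a, ha⟩, h⟩⟩

theorem mul_mem_of_mem_closure {f : ℕ → Perm α} {S : Set ℕ} (hc : ∀ a ∈ A, ∀ b ∈ B, Commute a b)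
    (hS : ∀ j ∈ S, f j ∈ A ∨ f j ∈ B) {w : Perm α} (hw : w ∈ Subgroup.closure (f '' S)) :
    ∃ a ∈ A, ∃ b ∈ B, w = a * b := by
  induction hw using Subgroup.closure_induction with
  | mem w hw =>
    obtain ⟨j, hj, rfl⟩ := hw
    rcases hS j hj with h | h
    · exact ⟨f j, h, 1, one_mem _, (mul_one _).symm⟩
    · exact ⟨1, one_mem _, f j, h, (one_mul _).symm⟩
  | one => exact ⟨1, one_mem _, 1, one_mem _, (one_mul _).symm⟩
  | mul w u _ _ hw hu =>
    obtain ⟨a, ha, b, hb, rfl⟩ := hw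
    obtain ⟨a', ha', b', hb', rfl⟩ := hu
    refine ⟨a * a', mul_mem ha ha', b * b', mul_mem hb hb', ?_⟩
    rw [mul_assoc, ← mul_assoc b, ← (hc a' ha' b hb).eq]
    simp only [mul_assoc]
  | inv w _ hw =>
    obtain ⟨a, ha, b, hb, rfl⟩ := hw
    exact ⟨a⁻¹, inv_mem ha, b⁻¹, inv_mem hb, by
      rw [← mul_inv_rev, (hc a ha b hb).eq]⟩

variable [Finite α]

/-- A string whose group together with a commuting group acts transitively acts faithfully on
each of its orbits, so its rank is bounded by the orbit length. -/
theorem IsString.card_add_one_le_card_orbit {T : Finset ℕ} {f : ℕ → Perm α} (h : IsString T f)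
    (hA : A = Subgroup.closure (f '' (T : Set ℕ))) (hc : ∀ a ∈ A, ∀ b ∈ B, Commute a b)
    (ht : ∀ x y, ∃ a ∈ A, ∃ b ∈ B, a (b x) = y) (x : α) :
    T.card + 1 ≤ Nat.card (MulAction.orbit A x) := by
  obtain ⟨F, hF, hFs⟩ := h.exists_lift A fun i hi =>
    hA ▸ Subgroup.subset_closure ⟨i, hi, rfl⟩
  have hinj : Function.Injective (MulAction.toPermHom A (MulAction.orbit A x)) := by
    rw [injective_iff_map_eq_one]
    intro a ha
    refine Subtype.ext (Equiv.ext fun y => ?_)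
    obtain ⟨a', ha', b, hb, rfl⟩ := ht x y
    have h1 : a.1 (a' x) = a' x := congrArg Subtype.val
      (congrArg (fun g : Perm (MulAction.orbit A x) => g ⟨a' x, ⟨a', ha'⟩, rfl⟩) ha)
    rw [apply_comm (hc a' ha' b hb), apply_comm (hc a.1 a.2 b hb), h1]
    rfl
  have h1 := (hFs.map _ hinj).card_add_orbCount_le
  have : Nonempty (MulAction.orbit A x) := ⟨⟨x, MulAction.mem_orbit_self x⟩⟩
  have h2 := orbCount_pos (Subgroup.closure
    ((fun i => MulAction.toPermHom A (MulAction.orbit A x) (F i)) '' (T : Set ℕ)))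
  omega

theorem two_mul_card_orbit_le (hc : ∀ a ∈ A, ∀ b ∈ B, Commute a b)
    (ht : ∀ x y, ∃ a ∈ A, ∃ b ∈ B, a (b x) = y) (hA : ¬ ∀ x y, ∃ a ∈ A, a x = y) (x : α) :
    2 * Nat.card (MulAction.orbit A x) ≤ Nat.card α := by
  have hb : ∃ b ∈ B, b x ∉ MulAction.orbit A x := by
    by_contra! hall
    have hx : ∀ y, ∃ a ∈ A, a x = y := by
      intro y
      obtain ⟨a, ha, b, hb, rfl⟩ := ht x y
      obtain ⟨a', ha', h⟩ := mem_orbit_iff_exists.mp (hall b hb)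
      exact ⟨a * a', mul_mem ha ha', by rw [Equiv.Perm.mul_apply, h]⟩
    refine hA fun y w => ?_
    obtain ⟨a, ha, rfl⟩ := hx y
    obtain ⟨a', ha', rfl⟩ := hx w
    exact ⟨a' * a⁻¹, mul_mem ha' (inv_mem ha), by simp⟩
  obtain ⟨b, hb, hbx⟩ := hb
  rw [two_mul, ← Nat.card_sum]
  refine Nat.card_le_card_of_injective (Sum.elim (fun y => y.1) fun y => b y.1) ?_
  refine Function.Injective.sumElim Subtype.val_injective
    (b.injective.comp Subtype.val_injective) ?_
  rintro ⟨y, hy⟩ ⟨w, hw⟩ he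
  obtain ⟨a, ha, rfl⟩ := mem_orbit_iff_exists.mp hy
  obtain ⟨a', ha', rfl⟩ := mem_orbit_iff_exists.mp hw
  refine hbx (mem_orbit_iff_exists.mpr ⟨a'⁻¹ * a, mul_mem (inv_mem ha') ha, ?_⟩)
  change a x = b (a' x) at he
  rw [← apply_comm (hc a' ha' b hb)] at he
  rw [Equiv.Perm.mul_apply, he]
  simp

/-- If both groups have exactly two orbits, all of length `m`, point stabilizers are small. -/
theorem two_mul_card_stabilizer_le {m : ℕ} (hc : ∀ a ∈ A, ∀ b ∈ B, Commute a b)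
    (hn : Nat.card α = 2 * m) (hm : 0 < m)
    (hA : ∀ x : α, Nat.card (MulAction.orbit A x) = m)
    (hB : ∀ x : α, Nat.card (MulAction.orbit B x) = m)
    (ht : ∀ x y, ∃ a ∈ A, ∃ b ∈ B, a (b x) = y) (x : α) :
    2 * Nat.card (MulAction.stabilizer A x) ≤ m := by
  have hcompl : Nat.card ↥(MulAction.orbit B x)ᶜ = m := by
    have := Set.ncard_add_ncard_compl (MulAction.orbit B x)
    rw [← Nat.card_coe_set_eq, ← Nat.card_coe_set_eq, hB x, hn] at this
    omega
  have hne : Nonempty ↥(MulAction.orbit B x)ᶜ := Finite.card_pos_iff.mp (by omega)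
  obtain ⟨y, hy⟩ := hne
  have hQ : ∀ w, w ∉ MulAction.orbit B x → w ∈ MulAction.orbit B y := by
    have hsub : MulAction.orbit B y ⊆ (MulAction.orbit B x)ᶜ := by
      intro w hw hw'
      apply hy
      rw [← MulAction.orbit_eq_iff] at hw hw'
      rw [← hw', hw]
      exact MulAction.mem_orbit_self y
    have := Set.eq_of_subset_of_ncard_le hsub (by
      rw [← Nat.card_coe_set_eq, ← Nat.card_coe_set_eq, hB y, hcompl])
    exact fun w hw => this ▸ hw
  have hfix : ∀ a ∈ A, ∀ u, a u = u → ∀ w ∈ MulAction.orbit B u, a w = w := by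
    intro a ha u hu w hw
    obtain ⟨b, hb, rfl⟩ := mem_orbit_iff_exists.mp hw
    rw [apply_comm (hc a ha b hb), hu]
  have hb : ∃ b ∈ B, b y ∉ MulAction.orbit A y := by
    by_contra! hall
    have huniv : MulAction.orbit A y = Set.univ := by
      refine Set.eq_univ_of_forall fun w => ?_
      obtain ⟨a, ha, b, hb, rfl⟩ := ht y w
      obtain ⟨a', ha', h⟩ := mem_orbit_iff_exists.mp (hall b hb)
      exact mem_orbit_iff_exists.mpr ⟨a * a', mul_mem ha ha', by rw [Equiv.Perm.mul_apply, h]⟩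
    have := hA y
    rw [huniv, Nat.card_coe_set_eq, Set.ncard_univ] at this
    omega
  obtain ⟨b, hb, hby⟩ := hb
  have hst : ∀ g : MulAction.stabilizer A x, g.1.1 x = x := fun g => g.2
  have hgy : ∀ g : MulAction.stabilizer A x, ∀ b ∈ B, b (g.1.1 y) ∉ MulAction.orbit B x := by
    intro g b hb hmem
    apply hy
    obtain ⟨b', hb', he⟩ := mem_orbit_iff_exists.mp hmem
    refine mem_orbit_iff_exists.mpr ⟨b⁻¹ * b', mul_mem (inv_mem hb) hb', g.1.1.injective ?_⟩
    rw [apply_comm (hc g.1.1 g.1.2 _ (mul_mem (inv_mem hb) hb')), hst, Equiv.Perm.mul_apply, he]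
    simp
  have hinj : ∀ g g' : MulAction.stabilizer A x, g.1.1 y = g'.1.1 y → g = g' := by
    intro g g' he
    refine Subtype.ext (Subtype.ext ?_)
    rw [← inv_mul_eq_one]
    have hmem : g.1.1⁻¹ * g'.1.1 ∈ A := mul_mem (inv_mem g.1.2) g'.1.2
    refine Equiv.ext fun w => ?_
    rw [Equiv.Perm.one_apply]
    by_cases hw : w ∈ MulAction.orbit B x
    · refine hfix _ hmem x ?_ w hw
      rw [Equiv.Perm.mul_apply, hst, Equiv.Perm.inv_eq_iff_eq, hst]
    · refine hfix _ hmem y ?_ w (hQ w hw)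
      rw [Equiv.Perm.mul_apply, Equiv.Perm.inv_eq_iff_eq, he]
  rw [← hcompl, two_mul, ← Nat.card_sum]
  refine Nat.card_le_card_of_injective
    (Sum.elim (fun g => ⟨g.1.1 y, hgy g 1 (one_mem B)⟩) fun g => ⟨b (g.1.1 y), hgy g b hb⟩) ?_
  refine Function.Injective.sumElim (fun g g' he => hinj g g' (congrArg Subtype.val he))
    (fun g g' he => hinj g g' (b.injective (congrArg Subtype.val he))) fun g g' he => hby ?_
  have he' : g.1.1 y = b (g'.1.1 y) := congrArg Subtype.val he
  refine mem_orbit_iff_exists.mpr ⟨g'.1.1⁻¹ * g.1.1, mul_mem (inv_mem g'.1.2) g.1.2, ?_⟩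
  rw [Equiv.Perm.mul_apply, he', ← apply_comm (hc _ g'.1.2 b hb)]
  simp

theorem mul_self_lt_five_mul_two_pow {m : ℕ} (hm : 4 ≤ m) : m * m < 5 * 2 ^ (m - 2) := by
  induction m, hm using Nat.le_induction with
  | base => norm_num
  | succ k hk ih =>
    rw [show k + 1 - 2 = (k - 2) + 1 by omega, pow_succ]
    nlinarith

theorem lt_two_pow_pred {m : ℕ} (hm : 4 ≤ m) : m < 2 ^ (m - 1) := by
  induction m, hm using Nat.le_induction with
  | base => norm_num
  | succ k hk ih =>
    rw [show k + 1 - 1 = (k - 1) + 1 by omega, pow_succ]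
    omega

/-- A string of rank `m - 1` cannot have two orbits of length `m ≥ 4` if a commuting group with
two orbits of length `m` completes it to a transitive group. -/
theorem IsString.false_of_two_orbits {T : Finset ℕ} {f : ℕ → Perm α} {m : ℕ} (h : IsString T f)
    (hAT : A = Subgroup.closure (f '' (T : Set ℕ))) (hT : T.card + 1 = m) (hm : 4 ≤ m)
    (hc : ∀ a ∈ A, ∀ b ∈ B, Commute a b) (hn : Nat.card α = 2 * m)
    (hA : ∀ x : α, Nat.card (MulAction.orbit A x) = m)
    (hB : ∀ x : α, Nat.card (MulAction.orbit B x) = m)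
    (ht : ∀ x y, ∃ a ∈ A, ∃ b ∈ B, a (b x) = y) : False := by
  have hne : Nonempty α := Finite.card_pos_iff.mp (by omega)
  obtain ⟨x⟩ := hne
  have hcard : m * Nat.card (MulAction.stabilizer A x) = Nat.card A := by
    rw [← hA x, ← Nat.card_prod]
    exact Nat.card_congr (MulAction.orbitProdStabilizerEquivGroup A x)
  by_cases hcomm : ∀ j ∈ T, ∀ k ∈ T, Commute (f j) (f k)
  · have hab : ∀ a ∈ A, ∀ a' ∈ A, Commute a a' := by
      have h1 : A ≤ Subgroup.centralizer (f '' (T : Set ℕ)) := by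
        rw [hAT, Subgroup.closure_le]
        rintro _ ⟨j, hj, rfl⟩
        rw [SetLike.mem_coe, Subgroup.mem_centralizer_iff]
        rintro _ ⟨k, hk, rfl⟩
        exact hcomm k hk j hj
      have h2 : A ≤ Subgroup.centralizer (A : Set (Perm α)) := by
        conv_lhs => rw [hAT]
        rw [Subgroup.closure_le]
        rintro _ ⟨j, hj, rfl⟩
        rw [SetLike.mem_coe, Subgroup.mem_centralizer_iff]
        intro a ha
        exact ((Subgroup.mem_centralizer_iff.mp (h1 ha)) _ ⟨j, hj, rfl⟩).symm
      exact fun a ha a' ha' => (Subgroup.mem_centralizer_iff.mp (h2 ha') a ha)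
    have hst : Nat.card (MulAction.stabilizer A x) ≤ 1 := by
      rw [Finite.card_le_one_iff_subsingleton]
      refine ⟨fun g g' => ?_⟩
      have key : ∀ g : MulAction.stabilizer A x, g.1.1 = 1 := by
        intro g
        refine Equiv.ext fun y => ?_
        obtain ⟨a, ha, b, hb, rfl⟩ := ht x y
        have hgx : g.1.1 x = x := g.2
        rw [← apply_comm (hab a ha _ g.1.2), apply_comm (hc _ g.1.2 b hb), hgx]
        rfl
      exact Subtype.ext (Subtype.ext ((key g).trans (key g').symm))
    have h1 := h.two_pow_card_le
    rw [← hAT, ← hcard, show T.card = m - 1 by omega] at h1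
    have := lt_two_pow_pred hm
    nlinarith
  · push Not at hcomm
    obtain ⟨j, hj, k, hk, hjk⟩ := hcomm
    have h1 := h.five_mul_two_pow_le hj hk hjk
    rw [← hAT, ← hcard] at h1
    have h2 := two_mul_card_stabilizer_le hc hn (by omega) hA hB ht x
    have h3 := mul_self_lt_five_mul_two_pow hm
    rw [show m - 2 = (T.card - 2) + 1 by omega, pow_succ] at h3
    nlinarith

theorem IsString.not_transitive_erase {n i : ℕ} {f : ℕ → Perm α} (hn : 7 ≤ n)
    (hcard : Nat.card α = n) (h : IsString (Finset.range (n - 1)) f) (hi : 1 ≤ i)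
    (hi' : i + 3 ≤ n) :
    ¬ ∀ x y, ∃ w ∈ Subgroup.closure (f '' ↑((Finset.range (n - 1)).erase i)), w x = y := by
  intro htr
  set A := Subgroup.closure (f '' ↑(Finset.range i)) with hA
  set B := Subgroup.closure (f '' ↑(Finset.Ioo i (n - 1))) with hB
  have hsA : IsString (Finset.range i) f := h.mono fun j hj => by
    simp only [Finset.mem_range] at hj ⊢; omega
  have hsB : IsString (Finset.Ioo i (n - 1)) f := h.mono fun j hj => by
    simp only [Finset.mem_range, Finset.mem_Ioo] at hj ⊢; omega
  have hc : ∀ a ∈ A, ∀ b ∈ B, Commute a b := by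
    have h1 : A ≤ Subgroup.centralizer (f '' ↑(Finset.Ioo i (n - 1))) := by
      rw [hA, Subgroup.closure_le]
      rintro _ ⟨j, hj, rfl⟩
      rw [SetLike.mem_coe, Subgroup.mem_centralizer_iff]
      rintro _ ⟨k, hk, rfl⟩
      simp only [Finset.coe_range, Set.mem_Iio, Finset.coe_Ioo, Set.mem_Ioo] at hj hk
      exact (h.commute j (by simp; omega) k (by simp; omega) (by omega)).symm
    have h2 : B ≤ Subgroup.centralizer (A : Set (Perm α)) := by
      rw [hB, Subgroup.closure_le]
      intro b hb
      rw [SetLike.mem_coe, Subgroup.mem_centralizer_iff]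
      exact fun a ha => ((Subgroup.mem_centralizer_iff.mp (h1 ha)) _ hb).symm
    exact fun a ha b hb => Subgroup.mem_centralizer_iff.mp (h2 hb) a ha
  have ht : ∀ x y, ∃ a ∈ A, ∃ b ∈ B, a (b x) = y := by
    intro x y
    obtain ⟨w, hw, rfl⟩ := htr x y
    obtain ⟨a, ha, b, hb, rfl⟩ := mul_mem_of_mem_closure hc (fun j hj => by
      simp only [Finset.coe_erase, Finset.coe_range, Set.mem_sdiff, Set.mem_Iio,
        Set.mem_singleton_iff] at hj
      rcases lt_or_gt_of_ne hj.2 with hlt | hgt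
      · exact Or.inl (Subgroup.subset_closure ⟨j, by simpa using hlt, rfl⟩)
      · exact Or.inr (Subgroup.subset_closure ⟨j, by simpa using ⟨hgt, hj.1⟩, rfl⟩)) hw
    exact ⟨a, ha, b, hb, rfl⟩
  have ht' : ∀ x y, ∃ b ∈ B, ∃ a ∈ A, b (a x) = y := by
    intro x y
    obtain ⟨a, ha, b, hb, rfl⟩ := ht x y
    exact ⟨b, hb, a, ha, (apply_comm (hc a ha b hb) x).symm⟩
  have hc' : ∀ b ∈ B, ∀ a ∈ A, Commute b a := fun b hb a ha => (hc a ha b hb).symm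
  have hAt : ¬ ∀ x y, ∃ a ∈ A, a x = y := by
    intro hAt
    have := IsString.card_add_four_le (z := n - 2) (P := Finset.range (n - 3)) (f := f)
      (by simp; omega) (h.mono fun j hj => by simp at hj ⊢; omega)
      (fun j hj => by
        simp only [Finset.mem_range] at hj
        exact h.commute j (by simp; omega) (n - 2) (by simp; omega) (by omega))
      (fun x y => by
        obtain ⟨a, ha, he⟩ := hAt x y
        refine ⟨a, Subgroup.closure_mono (Set.image_mono fun j hj => ?_) ha, he⟩
        simp at hj ⊢; omega) (by omega)
    simp at this
    omega
  have hBt : ¬ ∀ x y, ∃ b ∈ B, b x = y := by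
    intro hBt
    have := IsString.card_add_four_le (z := 0) (P := Finset.Ico 2 (n - 1)) (f := f)
      (by simp) (h.mono fun j hj => by simp at hj ⊢; omega)
      (fun j hj => by
        simp only [Finset.mem_Ico] at hj
        exact (h.commute 0 (by simp; omega) j (by simp; omega) (by omega)).symm)
      (fun x y => by
        obtain ⟨a, ha, he⟩ := hBt x y
        refine ⟨a, Subgroup.closure_mono (Set.image_mono fun j hj => ?_) ha, he⟩
        simp at hj ⊢; omega) (by omega)
    simp at this
    omega
  have hO := hsA.card_add_one_le_card_orbit hA hc ht
  have hO2 := two_mul_card_orbit_le hc ht hAt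
  have hQ := hsB.card_add_one_le_card_orbit hB hc' ht'
  have hQ2 := two_mul_card_orbit_le hc' ht' hBt
  simp only [Finset.card_range, Nat.card_Ioo] at hO hQ
  have hne : Nonempty α := Finite.card_pos_iff.mp (by omega)
  obtain ⟨x⟩ := hne
  have h1 := hO x
  have h2 := hO2 x
  have h3 := hQ x
  have h4 := hQ2 x
  refine hsA.false_of_two_orbits (m := i + 1) hA (by simp) (by omega) hc (by omega) ?_ ?_ ht
  · intro y
    have h1' := hO y
    have h2' := hO2 y
    omega
  · intro y
    have h1' := hQ y
    have h2' := hQ2 y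
    omega

end CommutingPair

section Frame

variable {α : Type*} {r : ℕ} {f : ℕ → Perm α} {a : ℕ → α}

/-- The two endpoints of the edge of label `j`. -/
def OnEdge (f : ℕ → Perm α) (a : ℕ → α) (j : ℕ) (x : α) : Prop := x = a j ∨ x = f j (a j)

/-- A choice of one edge in each permutation of a string of permutations, such that the edges form
a connected graph and all points moved off the edges lie on the two extremal edges. -/
structure Frame (r : ℕ) (f : ℕ → Perm α) (a : ℕ → α) : Prop where
  six_le : 6 ≤ r
  card : Nat.card α = r + 1
  apply_apply : ∀ j < r, ∀ x, f j (f j x) = x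
  comm : ∀ i < r, ∀ j < r, (i + 1 < j ∨ j + 1 < i) → ∀ x, f i (f j x) = f j (f i x)
  moved : ∀ j < r, f j (a j) ≠ a j
  notMem : ∀ j < r, f j ∉ Subgroup.closure (f '' {i | i < r ∧ i ≠ j})
  connected : ∀ W : α → Prop, (∀ j < r, (W (a j) ↔ W (f j (a j)))) → ∀ x y, W x → W y
  fixed : ∀ j < r, ∀ x, ¬ OnEdge f a j x → ¬ OnEdge f a 0 x → ¬ OnEdge f a (r - 1) x → f j x = x
  disjoint : ∀ x, OnEdge f a 0 x → ¬ OnEdge f a (r - 1) x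

namespace Frame

theorem onEdge_rev {j : ℕ} {x : α} :
    OnEdge (fun j => f (r - 1 - j)) (fun j => a (r - 1 - j)) j x ↔ OnEdge f a (r - 1 - j) x :=
  Iff.rfl

theorem rev (h : Frame r f a) : Frame r (fun j => f (r - 1 - j)) (fun j => a (r - 1 - j)) := by
  have h6 := h.six_le
  have hr : r - 1 - (r - 1) = 0 := by omega
  refine ⟨h6, h.card, fun j hj => h.apply_apply _ (by omega), fun i hi j hj hij =>
    h.comm _ (by omega) _ (by omega) (by omega), fun j hj => h.moved _ (by omega), ?_, ?_, ?_, ?_⟩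
  · intro j hj hmem
    refine h.notMem (r - 1 - j) (by omega) (Subgroup.closure_mono ?_ hmem)
    rintro _ ⟨i, ⟨hi, hij⟩, rfl⟩
    exact ⟨r - 1 - i, ⟨by omega, by omega⟩, rfl⟩
  · intro W hW
    refine h.connected W fun j hj => ?_
    have := hW (r - 1 - j) (by omega)
    rwa [show r - 1 - (r - 1 - j) = j by omega] at this
  · intro j hj x h1 h2 h3
    refine h.fixed (r - 1 - j) (by omega) x h1 ?_ h2
    rwa [onEdge_rev, hr] at h3
  · intro x h1 h2
    refine h.disjoint x ?_ h1
    rwa [onEdge_rev, hr] at h2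

theorem onEdge_apply (h : Frame r f a) {j : ℕ} (hj : j < r) {x : α} (hx : OnEdge f a j x) :
    OnEdge f a j (f j x) := by
  rcases hx with rfl | rfl
  · exact Or.inr rfl
  · exact Or.inl (h.apply_apply j hj _)

theorem onEdge_apply_iff (h : Frame r f a) {j : ℕ} (hj : j < r) {x : α} :
    OnEdge f a j (f j x) ↔ OnEdge f a j x :=
  ⟨fun hx => by simpa [h.apply_apply j hj] using h.onEdge_apply hj hx, h.onEdge_apply hj⟩

theorem moved_of_onEdge (h : Frame r f a) {j : ℕ} (hj : j < r) {x : α} (hx : OnEdge f a j x) :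
    f j x ≠ x := by
  rcases hx with rfl | rfl
  · exact h.moved j hj
  · exact (f j).injective.ne (h.moved j hj)

theorem eq_or_eq_of_onEdge (h : Frame r f a) {j : ℕ} (hj : j < r) {x y : α} (hx : OnEdge f a j x)
    (hy : OnEdge f a j y) : y = x ∨ y = f j x := by
  rcases hx with rfl | rfl
  · exact hy
  · rw [h.apply_apply j hj]; exact hy.symm

theorem apply_onEdge_zero (h : Frame r f a) {x : α} (hx : f 0 x ≠ x) (h0 : ¬ OnEdge f a 0 x) :
    OnEdge f a (r - 1) x ∧ f 0 x = f (r - 1) x := by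
  have h6 := h.six_le
  have h1 : ∀ y, f 0 y ≠ y → ¬ OnEdge f a 0 y → OnEdge f a (r - 1) y := by
    intro y hy h0
    by_contra hl
    exact hy (h.fixed 0 (by omega) y h0 h0 hl)
  have h2 := h1 x hx h0
  refine ⟨h2, (h.eq_or_eq_of_onEdge (by omega) h2 (h1 (f 0 x) ?_ ?_)).resolve_left hx⟩
  · exact (f 0).injective.ne hx
  · rwa [h.onEdge_apply_iff (by omega)]

theorem apply_onEdge_last (h : Frame r f a) {x : α} (hx : f (r - 1) x ≠ x)
    (h0 : ¬ OnEdge f a (r - 1) x) : OnEdge f a 0 x ∧ f (r - 1) x = f 0 x := by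
  have h6 := h.six_le
  have := h.rev.apply_onEdge_zero (x := x) hx h0
  rwa [onEdge_rev, Nat.sub_zero, show r - 1 - (r - 1) = 0 by omega] at this

theorem onEdge_zero_of_moved (h : Frame r f a) (h0 : ∀ x, f 0 x ≠ x → OnEdge f a 0 x)
    {j : ℕ} (hj : 2 ≤ j) (hjr : j < r) {x : α} (hx : OnEdge f a 0 x) : OnEdge f a 0 (f j x) := by
  refine h0 _ fun he => h.moved_of_onEdge (by omega) hx ((f j).injective ?_)
  rw [← h.comm 0 (by omega) j hjr (by omega), he]

theorem exists_unbalanced (h : Frame r f a) (W : α → Prop) {x y : α} (hx : W x) (hy : ¬ W y) :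
    ∃ j < r, ∃ u, OnEdge f a j u ∧ W u ∧ ¬ W (f j u) := by
  by_contra! hall
  refine hy (h.connected W (fun j hj => ⟨hall j hj _ (Or.inl rfl), fun hW => ?_⟩) x y hx)
  have := hall j hj _ (Or.inr rfl) hW
  rwa [h.apply_apply j hj] at this

theorem exists_onEdge_one (h : Frame r f a) (h0 : ∀ x, f 0 x ≠ x → OnEdge f a 0 x) :
    ∃ x, OnEdge f a 0 x ∧ OnEdge f a 1 x ∧ ¬ OnEdge f a 0 (f 1 x) := by
  have h6 := h.six_le
  obtain ⟨j, hj, u, hju, hu, hu'⟩ := h.exists_unbalanced (OnEdge f a 0) (x := a 0)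
    (y := a (r - 1)) (Or.inl rfl) fun hl => h.disjoint _ hl (Or.inl rfl)
  rcases Nat.lt_or_ge j 2 with hlt | hge
  · interval_cases j
    · exact absurd (h.onEdge_apply hj hu) hu'
    · exact ⟨u, hu, hju, hu'⟩
  · exact absurd (h.onEdge_zero_of_moved h0 hge hj hu) hu'

/-- If the first generator is a transposition, so is the last one. -/
theorem onEdge_last_of_moved (h : Frame r f a) (h0 : ∀ x, f 0 x ≠ x → OnEdge f a 0 x) {x : α}
    (hx : f (r - 1) x ≠ x) : OnEdge f a (r - 1) x := by
  have h6 := h.six_le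
  by_contra hxl
  obtain ⟨hx0, hxe⟩ := h.apply_onEdge_last hx hxl
  have hinv0 := h.apply_apply 0 (by omega)
  have hinv1 := h.apply_apply 1 (by omega)
  have hinvl := h.apply_apply (r - 1) (by omega)
  have hcomm := h.comm 1 (by omega) (r - 1) (by omega) (by omega)
  have hfix0 : ∀ y, ¬ OnEdge f a 0 y → f 0 y = y := fun y hy => not_not.mp fun he => hy (h0 y he)
  have hagree : ∀ y, OnEdge f a 0 y → f (r - 1) y = f 0 y := by
    intro y hy
    rcases h.eq_or_eq_of_onEdge (by omega) hx0 hy with rfl | rfl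
    · exact hxe
    · rw [← hxe, hinvl, hxe, hinv0]
  obtain ⟨u, hu, -, hu'⟩ := h.exists_onEdge_one h0
  have hsupp : ∀ y, f (r - 1) y ≠ y → ¬ OnEdge f a 0 y → OnEdge f a (r - 1) y := by
    intro y hy hy0
    by_contra hl
    exact hy0 (h.apply_onEdge_last hy hl).1
  have hul : OnEdge f a (r - 1) (f 1 u) := by
    refine hsupp _ (fun he => ?_) hu'
    rw [← hcomm, hagree u hu] at he
    exact h.moved_of_onEdge (by omega) hu ((f 1).injective he)
  have hfwd : ∀ y, OnEdge f a 0 y → OnEdge f a (r - 1) (f 1 y) := by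
    intro y hy
    rcases h.eq_or_eq_of_onEdge (by omega) hu hy with rfl | rfl
    · exact hul
    · rw [← hagree u hu, hcomm]
      exact h.onEdge_apply (by omega) hul
  have hbwd : ∀ y, OnEdge f a (r - 1) y → OnEdge f a 0 (f 1 y) := by
    intro y hy
    rcases h.eq_or_eq_of_onEdge (by omega) hul hy with rfl | rfl
    · rwa [hinv1]
    · rw [← hcomm, hinv1, hagree u hu]
      exact h.onEdge_apply (by omega) hu
  have hdis : ∀ y, OnEdge f a (r - 1) y → ¬ OnEdge f a 0 y := fun y hy hy0 => h.disjoint y hy0 hy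
  have key : f (r - 1) = f 0 * f 1 * f 0 * f 1 := by
    ext y
    simp only [Equiv.Perm.mul_apply]
    by_cases hy0 : OnEdge f a 0 y
    · rw [hfix0 _ (hdis _ (hfwd y hy0)), hinv1, hagree y hy0]
    by_cases hyl : OnEdge f a (r - 1) y
    · rw [← hagree _ (hbwd y hyl), hcomm, hinv1, hfix0]
      exact hdis _ (h.onEdge_apply (by omega) hyl)
    have hy1 : ¬ OnEdge f a 0 (f 1 y) := fun hc => hyl (by simpa [hinv1] using hfwd _ hc)
    rw [hfix0 _ hy1, hinv1, hfix0 _ hy0]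
    by_contra hne
    exact hyl (hsupp y hne hy0)
  have hm : ∀ i, i < r → i ≠ r - 1 → f i ∈ Subgroup.closure (f '' {i | i < r ∧ i ≠ r - 1}) :=
    fun i h1 h2 => Subgroup.subset_closure ⟨i, ⟨h1, h2⟩, rfl⟩
  have hm0 := hm 0 (by omega) (by omega)
  have hm1 := hm 1 (by omega) (by omega)
  refine h.notMem (r - 1) (by omega) ?_
  rw [key]
  exact mul_mem (mul_mem (mul_mem hm0 hm1) hm0) hm1

theorem moved_zero_or_moved_last (h : Frame r f a) :
    (∀ x, f 0 x ≠ x → OnEdge f a 0 x) ∨ ∀ x, f (r - 1) x ≠ x → OnEdge f a (r - 1) x := by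
  have h6 := h.six_le
  by_contra! hcon
  obtain ⟨⟨x, hx, hx0⟩, y, hy, hyl⟩ := hcon
  obtain ⟨hxl, hxe⟩ := h.apply_onEdge_zero hx hx0
  obtain ⟨hy0, hye⟩ := h.apply_onEdge_last hy hyl
  have hinv0 := h.apply_apply 0 (by omega)
  have hinvl := h.apply_apply (r - 1) (by omega)
  have key : f 0 = f (r - 1) := by
    ext w
    by_cases hw0 : OnEdge f a 0 w
    · rcases h.eq_or_eq_of_onEdge (by omega) hy0 hw0 with rfl | rfl
      · exact hye.symm
      · rw [← hye, hinvl, hye, hinv0]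
    by_cases hwl : OnEdge f a (r - 1) w
    · rcases h.eq_or_eq_of_onEdge (by omega) hxl hwl with rfl | rfl
      · exact hxe
      · rw [← hxe, hinv0, hxe, hinvl]
    rw [h.fixed 0 (by omega) w hw0 hw0 hwl, h.fixed (r - 1) (by omega) w hwl hw0 hwl]
  exact h.notMem 0 (by omega)
    (key ▸ Subgroup.subset_closure ⟨r - 1, ⟨by omega, by omega⟩, rfl⟩)

theorem moved_zero_and_moved_last (h : Frame r f a) :
    (∀ x, f 0 x ≠ x → OnEdge f a 0 x) ∧ ∀ x, f (r - 1) x ≠ x → OnEdge f a (r - 1) x := by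
  have h6 := h.six_le
  rcases h.moved_zero_or_moved_last with h0 | hl
  · exact ⟨h0, fun x => h.onEdge_last_of_moved h0⟩
  · refine ⟨fun x hx => ?_, hl⟩
    have := h.rev.onEdge_last_of_moved (x := x) hl
    rw [onEdge_rev, show r - 1 - (r - 1) = 0 by omega] at this
    exact this hx

theorem apply_one_onEdge_zero (h : Frame r f a) (h0 : ∀ x, f 0 x ≠ x → OnEdge f a 0 x)
    (hl : ∀ x, f (r - 1) x ≠ x → OnEdge f a (r - 1) x) :
    ∃ x, OnEdge f a 0 x ∧ OnEdge f a 1 x ∧ ¬ OnEdge f a 0 (f 1 x) ∧ f 1 (f 0 x) = f 0 x := by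
  have h6 := h.six_le
  obtain ⟨x, hx0, hx1, hx⟩ := h.exists_onEdge_one h0
  refine ⟨x, hx0, hx1, hx, ?_⟩
  have hx' := h.onEdge_apply (by omega) hx0
  have hinv1 := h.apply_apply 1 (by omega)
  have hx'1 : ¬ OnEdge f a 1 (f 0 x) := fun hc =>
    (h.eq_or_eq_of_onEdge (by omega) hx1 hc).elim (h.moved_of_onEdge (by omega) hx0)
      fun he => hx (he ▸ hx')
  by_contra hne
  have hy1 : ¬ OnEdge f a 1 (f 1 (f 0 x)) := by rwa [h.onEdge_apply_iff (by omega)]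
  have hy0 : ¬ OnEdge f a 0 (f 1 (f 0 x)) := fun hc =>
    (h.eq_or_eq_of_onEdge (by omega) hx' hc).elim hne fun he => by
      rw [h.apply_apply 0 (by omega)] at he
      rw [he] at hy1
      exact hy1 hx1
  have hyl : ¬ OnEdge f a (r - 1) (f 1 (f 0 x)) := by
    intro hc
    refine h.disjoint _ hx' (hl _ fun he => h.moved_of_onEdge (by omega) hc ?_)
    rw [← h.comm 1 (by omega) (r - 1) (by omega) (by omega), he]
  have := h.fixed 1 (by omega) _ hy1 hy0 hyl
  rw [hinv1] at this
  exact hne this.symm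

theorem apply_eq_of_onEdge_zero (h : Frame r f a) {j : ℕ} (hj : 3 ≤ j) (hjr : j < r) {y : α}
    (hy : OnEdge f a 0 y) : f j y = y := by
  have h6 := h.six_le
  obtain ⟨h0, hl⟩ := h.moved_zero_and_moved_last
  obtain ⟨x, hx0, hx1, hx, hfix⟩ := h.apply_one_onEdge_zero h0 hl
  have hjx : f j x = x := by
    refine (h.eq_or_eq_of_onEdge (by omega) hx0
      (h.onEdge_zero_of_moved h0 (by omega) hjr hx0)).resolve_right fun he => ?_
    refine h.moved_of_onEdge (by omega) hx1 ((f j).injective ?_)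
    rw [← h.comm 1 (by omega) j hjr (by omega), he, hfix]
  rcases h.eq_or_eq_of_onEdge (by omega) hx0 hy with rfl | rfl
  · exact hjx
  · rw [← h.comm 0 (by omega) j hjr (by omega), hjx]

theorem apply_eq_of_onEdge_last (h : Frame r f a) {j : ℕ} (hj : j + 4 ≤ r) {y : α}
    (hy : OnEdge f a (r - 1) y) : f j y = y := by
  have := h.rev.apply_eq_of_onEdge_zero (j := r - 1 - j) (by omega) (by omega) (y := y) hy
  rwa [show r - 1 - (r - 1 - j) = j by omega] at this

theorem apply_two_of_onEdge_zero (h : Frame r f a) {y : α} (hy : OnEdge f a 0 y)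
    (hy2 : ¬ OnEdge f a 2 y) : f 2 y = y := by
  have h6 := h.six_le
  obtain ⟨h0, hl⟩ := h.moved_zero_and_moved_last
  obtain ⟨x, hx0, hx1, hx, hfix⟩ := h.apply_one_onEdge_zero h0 hl
  by_contra hne
  have hinv0 := h.apply_apply 0 (by omega)
  have hinv2 := h.apply_apply 2 (by omega)
  have hinv3 := h.apply_apply 3 (by omega)
  have hinvl := h.apply_apply (r - 1) (by omega)
  have h2y : f 2 y = f 0 y := (h.eq_or_eq_of_onEdge (by omega) hy
    (h.onEdge_zero_of_moved h0 le_rfl (by omega) hy)).resolve_left hne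
  have h2agree : ∀ z, OnEdge f a 0 z → f 2 z = f 0 z := by
    intro z hz
    rcases h.eq_or_eq_of_onEdge (by omega) hy hz with rfl | rfl
    · exact h2y
    · rw [← h2y, hinv2, h2y, hinv0]
  have h20 : ∀ z, OnEdge f a 2 z → ¬ OnEdge f a 0 z := by
    intro z hz hz0
    rcases h.eq_or_eq_of_onEdge (by omega) hz0 hy with rfl | rfl
    · exact hy2 hz
    · exact hy2 (h2agree z hz0 ▸ h.onEdge_apply (by omega) hz)
  have hlfix : ∀ j ≤ 2, ∀ z, OnEdge f a (r - 1) z → f j z = z := fun j hj z hz =>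
    h.apply_eq_of_onEdge_last (by omega) hz
  have h2l : ∀ j ≤ 2, ∀ z, OnEdge f a j z → ¬ OnEdge f a (r - 1) z := fun j hj z hz hzl =>
    h.moved_of_onEdge (by omega) hz (hlfix j hj z hzl)
  have hsupp1 : ∀ z, f 1 z ≠ z → OnEdge f a 1 z := by
    intro z hz
    by_contra hz1
    by_cases hz0 : OnEdge f a 0 z
    · rcases h.eq_or_eq_of_onEdge (by omega) hx0 hz0 with rfl | rfl
      · exact hz1 hx1
      · exact hz hfix
    · exact hz (h.fixed 1 (by omega) z hz1 hz0 fun hzl => hz (hlfix 1 (by omega) z hzl))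
  have hsupp2 : ∀ z, f 2 z ≠ z → OnEdge f a 0 z ∨ OnEdge f a 2 z := by
    intro z hz
    by_contra! hc
    exact hz (h.fixed 2 (by omega) z hc.2 hc.1 fun hzl => hz (hlfix 2 le_rfl z hzl))
  have hmoved : ∀ i j, i < r → j < r → (i + 1 < j ∨ j + 1 < i) → ∀ z, f i z ≠ z →
      f i (f j z) ≠ f j z := by
    intro i j hi hj hij z hz he
    rw [h.comm i hi j hj hij] at he
    exact hz ((f j).injective he)
  obtain ⟨j, hj, u, hju, hu, hu'⟩ := h.exists_unbalanced
    (fun z => OnEdge f a 0 z ∨ OnEdge f a 1 z ∨ OnEdge f a 2 z) (x := a 0) (y := a (r - 1))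
    (Or.inl (Or.inl rfl)) (by
      rintro (hc | hc | hc)
      · exact h2l 0 (by omega) _ hc (Or.inl rfl)
      · exact h2l 1 (by omega) _ hc (Or.inl rfl)
      · exact h2l 2 (by omega) _ hc (Or.inl rfl))
  have hpres0 : 2 ≤ j → ¬ OnEdge f a 0 u := fun hj2 hc =>
    hu' (Or.inl (h.onEdge_zero_of_moved h0 hj2 hj hc))
  have hpres1 : 3 ≤ j → ¬ OnEdge f a 1 u := fun hj2 hc =>
    hu' (Or.inr (Or.inl (hsupp1 _
      (hmoved 1 j (by omega) hj (by omega) u (h.moved_of_onEdge (by omega) hc)))))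
  have hj3 : j = 3 := by
    rcases Nat.lt_or_ge j 3 with hlt | hge
    · have := h.onEdge_apply hj hju
      interval_cases j <;> exact absurd (by tauto) hu'
    by_contra hj3
    have hu2 : OnEdge f a 2 u := (hu.resolve_left (hpres0 (by omega))).resolve_left (hpres1 hge)
    refine hu' ?_
    rcases hsupp2 _ (hmoved 2 j (by omega) hj (by omega) u (h.moved_of_onEdge (by omega) hu2)) with
      hc | hc
    · exact Or.inl hc
    · exact Or.inr (Or.inr hc)
  subst hj3
  have hu2 : OnEdge f a 2 u := (hu.resolve_left (hpres0 (by omega))).resolve_left (hpres1 le_rfl)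
  have hu2' := h.onEdge_apply (by omega) hu2
  have h3l : ∀ z, OnEdge f a (r - 1) z → OnEdge f a (r - 1) (f 3 z) := fun z hz =>
    hl _ (hmoved (r - 1) 3 (by omega) (by omega) (by omega) z (h.moved_of_onEdge (by omega) hz))
  have hb2 : f 2 (f 3 u) = f 3 u := by
    by_contra hc
    rcases hsupp2 _ hc with hc | hc
    · exact hu' (Or.inl hc)
    · exact hu' (Or.inr (Or.inr hc))
  have h3u2 : f 3 (f 2 u) = f 2 u := by
    refine h.fixed 3 (by omega) _ (fun hc => ?_) (h20 _ hu2') (h2l 2 le_rfl _ hu2')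
    rcases h.eq_or_eq_of_onEdge (by omega) hju hc with he | he
    · exact h.moved_of_onEdge (by omega) hu2 he
    · exact hu' (Or.inr (Or.inr (he ▸ hu2')))
  have h30 : ∀ z, OnEdge f a 0 z → f 3 z = z := fun z => h.apply_eq_of_onEdge_zero le_rfl (by omega)
  have hcube : ∀ z, ¬ OnEdge f a (r - 1) z → ((f 2 * f 3) ^ 3) z = f 0 z := by
    intro z hzl
    simp only [pow_succ, pow_zero, one_mul, Equiv.Perm.mul_apply]
    by_cases hz0 : OnEdge f a 0 z
    · have hz0' := h.onEdge_apply (by omega) hz0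
      rw [h30 z hz0, h2agree z hz0, h30 _ hz0', h2agree _ hz0', hinv0, h30 z hz0, h2agree z hz0]
    have hz : f 0 z = z := by
      by_contra hc
      exact hz0 (h0 z hc)
    rw [hz]
    by_cases hz2 : OnEdge f a 2 z
    · rcases h.eq_or_eq_of_onEdge (by omega) hu2 hz2 with rfl | rfl
      · rw [hb2, hinv3, h3u2, hinv2]
      · rw [h3u2, hinv2, hb2, hinv3]
    by_cases hz3 : OnEdge f a 3 z
    · rcases h.eq_or_eq_of_onEdge (by omega) hju hz3 with rfl | rfl
      · exact absurd hu2 hz2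
      · rw [hinv3, h3u2, hinv2, hb2]
    have hf3 : f 3 z = z := h.fixed 3 (by omega) z hz3 hz0 hzl
    have hf2 : f 2 z = z := h.fixed 2 (by omega) z hz2 hz0 hzl
    simp only [hf3, hf2]
  have hcubel : ∀ z, OnEdge f a (r - 1) z → ((f 2 * f 3) ^ 3) z = f 3 z := by
    intro z hzl
    simp only [pow_succ, pow_zero, one_mul, Equiv.Perm.mul_apply]
    rw [hlfix 2 le_rfl _ (h3l z hzl), hinv3, hlfix 2 le_rfl z hzl, hlfix 2 le_rfl _ (h3l z hzl)]
  have hm : ∀ i, i < r → i ≠ 0 → f i ∈ Subgroup.closure (f '' {i | i < r ∧ i ≠ 0}) :=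
    fun i h1 h2 => Subgroup.subset_closure ⟨i, ⟨h1, h2⟩, rfl⟩
  have hm3 := pow_mem (mul_mem (hm 2 (by omega) (by omega)) (hm 3 (by omega) (by omega))) 3
  have hfixl : ∀ z, ¬ OnEdge f a (r - 1) z → f (r - 1) z = z := fun z hz => by
    by_contra hc
    exact hz (hl z hc)
  by_cases hid : ∀ z, OnEdge f a (r - 1) z → f 3 z = z
  · have key : f 0 = (f 2 * f 3) ^ 3 := by
      ext z
      by_cases hzl : OnEdge f a (r - 1) z
      · rw [hcubel z hzl, hid z hzl, hlfix 0 (by omega) z hzl]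
      · rw [hcube z hzl]
    exact h.notMem 0 (by omega) (key ▸ hm3)
  · push Not at hid
    obtain ⟨w, hwl, hw⟩ := hid
    have h3w : f 3 w = f (r - 1) w :=
      (h.eq_or_eq_of_onEdge (by omega) hwl (h3l w hwl)).resolve_left hw
    have key : f 0 = (f 2 * f 3) ^ 3 * f (r - 1) := by
      ext z
      rw [Equiv.Perm.mul_apply]
      by_cases hzl : OnEdge f a (r - 1) z
      · rw [hcubel _ (h.onEdge_apply (by omega) hzl), hlfix 0 (by omega) z hzl]
        rcases h.eq_or_eq_of_onEdge (by omega) hwl hzl with rfl | rfl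
        · rw [← h3w, hinv3]
        · rw [hinvl, h3w]
      · rw [hfixl z hzl, hcube z hzl]
    have hlast := hm (r - 1) (by omega) (by omega)
    exact h.notMem 0 (by omega) (key ▸ mul_mem hm3 hlast)

theorem apply_eq_of_onEdge_zero_of_not_onEdge (h : Frame r f a) {j : ℕ} (hj : j < r) {y : α}
    (hy : OnEdge f a 0 y) (hyj : ¬ OnEdge f a j y) : f j y = y := by
  have h6 := h.six_le
  rcases Nat.lt_or_ge j 3 with hlt | hge
  · interval_cases j
    · exact absurd hy hyj
    · obtain ⟨h0, hl⟩ := h.moved_zero_and_moved_last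
      obtain ⟨x, hx0, hx1, -, hfix⟩ := h.apply_one_onEdge_zero h0 hl
      rcases h.eq_or_eq_of_onEdge (by omega) hx0 hy with rfl | rfl
      · exact absurd hx1 hyj
      · exact hfix
    · exact h.apply_two_of_onEdge_zero hy hyj
  · exact h.apply_eq_of_onEdge_zero hge hj hy

theorem apply_eq_of_not_onEdge (h : Frame r f a) {j : ℕ} (hj : j < r) {y : α}
    (hyj : ¬ OnEdge f a j y) : f j y = y := by
  by_cases hy0 : OnEdge f a 0 y
  · exact h.apply_eq_of_onEdge_zero_of_not_onEdge hj hy0 hyj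
  by_cases hyl : OnEdge f a (r - 1) y
  · have := h.rev.apply_eq_of_onEdge_zero_of_not_onEdge (j := r - 1 - j) (by omega) (y := y) hyl
    rw [onEdge_rev, show r - 1 - (r - 1 - j) = j by omega] at this
    exact this hyj
  exact h.fixed j hj y hyj hy0 hyl

end Frame
end Frame

section Path

variable {α : Type*} {r : ℕ} {f : ℕ → Perm α} {a : ℕ → α}

namespace Frame

theorem false_of_onEdge_of_onEdge_apply (h : Frame r f a) {i j : ℕ} (hi : i < r) (hj : j < r)
    (hij : i ≠ j) {x : α} (hxi : OnEdge f a i x) (hxj : OnEdge f a j x)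
    (hx : f i x = f j x) : False := by
  have key : f i = f j := by
    ext z
    by_cases hz : OnEdge f a i z
    · rcases h.eq_or_eq_of_onEdge hi hxi hz with rfl | rfl
      · exact hx
      · rw [h.apply_apply i hi, hx, h.apply_apply j hj]
    · rw [h.apply_eq_of_not_onEdge hi hz, h.apply_eq_of_not_onEdge hj]
      intro hzj
      rcases h.eq_or_eq_of_onEdge hj hxj hzj with rfl | rfl
      · exact hz hxi
      · exact hz (hx ▸ h.onEdge_apply hi hxi)
  exact h.notMem i hi (key ▸ Subgroup.subset_closure ⟨j, ⟨hj, hij.symm⟩, rfl⟩)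

theorem not_onEdge_of_onEdge (h : Frame r f a) {i j : ℕ} (hi : i < r) (hj : j < r)
    (hij : i + 1 < j ∨ j + 1 < i) {x : α} (hxi : OnEdge f a i x) : ¬ OnEdge f a j x := by
  intro hxj
  by_cases hne : f i x = f j x
  · exact h.false_of_onEdge_of_onEdge_apply hi hj (by omega) hxi hxj hne
  have h1 : f i (f j x) = f j x := h.apply_eq_of_not_onEdge hi fun hc =>
    (h.eq_or_eq_of_onEdge hi hxi hc).elim (h.moved_of_onEdge hj hxj) fun he => hne he.symm
  have h2 : f j (f i x) = f i x := h.apply_eq_of_not_onEdge hj fun hc =>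
    (h.eq_or_eq_of_onEdge hj hxj hc).elim (h.moved_of_onEdge hi hxi) fun he => hne he
  exact hne (by rw [← h2, ← h.comm i hi j hj hij, h1])

theorem exists_onEdge_succ (h : Frame r f a) {j : ℕ} (hj : j + 1 < r) :
    ∃ x, OnEdge f a j x ∧ OnEdge f a (j + 1) x := by
  by_cases hall : ∀ x, ∃ i ≤ j, OnEdge f a i x
  · obtain ⟨i, hi, hx⟩ := hall (a (j + 1))
    have hij : i = j := by
      by_contra hne
      exact h.not_onEdge_of_onEdge (by omega) hj (by omega) hx (Or.inl rfl)
    exact ⟨_, hij ▸ hx, Or.inl rfl⟩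
  · push Not at hall
    obtain ⟨y, hy⟩ := hall
    obtain ⟨k, hk, u, hku, ⟨i, hi, hiu⟩, hu'⟩ := h.exists_unbalanced
      (fun x => ∃ i ≤ j, OnEdge f a i x) (x := a 0) (y := y) ⟨0, by omega, Or.inl rfl⟩
      (by push Not; exact hy)
    have hjk : j < k := by
      by_contra hc
      exact hu' ⟨k, by omega, h.onEdge_apply hk hku⟩
    have hik : k ≤ i + 1 := by
      by_contra hc
      exact h.not_onEdge_of_onEdge (by omega) hk (by omega) hiu hku
    obtain rfl : i = j := by omega
    obtain rfl : k = i + 1 := by omega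
    exact ⟨u, hiu, hku⟩

/-- The walk along the labels `0, 1, 2, …` starting at a given point. -/
def walk (f : ℕ → Perm α) (x : α) : ℕ → α
  | 0 => x
  | j + 1 => f j (walk f x j)

theorem exists_walk (h : Frame r f a) : ∃ x, ∀ j < r, OnEdge f a j (walk f x j) ∧
    (j + 1 < r → ¬ OnEdge f a (j + 1) (walk f x j)) := by
  have h6 := h.six_le
  obtain ⟨x, hx0, hx1⟩ := h.exists_onEdge_succ (j := 0) (by omega)
  refine ⟨f 0 x, fun j => ?_⟩
  induction j with
  | zero =>
    refine fun _ => ⟨h.onEdge_apply (by omega) hx0, fun _ hc => ?_⟩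
    refine (h.eq_or_eq_of_onEdge (by omega) hx1 hc).elim (h.moved_of_onEdge (by omega) hx0)
      (h.false_of_onEdge_of_onEdge_apply (by omega) (by omega) (by omega) hx0 hx1)
  | succ j ih =>
    intro hj
    obtain ⟨ih1, ih2⟩ := ih (by omega)
    refine ⟨?_, fun hj' => h.not_onEdge_of_onEdge (i := j) (by omega) hj' (by omega)
      (h.onEdge_apply (by omega) ih1)⟩
    obtain ⟨y, hy1, hy2⟩ := h.exists_onEdge_succ hj
    rcases h.eq_or_eq_of_onEdge (by omega) ih1 hy1 with rfl | rfl
    · exact absurd hy2 (ih2 hj)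
    · exact hy2

theorem exists_equiv [DecidableEq α] (h : Frame r f a) :
    ∃ c : Fin (r + 1) ≃ α, ∀ (j : ℕ) (hj : j < r),
      f j = Equiv.swap (c ⟨j, by omega⟩) (c ⟨j + 1, by omega⟩) := by
  obtain ⟨x, hx⟩ := h.exists_walk
  have hne : ∀ i k, i < k → k < r + 1 → walk f x i ≠ walk f x k := by
    intro i k hik hk he
    obtain ⟨k, rfl⟩ : ∃ l, k = l + 1 := ⟨k - 1, by omega⟩
    rcases Nat.lt_or_ge i k with hlt | hge
    · have hedge : OnEdge f a k (walk f x i) := he ▸ h.onEdge_apply (by omega) (hx k (by omega)).1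
      rcases Nat.lt_or_ge (i + 1) k with hlt' | hge'
      · exact h.not_onEdge_of_onEdge (by omega) (by omega) (Or.inl hlt') (hx i (by omega)).1 hedge
      · obtain rfl : k = i + 1 := by omega
        exact (hx i (by omega)).2 (by omega) hedge
    · obtain rfl : i = k := by omega
      exact h.moved_of_onEdge (by omega) (hx i (by omega)).1 he.symm
  have hinj : Function.Injective fun i : Fin (r + 1) => walk f x i := by
    intro i k he
    by_contra hc
    rcases lt_or_gt_of_ne hc with hlt | hlt
    · exact hne _ _ hlt k.2 he
    · exact hne _ _ hlt i.2 he.symm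
  have : Finite α := Nat.finite_of_card_ne_zero (by rw [h.card]; omega)
  have hbij := hinj.bijective_of_nat_card_le (by rw [h.card]; simp)
  refine ⟨Equiv.ofBijective _ hbij, fun j hj => ?_⟩
  simp only [Equiv.ofBijective_apply, walk]
  have hxj := (hx j hj).1
  ext z
  rw [Equiv.swap_apply_def]
  split_ifs with h1 h2
  · rw [h1]
  · rw [h2, h.apply_apply j hj]
  · refine h.apply_eq_of_not_onEdge hj fun hc => ?_
    exact (h.eq_or_eq_of_onEdge hj hxj hc).elim h1 h2

end Frame
end Path

section FrameExists

variable {α : Type*}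

/-- Two permutations, the second nontrivial, that differ at a point moved by the first one,
move points along distinct edges. -/
theorem exists_distinct_edges_of_moved {f g : Perm α} (hg1 : g ≠ 1)
    {x : α} (hx : f x ≠ x) (hfg : f x ≠ g x) :
    ∃ p q, f p ≠ p ∧ g q ≠ q ∧ (∃ s, (s = p ∨ s = f p) ∧ s ≠ q ∧ s ≠ g q) ∧
      ∃ t, (t = q ∨ t = g q) ∧ t ≠ p ∧ t ≠ f p := by
  by_cases hgx : g x = x
  · obtain ⟨q, hq⟩ : ∃ q, g q ≠ q := by
      by_contra! hc
      exact hg1 (Equiv.ext hc)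
    have hxq : x ≠ q := by rintro rfl; exact hq hgx
    have hxgq : x ≠ g q := fun he => hxq (g.injective (by rw [hgx, ← he]))
    refine ⟨x, q, hx, hq, ⟨x, Or.inl rfl, hxq, hxgq⟩, ?_⟩
    by_cases hqf : q = f x
    · exact ⟨g q, Or.inr rfl, hxgq.symm, hqf ▸ hq⟩
    · exact ⟨q, Or.inl rfl, hxq.symm, hqf⟩
  · exact ⟨x, x, hx, hgx, ⟨f x, Or.inr rfl, hx, hfg⟩, g x, Or.inr rfl, hgx, hfg.symm⟩

theorem exists_distinct_edges {f g : Perm α} (hf1 : f ≠ 1) (hg1 : g ≠ 1) (hfg : f ≠ g) :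
    ∃ p q, f p ≠ p ∧ g q ≠ q ∧ (∃ s, (s = p ∨ s = f p) ∧ s ≠ q ∧ s ≠ g q) ∧
      ∃ t, (t = q ∨ t = g q) ∧ t ≠ p ∧ t ≠ f p := by
  obtain ⟨x, hx⟩ : ∃ x, f x ≠ g x := by
    by_contra! hc
    exact hfg (Equiv.ext hc)
  by_cases hfx : f x = x
  · obtain ⟨q, p, hq, hp, ht, hs⟩ :=
      exists_distinct_edges_of_moved (f := g) (g := f) hf1 (x := x)
        (fun he => hx (hfx.trans he.symm)) hx.symm
    exact ⟨p, q, hp, hq, hs, ht⟩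
  · exact exists_distinct_edges_of_moved hg1 hfx hx

theorem const_of_boundary_eq_zero {r : ℕ} {a b : ℕ → α} (hcard : Nat.card α = r + 1)
    (hs : ∀ l < r, ∃ w : α → ZMod 2, ∀ j < r, w (a j) + w (b j) = if j = l then 1 else 0)
    {w : α → ZMod 2} (hw : ∀ j < r, w (a j) + w (b j) = 0) (x y : α) : w x = w y := by
  classical
  have : Finite α := Nat.finite_of_card_ne_zero (by omega)
  have := Fintype.ofFinite α
  let Φ : (α → ZMod 2) →ₗ[ZMod 2] (Fin r → ZMod 2) :=
    LinearMap.pi fun j => LinearMap.proj (R := ZMod 2) (φ := fun _ : α => ZMod 2) (a j) +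
      LinearMap.proj (b j)
  have hΦ : ∀ w j, Φ w j = w (a j) + w (b j) := fun _ _ => rfl
  have hrange : LinearMap.range Φ = ⊤ := by
    refine eq_top_of_single_mem fun l => ?_
    obtain ⟨w, hw⟩ := hs l l.2
    refine ⟨w, ?_⟩
    ext j
    rw [hΦ, hw j j.2, Pi.single_apply]
    simp only [Fin.ext_iff]
  have hker : Module.finrank (ZMod 2) (LinearMap.ker Φ) = 1 := by
    have := LinearMap.finrank_range_add_finrank_ker Φ
    rw [hrange, finrank_top, Module.finrank_fintype_fun_eq_card,
      Module.finrank_fintype_fun_eq_card, Fintype.card_fin, ← Nat.card_eq_fintype_card, hcard]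
      at this
    omega
  have hone : (1 : α → ZMod 2) ∈ LinearMap.ker Φ := by
    rw [LinearMap.mem_ker]
    ext j
    rw [hΦ]
    exact CharTwo.add_self_eq_zero 1
  have hwk : w ∈ LinearMap.ker Φ := by
    rw [LinearMap.mem_ker]
    ext j
    exact hw j j.2
  have hne : (⟨1, hone⟩ : LinearMap.ker Φ) ≠ 0 := fun h0 => by
    have := congrFun (congrArg Subtype.val h0) x
    exact one_ne_zero this
  obtain ⟨c, hc⟩ := (finrank_eq_one_iff_of_nonzero' _ hne).mp hker ⟨w, hwk⟩
  have hcw : w = c • (1 : α → ZMod 2) := (congrArg Subtype.val hc).symm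
  rw [hcw]
  rfl

variable [Finite α] {r : ℕ} {f : ℕ → Perm α}

theorem IsString.exists_mem_closure_apply_eq (hcard : Nat.card α = r + 1)
    (h : IsString (Finset.range r) f) (x y : α) :
    ∃ w ∈ Subgroup.closure (f '' ↑(Finset.range r)), w x = y := by
  refine exists_mem_of_orbCount_le_one ?_ x y
  have := h.card_add_orbCount_le
  rw [hcard, Finset.card_range] at this
  omega

theorem IsString.exists_separating (hr : 6 ≤ r) (hcard : Nat.card α = r + 1)
    (h : IsString (Finset.range r) f) {i : ℕ} (hi : 1 ≤ i) (hi' : i + 1 < r) :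
    ∃ (p : α) (χ : α → ZMod 2), (∀ j < r, j ≠ i → ∀ x, χ (f j x) = χ x) ∧ χ p + χ (f i p) = 1 := by
  classical
  have hnt := IsString.not_transitive_erase (n := r + 1) (i := i) (f := f) (by omega) hcard h hi
    (by omega)
  rw [Nat.add_sub_cancel] at hnt
  set H := Subgroup.closure (f '' ↑((Finset.range r).erase i)) with hH
  have hgen : ∀ j < r, j ≠ i → f j ∈ H := fun j hj hji =>
    Subgroup.subset_closure ⟨j, by simp [hj, hji], rfl⟩
  obtain ⟨p, hp⟩ : ∃ p, ¬ ∃ w ∈ H, w p = f i p := by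
    by_contra! hc
    refine hnt fun x y => ?_
    obtain ⟨g, hg, rfl⟩ := h.exists_mem_closure_apply_eq hcard x y
    have hall : ∀ j < r, ∀ z, ∃ w ∈ H, w z = f j z := by
      intro j hj z
      by_cases hji : j = i
      · exact hji ▸ hc z
      · exact ⟨f j, hgen j hj hji, rfl⟩
    induction hg using Subgroup.closure_induction'' generalizing x with
    | mem g hg =>
      obtain ⟨j, hj, rfl⟩ := hg
      exact hall j (by simpa using hj) x
    | inv_mem g hg =>
      obtain ⟨j, hj, rfl⟩ := hg
      rw [inv_eq_of_mul_eq_one_left (h.mul_self j hj)]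
      exact hall j (by simpa using hj) x
    | one => exact ⟨1, one_mem _, rfl⟩
    | mul g k _ _ ihg ihk =>
      obtain ⟨w, hw, hwe⟩ := ihk x
      obtain ⟨w', hw', hwe'⟩ := ihg (k x)
      exact ⟨w' * w, mul_mem hw' hw, by rw [Equiv.Perm.mul_apply, hwe, hwe']; rfl⟩
  refine ⟨p, fun x => if ∃ w ∈ H, w p = x then 1 else 0, fun j hj hji x => ?_, ?_⟩
  · have hiff : (∃ w ∈ H, w p = f j x) ↔ ∃ w ∈ H, w p = x := by
      constructor
      · rintro ⟨w, hw, he⟩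
        exact ⟨(f j)⁻¹ * w, mul_mem (inv_mem (hgen j hj hji)) hw, by simp [he]⟩
      · rintro ⟨w, hw, he⟩
        exact ⟨f j * w, mul_mem (hgen j hj hji) hw, by simp [he]⟩
    simp only [hiff]
  · have h1 : ∃ w ∈ H, w p = p := ⟨1, one_mem _, rfl⟩
    simp only [h1, hp, if_true, if_false, add_zero]

theorem IsString.exists_frame (hr : 6 ≤ r) (hcard : Nat.card α = r + 1)
    (h : IsString (Finset.range r) f) : ∃ a, Frame r f a := by
  classical
  have hmem : ∀ {j}, j < r → j ∈ Finset.range r := Finset.mem_range.mpr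
  have hinv : ∀ j < r, ∀ x, f j (f j x) = x := fun j hj =>
    apply_apply_of_mul_self _ (h.mul_self j (hmem hj))
  have hcomm : ∀ i < r, ∀ j < r, (i + 1 < j ∨ j + 1 < i) → ∀ x, f i (f j x) = f j (f i x) := by
    rintro i hi j hj (hij | hij) x
    · exact apply_comm (h.commute i (hmem hi) j (hmem hj) hij) x
    · exact (apply_comm (h.commute j (hmem hj) i (hmem hi) hij) x).symm
  have : Nonempty α := Nat.card_pos_iff.mp (by omega) |>.1
  obtain ⟨p, q, hp, hq, ⟨s, hs, hsq, hsq'⟩, t, ht, htp, htp'⟩ := exists_distinct_edges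
    (h.ne_one (hmem (show 0 < r by omega))) (h.ne_one (hmem (show r - 1 < r by omega)))
    (h.ne (hmem (by omega)) (hmem (by omega)) (by omega))
  choose! a' χ hχ hχ' using fun (i : ℕ) (hi : 1 ≤ i ∧ i + 1 < r) =>
    h.exists_separating hr hcard hi.1 hi.2
  obtain ⟨a, ha0, hal, hai⟩ : ∃ a : ℕ → α, a 0 = p ∧ a (r - 1) = q ∧
      ∀ i, 1 ≤ i ∧ i + 1 < r → a i = a' i :=
    ⟨fun i => if i = 0 then p else if i = r - 1 then q else a' i, by simp,
      by simp [show r - 1 ≠ 0 by omega],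
      fun i hi => by simp [show i ≠ 0 by omega, show i ≠ r - 1 by omega]⟩
  let D : (α → ZMod 2) → ℕ → ZMod 2 := fun w j => w (a j) + w (f j (a j))
  have hDχ : ∀ l, 1 ≤ l ∧ l + 1 < r → ∀ j < r, D (χ l) j = if j = l then 1 else 0 := by
    intro l hl j hj
    split_ifs with hjl
    · subst hjl
      simp only [D, hai j hl]
      exact hχ' j hl
    · simp only [D, hχ l hl j hj hjl]
      exact CharTwo.add_self_eq_zero _
  have hcorrect : ∀ (T : Finset ℕ), (∀ l ∈ T, 1 ≤ l ∧ l + 1 < r) → ∀ w, ∀ j < r,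
      D (w + ∑ l ∈ T, D w l • χ l) j = if j ∈ T then 0 else D w j := by
    intro T hT w j hj
    have h1 : D (w + ∑ l ∈ T, D w l • χ l) j = D w j + ∑ l ∈ T, D w l * D (χ l) j := by
      simp only [D, Pi.add_apply, Finset.sum_apply, Pi.smul_apply, smul_eq_mul, mul_add,
        Finset.sum_add_distrib]
      ring
    rw [h1, Finset.sum_congr rfl fun l hl => by
      rw [hDχ l (hT l hl) j hj, mul_ite, mul_one, mul_zero], Finset.sum_ite_eq]
    split_ifs
    · exact CharTwo.add_self_eq_zero _
    · rw [add_zero]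
  have hDsingle : ∀ x j, ¬ OnEdge f a j x → D (Pi.single x 1) j = 0 := by
    intro x j hx
    simp only [OnEdge, not_or] at hx
    simp [D, Ne.symm hx.1, Ne.symm hx.2]
  have hmoved : ∀ j < r, f j (a j) ≠ a j := by
    intro j hj
    by_cases hj' : 1 ≤ j ∧ j + 1 < r
    · intro he
      have := hDχ j hj' j hj
      simp only [D, he, if_true, CharTwo.add_self_eq_zero] at this
      exact zero_ne_one this
    · obtain rfl | rfl : j = 0 ∨ j = r - 1 := by omega
      · rwa [ha0]
      · rwa [hal]
  have hDsingle' : ∀ x, ∀ j < r, OnEdge f a j x → D (Pi.single x 1) j = 1 := by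
    rintro x j hj (rfl | rfl)
    · simp [D, hmoved j hj]
    · simp [D, (hmoved j hj).symm]
  let I : Finset ℕ := Finset.Ico 1 (r - 1)
  have hI : ∀ l, l ∈ I ↔ 1 ≤ l ∧ l + 1 < r := fun l => by
    rw [Finset.mem_Ico]
    omega
  have hconst : ∀ w : α → ZMod 2, (∀ j < r, D w j = 0) → ∀ x y, w x = w y := by
    intro w hw
    refine const_of_boundary_eq_zero hcard (fun l hl => ?_) hw
    by_cases hl' : 1 ≤ l ∧ l + 1 < r
    · exact ⟨χ l, hDχ l hl'⟩
    have hs0 : OnEdge f a 0 s := by rwa [OnEdge, ha0]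
    have hsl : ¬ OnEdge f a (r - 1) s := by rw [OnEdge, hal]; tauto
    have htl : OnEdge f a (r - 1) t := by rwa [OnEdge, hal]
    have ht0 : ¬ OnEdge f a 0 t := by rw [OnEdge, ha0]; tauto
    obtain rfl | rfl : l = 0 ∨ l = r - 1 := by omega
    · refine ⟨_, fun j hj => (hcorrect I (fun l => (hI l).mp) (Pi.single s 1) j hj).trans ?_⟩
      by_cases hj' : 1 ≤ j ∧ j + 1 < r
      · rw [if_pos ((hI j).mpr hj'), if_neg (by omega)]
      rw [if_neg (mt (hI j).mp hj')]
      obtain rfl | rfl : j = 0 ∨ j = r - 1 := by omega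
      · rw [if_pos rfl, hDsingle' s _ hj hs0]
      · rw [if_neg (by omega), hDsingle s _ hsl]
    · refine ⟨_, fun j hj => (hcorrect I (fun l => (hI l).mp) (Pi.single t 1) j hj).trans ?_⟩
      by_cases hj' : 1 ≤ j ∧ j + 1 < r
      · rw [if_pos ((hI j).mpr hj'), if_neg (by omega)]
      rw [if_neg (mt (hI j).mp hj')]
      obtain rfl | rfl : j = 0 ∨ j = r - 1 := by omega
      · rw [if_neg (by omega), hDsingle t _ ht0]
      · rw [if_pos rfl, hDsingle' t _ hj htl]
  have hfixed : ∀ j < r, ∀ x, ¬ OnEdge f a j x → ¬ OnEdge f a 0 x → ¬ OnEdge f a (r - 1) x →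
      f j x = x := by
    intro j hj x hxj hx0 hxl
    have hT : ∀ l ∈ I.erase j, 1 ≤ l ∧ l + 1 < r := fun l hl =>
      (hI l).mp (Finset.mem_of_mem_erase hl)
    have := hconst _ (fun k hk => (hcorrect (I.erase j) hT (Pi.single x 1) k hk).trans ?_) x (f j x)
    · have hsum : ∑ l ∈ I.erase j, D (Pi.single x 1) l • χ l (f j x) =
          ∑ l ∈ I.erase j, D (Pi.single x 1) l • χ l x := Finset.sum_congr rfl fun l hl => by
        rw [hχ l (hT l hl) j hj (Finset.ne_of_mem_erase hl).symm x]
      simp only [Pi.add_apply, Finset.sum_apply, Pi.smul_apply] at this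
      rw [hsum, add_left_inj, Pi.single_eq_same, Pi.single_apply] at this
      by_contra hne
      rw [if_neg hne] at this
      exact one_ne_zero this
    · split_ifs with hk
      · rfl
      rw [Finset.mem_erase, hI] at hk
      refine hDsingle _ _ ?_
      obtain rfl | rfl | rfl : k = j ∨ k = 0 ∨ k = r - 1 := by omega
      all_goals assumption
  refine ⟨a, hr, hcard, hinv, hcomm, hmoved, ?_, ?_, hfixed, ?_⟩
  · exact fun j hj => h.notMem_of_subset (hmem hj) fun i hi => ⟨hmem hi.1, hi.2⟩
  · intro W hW x y hx
    have := hconst (fun z => if W z then 1 else 0) (fun j hj => ?_) x y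
    · by_contra hy
      simp [hx, hy] at this
    · simp only [D, hW j hj]
      exact CharTwo.add_self_eq_zero _
  · intro u hu0 hul
    have hedge : ∀ j < r, ∀ x y, OnEdge f a j x → OnEdge f a j y → y = x ∨ y = f j x := by
      rintro j hj x y (rfl | rfl) hy
      · exact hy
      · rw [hinv j hj]
        exact hy.symm
    have hmove : ∀ j < r, ∀ x, OnEdge f a j x → f j x ≠ x := by
      rintro j hj x (rfl | rfl)
      · exact hmoved j hj
      · exact (f j).injective.ne (hmoved j hj)
    have hu0' := hmove 0 (by omega) u hu0
    have hul' := hmove (r - 1) (by omega) u hul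
    have hPQ : f 0 u ≠ f (r - 1) u := by
      intro he
      have : s = q ∨ s = f (r - 1) q := by
        rw [← hal]
        rcases hedge 0 (by omega) u s hu0 (by rwa [OnEdge, ha0]) with rfl | rfl
        · exact hul
        · rw [he]
          rcases hul with hul | hul
          · exact Or.inr (by rw [hul])
          · exact Or.inl (by rw [hul, hinv _ (by omega)])
      tauto
    have hR := hcomm 0 (by omega) (r - 1) (by omega) (by omega) u
    have hRu : f 0 (f (r - 1) u) ≠ u := fun he => hPQ (by
      rw [← hinv 0 (by omega) (f (r - 1) u), he])
    have := hfixed 0 (by omega) (f 0 (f (r - 1) u)) ?_ ?_ ?_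
    · rw [hinv 0 (by omega), hR] at this
      exact hu0' ((f (r - 1)).injective this.symm)
    · exact fun hc => (hedge 0 (by omega) u _ hu0 hc).elim hRu fun he => hul' ((f 0).injective he)
    · exact fun hc => (hedge 0 (by omega) u _ hu0 hc).elim hRu fun he => hul' ((f 0).injective he)
    · exact fun hc => (hedge (r - 1) (by omega) u _ hul hc).elim hRu fun he =>
        hu0' ((f (r - 1)).injective (hR ▸ he))

end FrameExists

theorem stmt2 {n : ℕ} (hn : 7 ≤ n) (ρ : Fin (n - 1) → Equiv.Perm (Fin n))
    (hsggi : IsSggi ρ) (hind : IsIndependent ρ) :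
    Subgroup.closure (Set.range ρ) = ⊤ ∧
      ∃ c : Fin n ≃ Fin n, ∀ i : Fin (n - 1),
        ρ i = Equiv.swap (c ⟨(i : ℕ), by have := i.isLt; omega⟩)
                         (c ⟨(i : ℕ) + 1, by have := i.isLt; omega⟩) := by
  obtain ⟨r, rfl⟩ : ∃ r, n = r + 1 := ⟨n - 1, by omega⟩
  obtain ⟨f, hf⟩ : ∃ f : ℕ → Perm (Fin (r + 1)), ∀ i : Fin (r + 1 - 1), f i = ρ i :=
    ⟨fun i => if h : i < r + 1 - 1 then ρ ⟨i, h⟩ else 1, fun i => by simp⟩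
  have hlabel : ∀ i ∈ Finset.range r, ∃ k : Fin (r + 1 - 1), (k : ℕ) = i := fun i hi =>
    ⟨⟨i, by simpa using hi⟩, rfl⟩
  have hsq : ∀ k, ρ k * ρ k = 1 := fun k => by
    rw [← pow_two, ← hsggi.1 k, pow_orderOf_eq_one]
  have hstring : IsString (Finset.range r) f := by
    refine ⟨fun i hi => ?_, fun i hi j hj hij => ?_, fun i hi hmem => ?_⟩
    · obtain ⟨k, rfl⟩ := hlabel i hi
      rw [hf, hsq]
    · obtain ⟨k, rfl⟩ := hlabel i hi
      obtain ⟨l, rfl⟩ := hlabel j hj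
      have hkl := hsggi.2 k l (by rw [lt_abs]; omega)
      rw [hf, hf]
      rw [pow_two, mul_eq_one_iff_eq_inv, mul_inv_rev, inv_eq_of_mul_eq_one_left (hsq k),
        inv_eq_of_mul_eq_one_left (hsq l)] at hkl
      exact hkl
    · obtain ⟨k, rfl⟩ := hlabel i hi
      refine hind k (hf k ▸ Subgroup.closure_mono ?_ hmem)
      rintro _ ⟨j, hj, rfl⟩
      obtain ⟨hjk, hj⟩ := Finset.mem_erase.mp hj
      obtain ⟨l, rfl⟩ := hlabel j hj
      exact ⟨l, fun he => hjk (congrArg Fin.val he), (hf l).symm⟩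
  have hcard : Nat.card (Fin (r + 1)) = r + 1 := Nat.card_fin _
  obtain ⟨a, ha⟩ := hstring.exists_frame (by omega) hcard
  obtain ⟨c, hc⟩ := ha.exists_equiv
  have hswap : ∀ i : Fin (r + 1 - 1), ρ i = Equiv.swap (c ⟨(i : ℕ), by have := i.isLt; omega⟩)
      (c ⟨(i : ℕ) + 1, by have := i.isLt; omega⟩) := fun i =>
    (hf i).symm.trans (hc i i.isLt)
  refine ⟨?_, c, hswap⟩
  have hle : Subgroup.closure (f '' ↑(Finset.range r)) ≤ Subgroup.closure (Set.range ρ) := by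
    refine Subgroup.closure_mono ?_
    rintro _ ⟨j, hj, rfl⟩
    obtain ⟨l, rfl⟩ := hlabel j hj
    exact ⟨l, (hf l).symm⟩
  have : MulAction.IsPretransitive (Subgroup.closure (Set.range ρ)) (Fin (r + 1)) :=
    ⟨fun x y => by
      obtain ⟨w, hw, he⟩ := hstring.exists_mem_closure_apply_eq hcard x y
      exact ⟨⟨w, hle hw⟩, he⟩⟩
  refine closure_of_isSwap_of_isPretransitive ?_
  rintro _ ⟨i, rfl⟩
  exact ⟨_, _, c.injective.ne (by simp), hswap i⟩
end
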